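/- For all real x ≥ exp(2000), |ψ(x) − x| / x ≤ 1.570·10^{−12}. -/

import Mathlib

/-- The Chebyshev function `ψ(x) = ∑_{n ≤ x} Λ(n)`. -/
noncomputable def psi (x : ℝ) : ℝ := ∑ n ∈ Finset.Icc 1 ⌊x⌋₊, ArithmeticFunction.vonMangoldt n

/-!
Let `ψ₁` be the integral of `ψ`. Mellin inversion applied to the partial fraction expansion of
`-ζ'/ζ` over the zeros of `ξ` gives the explicit formula
`ψ₁(x) = x² / 2 + (C - 1) x + D - ∑ x ^ (ω + 1) / (ω (ω + 1))`, the sum being over the zeros `ω`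
of `ζ`, trivial or not. Since `ψ` is monotone, it lies between the difference quotients of `ψ₁`
over `[x - h, x]` and `[x, x + h]`; with `h = 5e-13 * x` these deviate from `x` by `h / 2` plus a
sum over nontrivial zeros `ρ = β + iγ` whose terms are at most `x ^ β` times the smaller of
`1 / |γ|` and `2 (x + h) / (h γ²)`.

That sum is controlled by `x ^ (β - 1) ≤ exp (-2000 (1 - β))` together with two consequences of
positivity. A combination of values of `Re (-ζ'/ζ)` with nonnegative Dirichlet coefficients,
compared through Stechkin's difference of two abscissas with the sum over zeros, forces zeros to
stay away from the line `Re s = 1` and bounds their number near it; and the real part of `ξ'/ξ`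
far to the right bounds the number of zeros up to a given height.
-/

namespace ChebyshevPsi

open Complex Filter Topology MeasureTheory
open scoped ComplexConjugate Nat Real ArithmeticFunction.vonMangoldt

/-! ### Entire functions and their zeros in a disc -/

lemma exists_eq_sub_pow_mul {f : ℂ → ℂ} (hf : Differentiable ℂ f) {a : ℂ}
    (hfin : analyticOrderAt f a ≠ ⊤) :
    ∃ g : ℂ → ℂ, Differentiable ℂ g ∧ g a ≠ 0 ∧
      ∀ z, f z = (z - a) ^ analyticOrderNatAt f a * g z := by
  obtain ⟨g₀, hg₀, hg₀a, hloc⟩ := ((hf.analyticAt a).analyticOrderNatAt_eq_iff hfin).1 rfl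
  set m := analyticOrderNatAt f a
  set g := Function.update (fun z ↦ f z / (z - a) ^ m) a (g₀ a) with hg
  have hpow {z : ℂ} (hz : z ≠ a) : (z - a) ^ m ≠ 0 := pow_ne_zero _ (sub_ne_zero.2 hz)
  have hg_off {z : ℂ} (hz : z ≠ a) : g z = f z / (z - a) ^ m := Function.update_of_ne hz _ _
  have hg_at : g a = g₀ a := Function.update_self _ _ _
  refine ⟨g, fun z ↦ ?_, by rwa [hg_at], fun z ↦ ?_⟩ <;> rcases eq_or_ne z a with rfl | hz
  · have heq : g =ᶠ[𝓝 z] g₀ := by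
      filter_upwards [hloc] with w hw
      rcases eq_or_ne w z with rfl | hwz
      · exact hg_at
      · rw [hg_off hwz, hw, smul_eq_mul, mul_div_cancel_left₀ _ (hpow hwz)]
    exact heq.differentiableAt_iff.2 hg₀.differentiableAt
  · have heq : g =ᶠ[𝓝 z] fun w ↦ f w / (w - a) ^ m := by
      filter_upwards [isOpen_ne.mem_nhds hz] with w hw using hg_off hw
    exact heq.differentiableAt_iff.2 ((hf z).div (by fun_prop) (hpow hz))
  · rw [hg_at]
    exact hloc.self_of_nhds
  · rw [hg_off hz, mul_div_cancel₀ _ (hpow hz)]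

lemma analyticOrderAt_ne_top {f : ℂ → ℂ} (hf : Differentiable ℂ f) (h0 : f 0 ≠ 0) (a : ℂ) :
    analyticOrderAt f a ≠ ⊤ := by
  rw [Ne, AnalyticOnNhd.analyticOrderAt_eq_top_iff_eq_zero a fun z ↦ hf.analyticAt z]
  rintro rfl
  exact h0 rfl

lemma analyticOrderNatAt_mul_of_ne_zero {f g : ℂ → ℂ} {a : ℂ} (hf : AnalyticAt ℂ f a)
    (hg : AnalyticAt ℂ g a) (hfa : f a ≠ 0) :
    analyticOrderNatAt (f * g) a = analyticOrderNatAt g a := by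
  rw [analyticOrderNatAt, analyticOrderAt_mul hf hg, hf.analyticOrderAt_eq_zero.2 hfa, zero_add,
    analyticOrderNatAt]

lemma one_sub_div_ne_zero {a z : ℂ} (ha : a ≠ 0) (hza : z ≠ a) : 1 - z / a ≠ 0 := by
  rw [sub_ne_zero, Ne, eq_comm, div_eq_one_iff_eq ha]
  exact hza

lemma exists_eq_prod_one_sub_div_pow_mul {f : ℂ → ℂ} (hf : Differentiable ℂ f) (h0 : f 0 ≠ 0)
    (S : Finset ℂ) (hS : ∀ a ∈ S, a ≠ 0) :
    ∃ g : ℂ → ℂ, Differentiable ℂ g ∧ (∀ a ∈ S, g a ≠ 0) ∧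
      ∀ z, f z = (∏ a ∈ S, (1 - z / a) ^ analyticOrderNatAt f a) * g z := by
  classical
  induction S using Finset.induction_on with
  | empty => exact ⟨f, hf, by simp, by simp⟩
  | insert b S hb ih =>
    obtain ⟨hb0, hS0⟩ := Finset.forall_mem_insert .. |>.1 hS
    obtain ⟨g, hg, hgS, hfg⟩ := ih hS0
    have hg0 : g 0 ≠ 0 := right_ne_zero_of_mul (hfg 0 ▸ h0)
    obtain ⟨g₁, hg₁, hg₁b, hgg₁⟩ := exists_eq_sub_pow_mul hg (analyticOrderAt_ne_top hg hg0 b)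
    set P : ℂ → ℂ := fun z ↦ ∏ a ∈ S, (1 - z / a) ^ analyticOrderNatAt f a
    have hPd : Differentiable ℂ P := by fun_prop
    have hPb : P b ≠ 0 := Finset.prod_ne_zero_iff.2 fun a ha ↦
      pow_ne_zero _ (one_sub_div_ne_zero (hS0 a ha) (by rintro rfl; exact hb ha))
    have hord : analyticOrderNatAt f b = analyticOrderNatAt g b := by
      rw [show f = P * g from funext hfg,
        analyticOrderNatAt_mul_of_ne_zero (hPd.analyticAt b) (hg.analyticAt b) hPb]
    refine ⟨fun z ↦ (-b) ^ analyticOrderNatAt f b * g₁ z, by fun_prop, ?_, fun z ↦ ?_⟩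
    · refine Finset.forall_mem_insert .. |>.2
        ⟨mul_ne_zero (pow_ne_zero _ (neg_ne_zero.2 hb0)) hg₁b, fun a ha ↦
          mul_ne_zero (pow_ne_zero _ (neg_ne_zero.2 hb0)) ?_⟩
      exact right_ne_zero_of_mul (hgg₁ a ▸ hgS a ha)
    · have hlin : z - b = (1 - z / b) * -b := by field_simp; ring
      rw [Finset.prod_insert hb, hfg z, hgg₁ z, ← hord, hlin, mul_pow]
      ring

lemma finite_setOf_eq_zero_norm_le {f : ℂ → ℂ} (hf : Differentiable ℂ f) (h0 : f 0 ≠ 0)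
    (R : ℝ) : {a : ℂ | f a = 0 ∧ ‖a‖ ≤ R}.Finite := by
  by_contra hinf
  obtain ⟨x, -, hx⟩ := Set.Infinite.exists_accPt_of_subset_isCompact
    (s := {a : ℂ | f a = 0 ∧ ‖a‖ ≤ R}) (K := Metric.closedBall 0 R) hinf
    (isCompact_closedBall 0 R) (fun a ha ↦ by simpa using ha.2)
  have hfreq : ∃ᶠ z in 𝓝[≠] x, f z = 0 :=
    (accPt_iff_frequently_nhdsNE.1 hx).mono fun z hz ↦ hz.1
  exact h0 (AnalyticOnNhd.eqOn_zero_of_preconnected_of_frequently_eq_zero (U := Set.univ)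
    (fun z _ ↦ hf.analyticAt z) isPreconnected_univ (Set.mem_univ x) hfreq (Set.mem_univ 0))

/-! ### Local partial fractions of a logarithmic derivative -/

lemma exists_eq_mul_exp_of_ne_zero_on_ball {g : ℂ → ℂ} {R : ℝ} (hR : 0 < R)
    (hg : DifferentiableOn ℂ g (Metric.ball 0 R)) (hne : ∀ w ∈ Metric.ball (0 : ℂ) R, g w ≠ 0) :
    ∃ H : ℂ → ℂ, H 0 = 0 ∧ ∀ w ∈ Metric.ball (0 : ℂ) R,
      HasDerivAt H (logDeriv g w) w ∧ g w = g 0 * exp (H w) := by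
  have hlog : DifferentiableOn ℂ (logDeriv g) (Metric.ball 0 R) :=
    (hg.deriv Metric.isOpen_ball).div hg hne
  obtain ⟨H, hH0, hH⟩ := (DifferentiableOn.isExactOn_ball hlog).with_val_at 0 0
  refine ⟨H, hH0, fun w hw ↦ ⟨hH w hw, ?_⟩⟩
  have hderiv : ∀ v ∈ Metric.ball (0 : ℂ) R, HasDerivAt (fun v ↦ g v * exp (-H v)) 0 v := by
    intro v hv
    have hgv := (hg.differentiableAt (Metric.isOpen_ball.mem_nhds hv)).hasDerivAt
    refine (hgv.mul (hH v hv).neg.cexp).congr_deriv ?_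
    have hgv0 := hne v hv
    rw [logDeriv_apply]
    field_simp
    ring
  have hconst := (convex_ball (0 : ℂ) R).is_const_of_fderivWithin_eq_zero (𝕜 := ℂ)
    (fun v hv ↦ (hderiv v hv).differentiableAt.differentiableWithinAt)
    (fun v hv ↦ by
      rw [fderivWithin_of_isOpen Metric.isOpen_ball hv]
      ext
      simp [(hderiv v hv).deriv]) hw (Metric.mem_ball_self hR)
  simp only [hH0, neg_zero, exp_zero, mul_one] at hconst
  rw [← hconst, mul_assoc, ← exp_add, neg_add_cancel, exp_zero, mul_one]

lemma norm_deriv_le_of_re_le {H : ℂ → ℂ} {R M : ℝ} (hR : 0 < R) (hM : 0 < M)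
    (hH : DifferentiableOn ℂ H (Metric.ball 0 R)) (hH0 : H 0 = 0)
    (hre : Set.MapsTo H (Metric.ball 0 R) {z | z.re ≤ M}) {w : ℂ} (hw : ‖w‖ < R / 4) :
    ‖deriv H w‖ ≤ 8 * M / R := by
  have hnear {v : ℂ} (hv : ‖v - w‖ ≤ R / 4) : ‖v‖ ≤ R / 2 := by
    linarith [norm_le_norm_add_norm_sub' v w]
  have hHle {v : ℂ} (hv : ‖v‖ ≤ R / 2) : ‖H v‖ ≤ 2 * M := by
    refine (borelCaratheodory_zero hM hH hre hR (mem_ball_zero_iff.2 (by linarith)) hH0).trans ?_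
    rw [div_le_iff₀ (by linarith)]
    nlinarith
  have hdiff : DiffContOnCl ℂ H (Metric.ball w (R / 4)) := by
    refine (hH.mono fun v hv ↦ ?_).diffContOnCl
    rw [closure_ball _ (by positivity), mem_closedBall_iff_norm] at hv
    rw [mem_ball_zero_iff]
    linarith [hnear hv]
  calc ‖deriv H w‖ ≤ 2 * M / (R / 4) :=
        norm_deriv_le_of_forall_mem_sphere_norm_le (by positivity) hdiff fun v hv ↦
          hHle (hnear (mem_sphere_iff_norm.1 hv).le)
    _ = 8 * M / R := by field_simp; norm_num

lemma norm_logDeriv_sub_le {g : ℂ → ℂ} {R M : ℝ} (hR : 0 < R) (hM : 0 < M)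
    (hg : DifferentiableOn ℂ g (Metric.ball 0 R)) (hne : ∀ w ∈ Metric.ball (0 : ℂ) R, g w ≠ 0)
    (hle : ∀ w ∈ Metric.ball (0 : ℂ) R, ‖g w‖ ≤ ‖g 0‖ * Real.exp M) {z : ℂ} (hz : ‖z‖ < R / 4) :
    ‖logDeriv g z - logDeriv g 0‖ ≤ 64 * M / R ^ 2 * ‖z‖ := by
  obtain ⟨H, hH0, hH⟩ := exists_eq_mul_exp_of_ne_zero_on_ball hR hg hne
  have hHd : DifferentiableOn ℂ H (Metric.ball 0 R) :=
    fun w hw ↦ (hH w hw).1.differentiableAt.differentiableWithinAt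
  have hre : Set.MapsTo H (Metric.ball 0 R) {z | z.re ≤ M} := by
    intro w hw
    have hg0 : 0 < ‖g 0‖ := norm_pos_iff.2 (hne 0 (Metric.mem_ball_self hR))
    have hw' := hle w hw
    rw [(hH w hw).2, norm_mul, norm_exp, mul_le_mul_iff_right₀ hg0, Real.exp_le_exp] at hw'
    exact hw'
  have hlog {w : ℂ} (hw : ‖w‖ < R / 4) : ‖logDeriv g w‖ ≤ 8 * M / R := by
    rw [← (hH w (mem_ball_zero_iff.2 (by linarith))).1.deriv]
    exact norm_deriv_le_of_re_le hR hM hHd hH0 hre hw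
  have hlogd : DifferentiableOn ℂ (logDeriv g) (Metric.ball 0 (R / 4)) :=
    ((hg.deriv Metric.isOpen_ball).div hg hne).mono (Metric.ball_subset_ball (by linarith))
  have hmaps : Set.MapsTo (logDeriv g) (Metric.ball 0 (R / 4))
      (Metric.closedBall (logDeriv g 0) (16 * M / R)) := by
    intro w hw
    rw [mem_closedBall_iff_norm]
    have h0 : ‖logDeriv g 0‖ ≤ 8 * M / R := hlog (by simpa using hR)
    calc _ ≤ ‖logDeriv g w‖ + ‖logDeriv g 0‖ := norm_sub_le _ _
      _ ≤ 8 * M / R + 8 * M / R := add_le_add (hlog (mem_ball_zero_iff.1 hw)) h0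
      _ = 16 * M / R := by ring
  have hschwarz := dist_le_div_mul_dist_of_mapsTo_ball hlogd hmaps (mem_ball_zero_iff.2 hz)
  rw [dist_zero_right, dist_eq_norm] at hschwarz
  refine hschwarz.trans_eq ?_
  field_simp
  ring

lemma logDeriv_prod_one_sub_div_pow {S : Finset ℂ} (m : ℂ → ℕ) {w : ℂ} (hS : ∀ a ∈ S, a ≠ 0)
    (hw : w ∉ S) :
    logDeriv (fun z ↦ ∏ a ∈ S, (1 - z / a) ^ m a) w = ∑ a ∈ S, (m a : ℂ) * (1 / (w - a)) := by
  have hwa {a : ℂ} (ha : a ∈ S) : w ≠ a := by rintro rfl; exact hw ha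
  have hne {a : ℂ} (ha : a ∈ S) : 1 - w / a ≠ 0 := one_sub_div_ne_zero (hS a ha) (hwa ha)
  rw [logDeriv_prod (f := fun a z ↦ (1 - z / a) ^ m a)
    (fun a ha ↦ pow_ne_zero _ (hne ha)) (fun a _ ↦ by fun_prop)]
  refine Finset.sum_congr rfl fun a ha ↦ ?_
  have ha0 := hS a ha
  have hderiv : HasDerivAt (fun z : ℂ ↦ 1 - z / a) (-(1 / a)) w := by
    simpa using ((hasDerivAt_id w).div_const a).const_sub 1
  have hsub : 1 - w / a = -((w - a) / a) := by field_simp; ring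
  have hwa0 : w - a ≠ 0 := sub_ne_zero.2 (hwa ha)
  rw [logDeriv_fun_pow (by fun_prop), logDeriv_apply, hderiv.deriv, hsub]
  field_simp

lemma norm_le_of_eq_prod_one_sub_div_pow_mul {f g : ℂ → ℂ} {R B : ℝ} {S : Finset ℂ} {m : ℂ → ℕ}
    (hR : 0 < R) (hg : Differentiable ℂ g) (hS : ∀ a ∈ S, a ≠ 0 ∧ ‖a‖ ≤ R)
    (hfg : ∀ z, f z = (∏ a ∈ S, (1 - z / a) ^ m a) * g z)
    (hf : ∀ z : ℂ, ‖z‖ = 2 * R → ‖f z‖ ≤ B) {w : ℂ} (hw : ‖w‖ ≤ 2 * R) : ‖g w‖ ≤ B := by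
  refine norm_le_of_forall_mem_frontier_norm_le Metric.isBounded_ball
    (hg.diffContOnCl (s := Metric.ball 0 (2 * R))) (fun v hv ↦ ?_)
    (by rwa [closure_ball _ (by positivity), mem_closedBall_zero_iff])
  rw [frontier_ball _ (by positivity), mem_sphere_zero_iff_norm] at hv
  have hprod : 1 ≤ ‖∏ a ∈ S, (1 - v / a) ^ m a‖ := by
    rw [norm_prod]
    refine Finset.one_le_prod fun a ha ↦ ?_
    rw [norm_pow]
    refine one_le_pow₀ ?_
    have hratio : 2 ≤ ‖v / a‖ := by
      rw [norm_div, le_div_iff₀ (norm_pos_iff.2 (hS a ha).1), hv]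
      linarith [(hS a ha).2]
    have htri := norm_sub_norm_le (v / a) 1
    rw [norm_one, norm_sub_rev] at htri
    linarith
  calc ‖g v‖ ≤ ‖∏ a ∈ S, (1 - v / a) ^ m a‖ * ‖g v‖ := le_mul_of_one_le_left (norm_nonneg _) hprod
    _ = ‖f v‖ := by rw [hfg v, norm_mul]
    _ ≤ B := hf v hv

lemma logDeriv_eq_sum_add_logDeriv {f g : ℂ → ℂ} (hg : Differentiable ℂ g) {S : Finset ℂ}
    {m : ℂ → ℕ} (hS : ∀ a ∈ S, a ≠ 0) (hfg : ∀ z, f z = (∏ a ∈ S, (1 - z / a) ^ m a) * g z)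
    {w : ℂ} (hwS : w ∉ S) (hw : f w ≠ 0) :
    logDeriv f w = ∑ a ∈ S, (m a : ℂ) * (1 / (w - a)) + logDeriv g w := by
  have hfw := hfg w ▸ hw
  rw [← logDeriv_prod_one_sub_div_pow m hS hwS, funext hfg]
  exact logDeriv_mul w (left_ne_zero_of_mul hfw) (right_ne_zero_of_mul hfw) (by fun_prop) (hg w)

lemma norm_logDeriv_sub_sum_le {f : ℂ → ℂ} (hf : Differentiable ℂ f) (h0 : f 0 ≠ 0) {R B : ℝ}
    (hR : 0 < R) (hB : ∀ z : ℂ, ‖z‖ = 2 * R → ‖f z‖ ≤ Real.exp B) (S : Finset ℂ)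
    (hS : ∀ a, a ∈ S ↔ f a = 0 ∧ ‖a‖ ≤ R) {z : ℂ} (hz : ‖z‖ < R / 4) (hfz : f z ≠ 0) :
    ‖logDeriv f z - logDeriv f 0 -
      ∑ a ∈ S, (analyticOrderNatAt f a : ℂ) * (1 / (z - a) + 1 / a)‖ ≤
      64 * (|B| + |Real.log ‖f 0‖| + 1) / R ^ 2 * ‖z‖ := by
  have hS0 : ∀ a ∈ S, a ≠ 0 := by
    rintro a ha rfl
    exact h0 ((hS 0).1 ha).1
  obtain ⟨g, hg, hgS, hfg⟩ := exists_eq_prod_one_sub_div_pow_mul hf h0 S hS0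
  have hg0 : g 0 = f 0 := by simp [hfg 0]
  have hgne : ∀ w ∈ Metric.ball (0 : ℂ) R, g w ≠ 0 := by
    intro w hw hgw
    have hfw : f w = 0 := by rw [hfg, hgw, mul_zero]
    exact hgS w ((hS w).2 ⟨hfw, (mem_ball_zero_iff.1 hw).le⟩) hgw
  have hgle : ∀ w ∈ Metric.ball (0 : ℂ) R,
      ‖g w‖ ≤ ‖g 0‖ * Real.exp (|B| + |Real.log ‖f 0‖| + 1) := by
    intro w hw
    have hw2 : ‖w‖ ≤ 2 * R := by linarith [mem_ball_zero_iff.1 hw]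
    refine (norm_le_of_eq_prod_one_sub_div_pow_mul hR hg
      (fun a ha ↦ ⟨hS0 a ha, ((hS a).1 ha).2⟩) hfg hB hw2).trans ?_
    rw [hg0]
    nth_rw 1 [← Real.exp_log (norm_pos_iff.2 h0)]
    rw [← Real.exp_add, Real.exp_le_exp]
    linarith [le_abs_self B, neg_abs_le (Real.log ‖f 0‖)]
  have hsum : ∑ a ∈ S, (analyticOrderNatAt f a : ℂ) * (1 / (z - a) + 1 / a) =
      ∑ a ∈ S, (analyticOrderNatAt f a : ℂ) * (1 / (z - a)) -
        ∑ a ∈ S, (analyticOrderNatAt f a : ℂ) * (1 / (0 - a)) := by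
    rw [← Finset.sum_sub_distrib]
    refine Finset.sum_congr rfl fun a _ ↦ ?_
    rw [zero_sub, one_div_neg_eq_neg_one_div]
    ring
  have hlog {w : ℂ} (hw : f w ≠ 0) := logDeriv_eq_sum_add_logDeriv hg hS0 hfg
    (fun hwS ↦ hw ((hS w).1 hwS).1) hw
  rw [hlog hfz, hlog h0, hsum, add_sub_add_comm, add_sub_cancel_left]
  exact norm_logDeriv_sub_le hR (by positivity) hg.differentiableOn hgne hgle hz

/-! ### The entire function `ξ` -/

/-- The entire function `ξ(s) = s (s - 1) π^{-s/2} Γ(s/2) ζ(s)`, twice Riemann's `ξ`. It is written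
with the entire part `Λ₀` of the completed zeta function, so that no value is junk. Its zeros are
the nontrivial zeros of `ζ`. -/
noncomputable def xi (s : ℂ) : ℂ := s * (s - 1) * completedRiemannZeta₀ s + 1

lemma differentiable_xi : Differentiable ℂ xi := by
  have := differentiable_completedZeta₀
  unfold xi
  fun_prop

lemma xi_zero : xi 0 = 1 := by simp [xi]

lemma xi_zero_ne_zero : xi 0 ≠ 0 := xi_zero ▸ one_ne_zero

lemma xi_one : xi 1 = 1 := by simp [xi]

lemma xi_one_sub (s : ℂ) : xi (1 - s) = xi s := by
  simp only [xi, completedRiemannZeta₀_one_sub]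
  ring

lemma xi_eq_mul_completedRiemannZeta {s : ℂ} (h0 : s ≠ 0) (h1 : s ≠ 1) :
    xi s = s * (s - 1) * completedRiemannZeta s := by
  have h1' : 1 - s ≠ 0 := sub_ne_zero.2 h1.symm
  rw [xi, completedRiemannZeta_eq]
  field_simp
  ring

lemma xi_eq_mul_riemannZeta {s : ℂ} (hs : 1 < s.re) :
    xi s = s * (s - 1) * ((π : ℂ) ^ (-s / 2) * Gamma (s / 2)) * riemannZeta s := by
  have h0 : s ≠ 0 := by rintro rfl; norm_num at hs
  have h1 : s ≠ 1 := by rintro rfl; norm_num at hs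
  rw [xi_eq_mul_completedRiemannZeta h0 h1, completedZeta_eq_tsum_of_one_lt_re hs,
    zeta_eq_tsum_one_div_nat_cpow hs]
  ring

lemma xi_ne_zero_of_one_le_re {s : ℂ} (hs : 1 ≤ s.re) : xi s ≠ 0 := by
  rcases eq_or_ne s 1 with rfl | h1
  · rw [xi_one]
    exact one_ne_zero
  have h0 : s ≠ 0 := by rintro rfl; norm_num at hs
  have hzeta := riemannZeta_ne_zero_of_one_le_re hs
  rw [riemannZeta_def_of_ne_zero h0] at hzeta
  rw [xi_eq_mul_completedRiemannZeta h0 h1]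
  exact mul_ne_zero (mul_ne_zero h0 (sub_ne_zero.2 h1)) (div_ne_zero_iff.1 hzeta).1

lemma re_mem_Ioo_of_xi_eq_zero {s : ℂ} (hs : xi s = 0) : 0 < s.re ∧ s.re < 1 := by
  refine ⟨?_, ?_⟩ <;> by_contra! h
  · exact xi_ne_zero_of_one_le_re (s := 1 - s) (by simpa using h) (by rw [xi_one_sub, hs])
  · exact xi_ne_zero_of_one_le_re h hs

lemma xi_conj_of_one_lt_re {s : ℂ} (hs : 1 < s.re) : xi (conj s) = conj (xi s) := by
  have hGamma : Gamma (conj s / 2) = conj (Gamma (s / 2)) := by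
    rw [← Gamma_conj, map_div₀, map_ofNat]
  have hpi : (π : ℂ) ^ (-conj s / 2) = conj ((π : ℂ) ^ (-s / 2)) := by
    have hcpow := cpow_conj (π : ℂ) (-s / 2)
      (by rw [arg_ofReal_of_nonneg Real.pi_pos.le]; exact Real.pi_pos.ne)
    rw [conj_ofReal] at hcpow
    rw [← hcpow, map_div₀, map_neg, map_ofNat]
  rw [xi_eq_mul_riemannZeta (by simpa using hs), xi_eq_mul_riemannZeta hs, riemannZeta_conj,
    hGamma, hpi]
  simp

lemma xi_conj (s : ℂ) : xi (conj s) = conj (xi s) := by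
  have hdiff : Differentiable ℂ fun z ↦ conj (xi (conj z)) := fun z ↦
    differentiableAt_conj_conj_iff.mpr (differentiable_xi _)
  have hnhds : {z : ℂ | 1 < z.re} ∈ 𝓝 (2 : ℂ) :=
    (isOpen_lt continuous_const continuous_re).mem_nhds (by simp)
  have heq : Set.EqOn (fun z ↦ conj (xi (conj z))) xi Set.univ :=
    AnalyticOnNhd.eqOn_of_preconnected_of_eventuallyEq (z₀ := 2)
      (fun z _ ↦ hdiff.analyticAt z) (fun z _ ↦ differentiable_xi.analyticAt z)
      isPreconnected_univ trivial <| eventuallyEq_of_mem hnhds fun z hz ↦ by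
        simp only [xi_conj_of_one_lt_re hz, conj_conj]
  simpa using congrArg (starRingEnd ℂ) (heq (Set.mem_univ s))

/-! ### Growth of `ξ` -/

lemma exists_norm_completedRiemannZeta₀_le (α β : ℝ) :
    ∃ K : ℝ, 0 ≤ K ∧ ∀ s : ℂ, α ≤ s.re → s.re ≤ β → ‖completedRiemannZeta₀ s‖ ≤ K := by
  let P := HurwitzZeta.hurwitzEvenFEPair 0
  have hconv (s : ℂ) : MellinConvergent P.f_modif s :=
    (P.isStrongFEPair_toStrongFEPair.hasMellin s).1
  have hint (σ : ℝ) : IntegrableOn (fun t : ℝ ↦ t ^ (σ - 1) * ‖P.f_modif t‖) (Set.Ioi 0) := by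
    refine (hconv σ).norm.congr ?_
    filter_upwards [ae_restrict_mem measurableSet_Ioi] with t ht
    rw [norm_smul, norm_cpow_eq_rpow_re_of_pos ht]
    simp
  set K := ∫ t in Set.Ioi (0 : ℝ),
    (t ^ (α / 2 - 1) * ‖P.f_modif t‖ + t ^ (β / 2 - 1) * ‖P.f_modif t‖)
  have hK0 : 0 ≤ K := setIntegral_nonneg measurableSet_Ioi fun t ht ↦ by
    have : (0 : ℝ) < t := ht
    positivity
  refine ⟨K, hK0, fun s hα hβ ↦ ?_⟩
  have hmellin : ‖mellin P.f_modif (s / 2)‖ ≤ K := by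
    refine norm_integral_le_of_norm_le ((hint (α / 2)).add (hint (β / 2))) ?_
    filter_upwards [ae_restrict_mem measurableSet_Ioi] with t ht
    have ht0 : (0 : ℝ) < t := ht
    have hre : (s / 2 - 1).re = s.re / 2 - 1 := by simp
    rw [norm_smul, norm_cpow_eq_rpow_re_of_pos ht, hre, ← add_mul]
    gcongr
    rcases le_total t 1 with h | h
    · exact (Real.rpow_le_rpow_of_exponent_ge ht0 h (by linarith)).trans
        (le_add_of_nonneg_right (by positivity))
    · exact (Real.rpow_le_rpow_of_exponent_le h (by linarith)).trans
        (le_add_of_nonneg_left (by positivity))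
  have hΛ : completedRiemannZeta₀ s = mellin P.f_modif (s / 2) / 2 := rfl
  rw [hΛ, norm_div, norm_ofNat]
  linarith

lemma norm_Gamma_le_Gamma_re {s : ℂ} (hs : 0 < s.re) : ‖Gamma s‖ ≤ Real.Gamma s.re := by
  rw [Gamma_eq_integral hs, Real.Gamma_eq_integral hs, GammaIntegral]
  refine norm_integral_le_of_norm_le (Real.GammaIntegral_convergent hs) ?_
  filter_upwards [ae_restrict_mem measurableSet_Ioi] with t ht
  rw [norm_mul, norm_cpow_eq_rpow_re_of_pos ht, norm_real, Real.norm_of_nonneg (Real.exp_nonneg _)]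
  simp

lemma norm_riemannZeta_le_tsum {σ : ℝ} (hσ : 1 < σ) {s : ℂ} (hs : σ ≤ s.re) :
    ‖riemannZeta s‖ ≤ ∑' n : ℕ, 1 / (n : ℝ) ^ σ := by
  rw [zeta_eq_tsum_one_div_nat_cpow (by linarith)]
  refine tsum_of_norm_bounded (Real.summable_one_div_nat_rpow.2 hσ).hasSum fun n ↦ ?_
  rcases Nat.eq_zero_or_pos n with rfl | hn
  · have hs0 : s ≠ 0 := by rintro rfl; norm_num at hs; linarith
    simp [zero_cpow hs0, Real.zero_rpow (by linarith : σ ≠ 0)]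
  · have hn1 : (1 : ℝ) ≤ n := by exact_mod_cast hn
    rw [norm_div, norm_one, norm_natCast_cpow_of_pos hn]
    exact one_div_le_one_div_of_le (by positivity) (Real.rpow_le_rpow_of_exponent_le hn1 hs)

lemma sq_le_exp_two_mul {r : ℝ} (hr : 0 ≤ r) : r ^ 2 ≤ Real.exp (2 * r) :=
  calc r ^ 2 ≤ Real.exp r ^ 2 := by gcongr; linarith [Real.add_one_le_exp r]
    _ = Real.exp (2 * r) := by rw [← Real.exp_nat_mul]; norm_num

lemma log_le_two_mul_sqrt {r : ℝ} (hr : 0 < r) : Real.log r ≤ 2 * √r := by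
  have hhalf : Real.log √r = Real.log r / 2 := Real.log_sqrt hr.le
  linarith [Real.log_le_sub_one_of_pos (Real.sqrt_pos.2 hr)]

lemma Gamma_le_exp_mul_sqrt {x r : ℝ} (hx : 2 ≤ x) (hxr : x + 1 ≤ r) :
    Real.Gamma x ≤ Real.exp (2 * (r * √r)) := by
  set n := ⌈x⌉₊
  have hxn : x ≤ n := Nat.le_ceil _
  have hnr : (n : ℝ) ≤ r := (Nat.ceil_lt_add_one (by linarith)).le.trans hxr
  have hr0 : 0 < r := by linarith
  have hlog : 0 ≤ Real.log r := Real.log_nonneg (by linarith)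
  calc Real.Gamma x ≤ Real.Gamma (n + 1) :=
        Real.Gamma_strictMonoOn_Ici.monotoneOn hx (Set.mem_Ici.2 (by linarith)) (by linarith)
    _ = n ! := Real.Gamma_nat_eq_factorial n
    _ ≤ (n : ℝ) ^ n := by exact_mod_cast Nat.factorial_le_pow n
    _ ≤ r ^ n := by gcongr
    _ = Real.exp (n * Real.log r) := by rw [Real.exp_nat_mul, Real.exp_log (by linarith)]
    _ ≤ Real.exp (2 * (r * √r)) := Real.exp_le_exp.2 <|
        calc n * Real.log r ≤ r * (2 * √r) := by
              gcongr
              exact log_le_two_mul_sqrt hr0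
          _ = 2 * (r * √r) := by ring

lemma norm_mul_sub_one_le (s : ℂ) : ‖s * (s - 1)‖ ≤ (1 + ‖s‖) ^ 2 := by
  have hsub : ‖s - 1‖ ≤ 1 + ‖s‖ := by
    simpa [add_comm] using norm_sub_le s 1
  rw [norm_mul, sq]
  gcongr
  linarith

lemma one_add_norm_le_mul_sqrt (s : ℂ) : 1 + ‖s‖ ≤ (1 + ‖s‖) * √(1 + ‖s‖) := by
  have h1 : 1 ≤ 1 + ‖s‖ := by linarith [norm_nonneg s]
  exact le_mul_of_one_le_right (by linarith) (Real.one_le_sqrt.2 h1)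

lemma norm_xi_le_of_norm_completedRiemannZeta₀_le {s : ℂ} {K : ℝ} (hK : 0 ≤ K)
    (hs : ‖completedRiemannZeta₀ s‖ ≤ K) :
    ‖xi s‖ ≤ Real.exp ((K + 2) * ((1 + ‖s‖) * √(1 + ‖s‖))) := by
  have hr := one_add_norm_le_mul_sqrt s
  have hr1 : 1 ≤ 1 + ‖s‖ := by linarith [norm_nonneg s]
  calc ‖xi s‖ ≤ ‖s * (s - 1) * completedRiemannZeta₀ s‖ + ‖(1 : ℂ)‖ := norm_add_le _ _
    _ ≤ (1 + ‖s‖) ^ 2 * K + 1 := by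
        rw [norm_mul, norm_one]
        gcongr
        exact norm_mul_sub_one_le s
    _ ≤ (1 + ‖s‖) ^ 2 * (K + 1) := by nlinarith
    _ ≤ Real.exp (2 * (1 + ‖s‖)) * Real.exp K := by
        gcongr
        · exact sq_le_exp_two_mul (by linarith)
        · exact Real.add_one_le_exp K
    _ = Real.exp (2 * (1 + ‖s‖) + K) := (Real.exp_add _ _).symm
    _ ≤ _ := Real.exp_le_exp.2 (by nlinarith)

lemma norm_xi_le_of_four_le_re {s : ℂ} (hs : 4 ≤ s.re) :
    ‖xi s‖ ≤ Real.exp ((∑' n : ℕ, 1 / (n : ℝ) ^ (2 : ℝ) + 4) * ((1 + ‖s‖) * √(1 + ‖s‖))) := by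
  set Z := ∑' n : ℕ, 1 / (n : ℝ) ^ (2 : ℝ)
  set r := 1 + ‖s‖
  have hZ : 0 ≤ Z := tsum_nonneg fun n ↦ by positivity
  have hr1 : 1 ≤ r := by linarith [norm_nonneg s]
  have hrr : r ≤ r * √r := one_add_norm_le_mul_sqrt s
  have hzeta : ‖riemannZeta s‖ ≤ Z := norm_riemannZeta_le_tsum one_lt_two (by linarith)
  have hpi : ‖(π : ℂ) ^ (-s / 2)‖ ≤ 1 := by
    rw [norm_cpow_eq_rpow_re_of_pos Real.pi_pos]
    refine Real.rpow_le_one_of_one_le_of_nonpos (by linarith [Real.pi_gt_three]) ?_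
    rw [div_ofNat_re, neg_re]
    linarith
  have hGamma : ‖Gamma (s / 2)‖ ≤ Real.exp (2 * (r * √r)) := by
    have hre : (s / 2).re = s.re / 2 := by simp
    refine (norm_Gamma_le_Gamma_re (by rw [hre]; linarith)).trans ?_
    rw [hre]
    exact Gamma_le_exp_mul_sqrt (by linarith) (by linarith [re_le_norm s])
  rw [xi_eq_mul_riemannZeta (by linarith), norm_mul, norm_mul, norm_mul (_ ^ _)]
  calc ‖s * (s - 1)‖ * (‖(π : ℂ) ^ (-s / 2)‖ * ‖Gamma (s / 2)‖) * ‖riemannZeta s‖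
      ≤ r ^ 2 * (1 * Real.exp (2 * (r * √r))) * Z := by
        gcongr
        exact norm_mul_sub_one_le s
    _ ≤ Real.exp (2 * r) * (1 * Real.exp (2 * (r * √r))) * Real.exp Z := by
        gcongr
        · exact sq_le_exp_two_mul (by linarith)
        · linarith [Real.add_one_le_exp Z]
    _ = Real.exp (2 * r + 2 * (r * √r) + Z) := by rw [Real.exp_add, Real.exp_add, one_mul]
    _ ≤ _ := Real.exp_le_exp.2 (by nlinarith)

lemma exists_norm_xi_le : ∃ C : ℝ, 0 ≤ C ∧ ∀ s : ℂ,
    ‖xi s‖ ≤ Real.exp (C * ((1 + ‖s‖) * √(1 + ‖s‖))) := by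
  obtain ⟨K, hK, hKle⟩ := exists_norm_completedRiemannZeta₀_le (-3) 4
  set Z := ∑' n : ℕ, 1 / (n : ℝ) ^ (2 : ℝ)
  have hZ : 0 ≤ Z := tsum_nonneg fun n ↦ by positivity
  have hright {s : ℂ} (hs : -3 ≤ s.re) :
      ‖xi s‖ ≤ Real.exp ((K + Z + 4) * ((1 + ‖s‖) * √(1 + ‖s‖))) := by
    rcases le_total s.re 4 with h4 | h4
    · refine (norm_xi_le_of_norm_completedRiemannZeta₀_le hK (hKle s hs h4)).trans ?_
      refine Real.exp_le_exp.2 ?_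
      gcongr ?_ * _
      linarith
    · refine (norm_xi_le_of_four_le_re h4).trans ?_
      refine Real.exp_le_exp.2 ?_
      gcongr ?_ * _
      linarith
  refine ⟨4 * (K + Z + 4), by positivity, fun s ↦ ?_⟩
  have hpos : 0 ≤ (1 + ‖s‖) * √(1 + ‖s‖) := by positivity
  rcases le_total (-3) s.re with h | h
  · exact (hright h).trans (Real.exp_le_exp.2 (by nlinarith))
  · rw [← xi_one_sub]
    refine (hright (s := 1 - s) (by rw [sub_re, one_re]; linarith)).trans (Real.exp_le_exp.2 ?_)
    have hnorm : 1 + ‖1 - s‖ ≤ 2 * (1 + ‖s‖) := by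
      have := norm_sub_le 1 s
      rw [norm_one] at this
      linarith [norm_nonneg s]
    have hsqrt : √(1 + ‖1 - s‖) ≤ 2 * √(1 + ‖s‖) :=
      calc √(1 + ‖1 - s‖) ≤ √(2 ^ 2 * (1 + ‖s‖)) :=
            Real.sqrt_le_sqrt (by linarith [norm_nonneg s])
        _ = 2 * √(1 + ‖s‖) := by rw [Real.sqrt_mul (by norm_num), Real.sqrt_sq (by norm_num)]
    calc (K + Z + 4) * ((1 + ‖1 - s‖) * √(1 + ‖1 - s‖))
        ≤ (K + Z + 4) * ((2 * (1 + ‖s‖)) * (2 * √(1 + ‖s‖))) := by gcongr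
      _ = 4 * (K + Z + 4) * ((1 + ‖s‖) * √(1 + ‖s‖)) := by ring

/-! ### Multiplicities of the zeros of `ξ` -/

/-- The multiplicity of `a` as a zero of `ξ`; it is `0` when `ξ(a) ≠ 0`, so that sums over zeros
with multiplicity can be written as sums over all of `ℂ`. -/
noncomputable def xiOrder (a : ℂ) : ℕ := analyticOrderNatAt xi a

lemma xiOrder_eq_zero {a : ℂ} (ha : xi a ≠ 0) : xiOrder a = 0 := by
  rw [xiOrder, analyticOrderNatAt, (differentiable_xi.analyticAt a).analyticOrderAt_eq_zero.2 ha]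
  rfl

lemma one_le_xiOrder {a : ℂ} (ha : xi a = 0) : 1 ≤ xiOrder a := by
  have hfin := analyticOrderAt_ne_top differentiable_xi xi_zero_ne_zero a
  have hne : analyticOrderAt xi a ≠ 0 :=
    analyticOrderAt_ne_zero.2 ⟨differentiable_xi.analyticAt a, ha⟩
  rw [← Nat.cast_analyticOrderNatAt hfin] at hne
  exact Nat.one_le_iff_ne_zero.2 (by exact_mod_cast hne)

lemma xiOrder_eq_of_eq_sub_pow_mul {g : ℂ → ℂ} (hg : Differentiable ℂ g) {a : ℂ} {n : ℕ}
    (hga : g a ≠ 0) (h : ∀ z, xi z = (z - a) ^ n * g z) : xiOrder a = n := by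
  have horder : analyticOrderAt xi a = n :=
    (differentiable_xi.analyticAt a).analyticOrderAt_eq_natCast.2
      ⟨g, hg.analyticAt a, hga, Eventually.of_forall h⟩
  rw [xiOrder, analyticOrderNatAt, horder, ENat.toNat_natCast]

lemma exists_xi_eq_sub_pow_xiOrder_mul (a : ℂ) :
    ∃ g : ℂ → ℂ, Differentiable ℂ g ∧ g a ≠ 0 ∧ ∀ z, xi z = (z - a) ^ xiOrder a * g z :=
  exists_eq_sub_pow_mul differentiable_xi
    (analyticOrderAt_ne_top differentiable_xi xi_zero_ne_zero a)

lemma xiOrder_one_sub (a : ℂ) : xiOrder (1 - a) = xiOrder a := by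
  obtain ⟨g, hg, hga, hfac⟩ := exists_xi_eq_sub_pow_xiOrder_mul a
  refine xiOrder_eq_of_eq_sub_pow_mul (g := fun z ↦ (-1) ^ xiOrder a * g (1 - z)) (by fun_prop)
    (by simpa using hga) fun z ↦ ?_
  rw [← xi_one_sub, hfac (1 - z), ← mul_assoc, ← mul_pow]
  congr 2
  ring

lemma xiOrder_conj (a : ℂ) : xiOrder (conj a) = xiOrder a := by
  obtain ⟨g, hg, hga, hfac⟩ := exists_xi_eq_sub_pow_xiOrder_mul a
  refine xiOrder_eq_of_eq_sub_pow_mul (g := fun z ↦ conj (g (conj z)))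
    (fun z ↦ differentiableAt_conj_conj_iff.mpr (hg _)) (by simpa using hga) fun z ↦ ?_
  rw [← conj_conj (xi z), ← xi_conj, hfac (conj z)]
  simp

/-! ### Partial fractions of `ξ'/ξ` -/

/-- The zeros of `ξ` of modulus at most `R`. Sums over these finite sets exhaust the sums over all
zeros. -/
noncomputable def xiZerosInBall (R : ℝ) : Finset ℂ :=
  (finite_setOf_eq_zero_norm_le differentiable_xi xi_zero_ne_zero R).toFinset

lemma mem_xiZerosInBall {R : ℝ} {a : ℂ} : a ∈ xiZerosInBall R ↔ xi a = 0 ∧ ‖a‖ ≤ R := by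
  simp [xiZerosInBall]

lemma growth_exponent_le {C R : ℝ} (hC : 0 ≤ C) (hR : 1 ≤ R) :
    C * ((1 + 2 * R) * √(1 + 2 * R)) + 1 ≤ (6 * C + 1) * (R * √R) := by
  have hsqrt : √(1 + 2 * R) ≤ 2 * √R :=
    calc √(1 + 2 * R) ≤ √(2 ^ 2 * R) := Real.sqrt_le_sqrt (by linarith)
      _ = 2 * √R := by rw [Real.sqrt_mul (by norm_num), Real.sqrt_sq (by norm_num)]
  have hone : 1 ≤ R * √R := one_le_mul_of_one_le_of_one_le hR (Real.one_le_sqrt.2 hR)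
  have hprod : (1 + 2 * R) * √(1 + 2 * R) ≤ (3 * R) * (2 * √R) := by
    gcongr
    linarith
  nlinarith

lemma norm_logDeriv_xi_sub_sum_le {C : ℝ} (hC : 0 ≤ C)
    (hxi : ∀ s : ℂ, ‖xi s‖ ≤ Real.exp (C * ((1 + ‖s‖) * √(1 + ‖s‖)))) {z : ℂ} (hz : xi z ≠ 0)
    {R : ℝ} (hR : 1 ≤ R) (hzR : ‖z‖ < R / 4) :
    ‖logDeriv xi z - logDeriv xi 0 -
        ∑ a ∈ xiZerosInBall R, (xiOrder a : ℂ) * (1 / (z - a) + 1 / a)‖ ≤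
      64 * ‖z‖ * (6 * C + 1) * (1 / √R) := by
  have hR0 : 0 < R := by linarith
  have hbound := norm_logDeriv_sub_sum_le differentiable_xi xi_zero_ne_zero hR0
    (fun w hw ↦ hw ▸ hxi w) (xiZerosInBall R) (fun a ↦ mem_xiZerosInBall) hzR hz
  rw [xi_zero, norm_one, Real.log_one, abs_zero, add_zero, abs_of_nonneg (by positivity)] at hbound
  calc _ ≤ 64 * (C * ((1 + 2 * R) * √(1 + 2 * R)) + 1) / R ^ 2 * ‖z‖ := hbound
    _ ≤ 64 * ((6 * C + 1) * (R * √R)) / R ^ 2 * ‖z‖ := by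
        gcongr
        exact growth_exponent_le hC hR
    _ = 64 * ‖z‖ * (6 * C + 1) * (1 / √R) := by
        field_simp
        rw [Real.sq_sqrt hR0.le]

lemma tendsto_sum_xiZerosInBall_one_div_sub {z : ℂ} (hz : xi z ≠ 0) :
    Tendsto (fun R ↦ ∑ a ∈ xiZerosInBall R, (xiOrder a : ℂ) * (1 / (z - a) + 1 / a)) atTop
      (𝓝 (logDeriv xi z - logDeriv xi 0)) := by
  obtain ⟨C, hC, hxi⟩ := exists_norm_xi_le
  have hsqrt : Tendsto (fun R : ℝ ↦ 1 / √R) atTop (𝓝 0) := by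
    simpa [Function.comp_def] using tendsto_inv_atTop_zero.comp Real.tendsto_sqrt_atTop
  rw [tendsto_iff_norm_sub_tendsto_zero]
  refine squeeze_zero' (Eventually.of_forall fun _ ↦ norm_nonneg _) ?_
    (mul_zero (64 * ‖z‖ * (6 * C + 1)) ▸ hsqrt.const_mul (64 * ‖z‖ * (6 * C + 1)))
  filter_upwards [eventually_ge_atTop 1, eventually_gt_atTop (4 * ‖z‖)] with R hR hzR
  rw [norm_sub_rev]
  exact norm_logDeriv_xi_sub_sum_le hC hxi hz hR (by linarith)

lemma re_one_div (w : ℂ) : (1 / w).re = w.re / ‖w‖ ^ 2 := by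
  rw [one_div, inv_re, normSq_eq_norm_sq]

lemma re_one_div_nonneg {w : ℂ} (hw : 0 ≤ w.re) : 0 ≤ (1 / w).re := by
  rw [re_one_div]
  positivity

lemma xiOrder_mul_re_one_div_sub_nonneg {z : ℂ} (hz : 1 ≤ z.re) (a : ℂ) :
    0 ≤ (xiOrder a : ℝ) * (1 / (z - a)).re := by
  by_cases ha : xi a = 0
  · have hre : 0 ≤ (z - a).re := by
      rw [sub_re]
      linarith [(re_mem_Ioo_of_xi_eq_zero ha).2]
    exact mul_nonneg (Nat.cast_nonneg _) (re_one_div_nonneg hre)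
  · simp [xiOrder_eq_zero ha]

lemma one_div_norm_two_sub_sq_le {a : ℂ} (ha : xi a = 0) :
    1 / ‖2 - a‖ ^ 2 ≤ (1 / (2 - a) + 1 / a).re := by
  obtain ⟨ha0, ha1⟩ := re_mem_Ioo_of_xi_eq_zero ha
  have hle : 1 / ‖2 - a‖ ^ 2 ≤ (1 / (2 - a)).re := by
    rw [re_one_div]
    gcongr
    rw [sub_re, re_ofNat]
    linarith
  rw [add_re]
  linarith [re_one_div_nonneg ha0.le]

-- At `z = 2` the real parts of the partial fractions are nonnegative, so that convergence of the
-- sums over growing discs is absolute.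
lemma summable_xiOrder_mul_one_div_norm_two_sub_sq :
    Summable fun a : ℂ ↦ (xiOrder a : ℝ) * (1 / ‖2 - a‖ ^ 2) := by
  classical
  have h2 : xi 2 ≠ 0 := xi_ne_zero_of_one_le_re (by norm_num)
  obtain ⟨c, hc⟩ := ((continuous_re.tendsto _).comp
    (tendsto_sum_xiZerosInBall_one_div_sub h2)).isBoundedUnder_le
  rw [eventually_map] at hc
  refine summable_of_sum_le (c := c) (fun a ↦ by positivity) fun u ↦ ?_
  have hu : ∀ᶠ R : ℝ in atTop, ∀ a ∈ u, ‖a‖ ≤ R :=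
    (eventually_all_finset u).2 fun a _ ↦ eventually_ge_atTop _
  obtain ⟨R, hRc, hRu⟩ := (hc.and hu).exists
  calc ∑ a ∈ u, (xiOrder a : ℝ) * (1 / ‖2 - a‖ ^ 2)
      = ∑ a ∈ u with xi a = 0, (xiOrder a : ℝ) * (1 / ‖2 - a‖ ^ 2) := by
        refine (Finset.sum_filter_of_ne fun a _ ha ↦ ?_).symm
        by_contra hne
        simp [xiOrder_eq_zero hne] at ha
    _ ≤ ∑ a ∈ xiZerosInBall R, (xiOrder a : ℝ) * (1 / ‖2 - a‖ ^ 2) := by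
        refine Finset.sum_le_sum_of_subset_of_nonneg (fun a ha ↦ ?_) fun _ _ _ ↦ by positivity
        rw [Finset.mem_filter] at ha
        exact mem_xiZerosInBall.2 ⟨ha.2, hRu a ha.1⟩
    _ ≤ ∑ a ∈ xiZerosInBall R, ((xiOrder a : ℂ) * (1 / (2 - a) + 1 / a)).re := by
        refine Finset.sum_le_sum fun a ha ↦ ?_
        rw [← ofReal_natCast, re_ofReal_mul]
        gcongr
        exact one_div_norm_two_sub_sq_le (mem_xiZerosInBall.1 ha).1
    _ ≤ c := by simpa only [Function.comp_apply, re_sum] using hRc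

lemma div_norm_sq_le_mul_one_div_norm_two_sub_sq {K : ℝ} {a : ℂ} (ha1 : 1 ≤ ‖a‖) (ha2 : a ≠ 2) :
    K / ‖a‖ ^ 2 ≤ 16 * |K| * (1 / ‖2 - a‖ ^ 2) := by
  have hpos : 0 < ‖2 - a‖ := norm_pos_iff.2 (sub_ne_zero.2 ha2.symm)
  have hle : ‖2 - a‖ ≤ 4 * ‖a‖ := by
    have := norm_sub_le 2 a
    rw [norm_ofNat] at this
    linarith
  rw [mul_one_div, div_le_div_iff₀ (by positivity) (by positivity)]
  calc K * ‖2 - a‖ ^ 2 ≤ |K| * (4 * ‖a‖) ^ 2 := by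
        gcongr
        exact le_abs_self K
    _ = 16 * |K| * ‖a‖ ^ 2 := by ring

lemma summable_xiOrder_mul_of_abs_le {g : ℂ → ℝ} (R K : ℝ)
    (hg : ∀ a, xi a = 0 → R < ‖a‖ → |g a| ≤ K / ‖a‖ ^ 2) :
    Summable fun a : ℂ ↦ (xiOrder a : ℝ) * g a := by
  refine Summable.of_norm_bounded_eventually
    (summable_xiOrder_mul_one_div_norm_two_sub_sq.mul_left (16 * |K|)) ?_
  rw [eventually_cofinite]
  refine (xiZerosInBall (max R 1)).finite_toSet.subset fun a ha ↦ ?_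
  rw [Finset.mem_coe, mem_xiZerosInBall]
  contrapose! ha
  rw [Set.notMem_ofPred_iff, not_lt, Real.norm_eq_abs, abs_mul, Nat.abs_cast, mul_left_comm]
  by_cases hxi : xi a = 0
  · obtain ⟨hRa, h1a⟩ := max_lt_iff.1 (ha hxi)
    have ha2 : a ≠ 2 := by
      rintro rfl
      exact xi_ne_zero_of_one_le_re (by norm_num) hxi
    gcongr
    exact (hg a hxi hRa).trans (div_norm_sq_le_mul_one_div_norm_two_sub_sq h1a.le ha2)
  · simp [xiOrder_eq_zero hxi]

lemma summable_xiOrder_mul_of_norm_le {g : ℂ → ℂ} (R K : ℝ)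
    (hg : ∀ a, xi a = 0 → R < ‖a‖ → ‖g a‖ ≤ K / ‖a‖ ^ 2) :
    Summable fun a : ℂ ↦ (xiOrder a : ℂ) * g a := by
  have hnorm := summable_xiOrder_mul_of_abs_le (g := fun a ↦ ‖g a‖) R K fun a ha hR ↦ by
    simpa using hg a ha hR
  exact .of_norm (by simpa using hnorm)

lemma tendsto_sum_xiZerosInBall {f : ℂ → ℂ} (hf : Summable fun a ↦ (xiOrder a : ℂ) * f a) :
    Tendsto (fun R ↦ ∑ a ∈ xiZerosInBall R, (xiOrder a : ℂ) * f a) atTop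
      (𝓝 (∑' a, (xiOrder a : ℂ) * f a)) := by
  simp_rw [fun R ↦ sum_eq_tsum_indicator (fun a ↦ (xiOrder a : ℂ) * f a) (xiZerosInBall R)]
  refine tendsto_tsum_of_dominated_convergence hf.norm (fun a ↦ ?_)
    (Eventually.of_forall fun R a ↦ norm_indicator_le_norm_self _ _)
  refine tendsto_const_nhds.congr' ?_
  filter_upwards [eventually_ge_atTop ‖a‖] with R hR
  by_cases ha : xi a = 0
  · exact (Set.indicator_of_mem (s := (xiZerosInBall R : Set ℂ)) (mem_xiZerosInBall.2 ⟨ha, hR⟩)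
      fun a ↦ (xiOrder a : ℂ) * f a).symm
  · simp [Set.indicator, xiOrder_eq_zero ha]

lemma half_norm_le_norm_sub {E : Type*} [SeminormedAddCommGroup E] {z a : E}
    (h : 2 * ‖z‖ ≤ ‖a‖) : ‖a‖ / 2 ≤ ‖z - a‖ := by
  have := norm_sub_norm_le a z
  rw [norm_sub_rev] at this
  linarith

lemma summable_xiOrder_mul_one_div_sub (z : ℂ) :
    Summable fun a : ℂ ↦ (xiOrder a : ℂ) * (1 / (z - a) + 1 / a) := by
  refine summable_xiOrder_mul_of_norm_le (2 * ‖z‖) (2 * ‖z‖) fun a _ hR ↦ ?_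
  have hhalf := half_norm_le_norm_sub hR.le
  have ha : 0 < ‖a‖ := by linarith [norm_nonneg z]
  have ha0 : a ≠ 0 := norm_pos_iff.1 ha
  have hza : z - a ≠ 0 := norm_pos_iff.1 (by linarith)
  have hsum : 1 / (z - a) + 1 / a = z / ((z - a) * a) := by
    field_simp
    ring
  rw [hsum, norm_div, norm_mul, div_le_div_iff₀ (by positivity) (by positivity)]
  nlinarith [mul_nonneg (norm_nonneg z) ha.le]

lemma logDeriv_xi_eq_add_tsum {z : ℂ} (hz : xi z ≠ 0) :
    logDeriv xi z = logDeriv xi 0 + ∑' a, (xiOrder a : ℂ) * (1 / (z - a) + 1 / a) :=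
  eq_add_of_sub_eq' <| tendsto_nhds_unique (tendsto_sum_xiZerosInBall_one_div_sub hz)
    (tendsto_sum_xiZerosInBall (summable_xiOrder_mul_one_div_sub z))

/-- Reflection in the critical line, `a ↦ 1 - conj a`. It permutes the zeros of `ξ`, and pairing
each zero with its reflection is what makes the sums over zeros positive. -/
noncomputable def criticalReflection : ℂ ≃ ℂ where
  toFun a := 1 - conj a
  invFun a := 1 - conj a
  left_inv a := by simp
  right_inv a := by simp

lemma xiOrder_criticalReflection (a : ℂ) : xiOrder (criticalReflection a) = xiOrder a :=
  (xiOrder_one_sub _).trans (xiOrder_conj a)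

lemma tsum_xiOrder_mul_one_sub_conj (g : ℂ → ℝ) :
    ∑' a, (xiOrder a : ℝ) * g (1 - conj a) = ∑' a, (xiOrder a : ℝ) * g a := by
  rw [← criticalReflection.tsum_eq fun a ↦ (xiOrder a : ℝ) * g a]
  simp only [xiOrder_criticalReflection]
  rfl

lemma summable_xiOrder_mul_one_sub_conj {g : ℂ → ℝ}
    (hg : Summable fun a ↦ (xiOrder a : ℝ) * g a) :
    Summable fun a ↦ (xiOrder a : ℝ) * g (1 - conj a) := by
  refine (criticalReflection.summable_iff.2 hg).congr fun a ↦ ?_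
  rw [Function.comp_apply, xiOrder_criticalReflection]
  rfl

lemma summable_xiOrder_mul_re_one_div_sub (z : ℂ) :
    Summable fun a : ℂ ↦ (xiOrder a : ℝ) * (1 / (z - a)).re := by
  refine summable_xiOrder_mul_of_abs_le (2 * ‖z‖) (4 * (‖z‖ + 1)) fun a ha hR ↦ ?_
  have hhalf := half_norm_le_norm_sub hR.le
  have hpos : 0 < ‖a‖ := by linarith [norm_nonneg z]
  have hzpos : 0 < ‖z - a‖ := by linarith
  have hre : |(z - a).re| ≤ ‖z‖ + 1 := by
    obtain ⟨ha0, ha1⟩ := re_mem_Ioo_of_xi_eq_zero ha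
    obtain ⟨hzl, hzr⟩ := abs_le.1 (abs_re_le_norm z)
    rw [sub_re, abs_le]
    constructor <;> linarith
  rw [re_one_div, abs_div, abs_of_nonneg (sq_nonneg ‖z - a‖),
    div_le_div_iff₀ (by positivity) (by positivity)]
  calc |(z - a).re| * ‖a‖ ^ 2 ≤ (‖z‖ + 1) * (4 * ‖z - a‖ ^ 2) := by
        gcongr
        nlinarith
    _ = 4 * (‖z‖ + 1) * ‖z - a‖ ^ 2 := by ring

lemma logDeriv_xi_one_sub (z : ℂ) : logDeriv xi (1 - z) = -logDeriv xi z := by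
  have hderiv : deriv xi z = -deriv xi (1 - z) := by
    conv_lhs => rw [← funext xi_one_sub]
    exact deriv_comp_const_sub xi 1 z
  rw [logDeriv_apply, logDeriv_apply, xi_one_sub, hderiv]
  ring

lemma re_logDeriv_xi_eq_add_tsum_sub_tsum {z : ℂ} (hz : xi z ≠ 0) :
    (logDeriv xi z).re = (logDeriv xi 0).re + ∑' a, (xiOrder a : ℝ) * (1 / (z - a)).re -
      ∑' a, (xiOrder a : ℝ) * (1 / (0 - a)).re := by
  rw [logDeriv_xi_eq_add_tsum hz, add_re, re_tsum (summable_xiOrder_mul_one_div_sub z),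
    add_sub_assoc, ← (summable_xiOrder_mul_re_one_div_sub z).tsum_sub
      (summable_xiOrder_mul_re_one_div_sub 0)]
  congr! 3 with a
  rw [← ofReal_natCast, re_ofReal_mul, add_re, zero_sub, one_div_neg_eq_neg_one_div, neg_re]
  ring

-- The constant in the partial fractions is determined by the functional equation.
lemma re_logDeriv_xi_eq_tsum {z : ℂ} (hz : xi z ≠ 0) :
    (logDeriv xi z).re = ∑' a, (xiOrder a : ℝ) * (1 / (z - a)).re := by
  have hone := re_logDeriv_xi_eq_add_tsum_sub_tsum
    (xi_ne_zero_of_one_le_re (s := 1) (by rw [one_re]))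
  have hodd : logDeriv xi 1 = -logDeriv xi 0 := by simpa using logDeriv_xi_one_sub 0
  have hsymm : ∑' a, (xiOrder a : ℝ) * (1 / (1 - a)).re =
      -∑' a, (xiOrder a : ℝ) * (1 / (0 - a)).re := by
    rw [← tsum_xiOrder_mul_one_sub_conj, ← tsum_neg]
    refine tsum_congr fun a ↦ ?_
    rw [sub_sub_cancel, zero_sub, re_one_div, re_one_div]
    simp [neg_div]
  rw [hodd, neg_re, hsymm] at hone
  linarith [re_logDeriv_xi_eq_add_tsum_sub_tsum hz]

/-! ### The digamma function -/

/-- The `k`-th term of the series `log Γ(z) = -log z + ∑ₖ (z log (1 + 1/(k+1)) - log (1 + z/(k+1)))`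
on the right half-plane. -/
noncomputable def logGammaTerm (k : ℕ) (z : ℂ) : ℂ :=
  z * (Real.log (1 + 1 / ((k : ℝ) + 1)) : ℂ) - log (1 + z / ((k : ℂ) + 1))

/-- The derivative of `logGammaTerm k`: the `k`-th term of a series for the digamma function on the
right half-plane. -/
noncomputable def digammaTerm (k : ℕ) (z : ℂ) : ℂ :=
  (Real.log (1 + 1 / ((k : ℝ) + 1)) : ℂ) - 1 / ((k : ℂ) + 1 + z)

lemma add_natCast_ne_zero {z : ℂ} (hz : 0 < z.re) (k : ℕ) : z + k ≠ 0 := by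
  intro h
  have hre := congrArg re h
  rw [add_re, natCast_re, zero_re] at hre
  linarith [Nat.cast_nonneg (α := ℝ) k]

lemma natCast_add_one_add_ne_zero {z : ℂ} (hz : 0 < z.re) (k : ℕ) : (k : ℂ) + 1 + z ≠ 0 := by
  simpa [add_comm] using add_natCast_ne_zero hz (k + 1)

lemma one_add_div_natCast_add_one (k : ℕ) (z : ℂ) :
    1 + z / ((k : ℂ) + 1) = ((k : ℂ) + 1 + z) / ((k : ℂ) + 1) := by
  field_simp [Nat.cast_add_one_ne_zero (R := ℂ) k]

lemma one_add_div_mem_slitPlane {z : ℂ} (hz : 0 < z.re) (k : ℕ) :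
    1 + z / ((k : ℂ) + 1) ∈ slitPlane := by
  refine Or.inl ?_
  have hre : (z / ((k : ℂ) + 1)).re = z.re / ((k : ℝ) + 1) := by
    rw [← Nat.cast_add_one, div_natCast_re, Nat.cast_add_one]
  rw [add_re, one_re, hre]
  positivity

lemma hasDerivAt_logGammaTerm (k : ℕ) {z : ℂ} (hz : 0 < z.re) :
    HasDerivAt (logGammaTerm k) (digammaTerm k z) z := by
  have hadd : HasDerivAt (fun z : ℂ ↦ 1 + z / ((k : ℂ) + 1)) (1 / ((k : ℂ) + 1)) z := by
    simpa using ((hasDerivAt_id z).div_const ((k : ℂ) + 1)).const_add 1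
  refine (((hasDerivAt_id z).mul_const (Real.log (1 + 1 / ((k : ℝ) + 1)) : ℂ)).sub
    (hadd.clog (one_add_div_mem_slitPlane hz k))).congr_deriv ?_
  rw [one_add_div_natCast_add_one, digammaTerm]
  field_simp [Nat.cast_add_one_ne_zero (R := ℂ) k, natCast_add_one_add_ne_zero hz k]

lemma one_div_add_one_le_log_one_add {w : ℝ} (hw : 0 < w) :
    1 / (w + 1) ≤ Real.log (1 + 1 / w) := by
  refine le_of_eq_of_le ?_ (Real.one_sub_inv_le_log_of_pos (x := 1 + 1 / w) (by positivity))
  field_simp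
  ring

lemma log_one_add_one_div_le {w : ℝ} (hw : 0 < w) : Real.log (1 + 1 / w) ≤ 1 / w := by
  linarith [Real.log_le_sub_one_of_pos (x := 1 + 1 / w) (by positivity)]

lemma abs_log_one_add_sub_one_div_le {w : ℝ} (hw : 0 < w) :
    |Real.log (1 + 1 / w) - 1 / w| ≤ 1 / w ^ 2 := by
  have hdiff : 1 / w - 1 / (w + 1) ≤ 1 / w ^ 2 := by
    rw [div_sub_div _ _ (by positivity) (by positivity),
      div_le_div_iff₀ (by positivity) (by positivity)]
    nlinarith
  have hpos : 0 ≤ 1 / w ^ 2 := by positivity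
  rw [abs_le]
  constructor <;> linarith [one_div_add_one_le_log_one_add hw, log_one_add_one_div_le hw]

lemma norm_digammaTerm_le (k : ℕ) {z : ℂ} (hz : 0 < z.re) :
    ‖digammaTerm k z‖ ≤ (1 + ‖z‖) * (1 / ((k : ℝ) + 1) ^ 2) := by
  have hk0 : (0 : ℝ) < (k : ℝ) + 1 := by positivity
  have hsplit : digammaTerm k z =
      ((Real.log (1 + 1 / ((k : ℝ) + 1)) - 1 / ((k : ℝ) + 1) : ℝ) : ℂ) +
        z / (((k : ℂ) + 1) * ((k : ℂ) + 1 + z)) := by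
    rw [digammaTerm]
    push_cast
    field_simp [Nat.cast_add_one_ne_zero (R := ℂ) k, natCast_add_one_add_ne_zero hz k]
    ring
  have hfrac : ‖z / (((k : ℂ) + 1) * ((k : ℂ) + 1 + z))‖ ≤ ‖z‖ * (1 / ((k : ℝ) + 1) ^ 2) := by
    have hk : ‖(k : ℂ) + 1‖ = (k : ℝ) + 1 := by exact_mod_cast norm_natCast (k + 1)
    have hkz : (k : ℝ) + 1 ≤ ‖(k : ℂ) + 1 + z‖ := by
      refine le_trans ?_ (re_le_norm _)
      simpa using hz.le
    rw [norm_div, norm_mul, mul_one_div, hk, sq]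
    gcongr
  rw [hsplit, add_mul 1 ‖z‖, one_mul]
  refine (norm_add_le _ _).trans (add_le_add ?_ hfrac)
  rw [norm_real]
  exact abs_log_one_add_sub_one_div_le hk0

lemma summable_one_div_add_one_sq : Summable fun k : ℕ ↦ 1 / ((k : ℝ) + 1) ^ 2 := by
  simpa using (summable_nat_add_iff 1).2 (Real.summable_one_div_nat_pow.2 one_lt_two)

lemma summable_digammaTerm {z : ℂ} (hz : 0 < z.re) : Summable fun k ↦ digammaTerm k z :=
  .of_norm_bounded (summable_one_div_add_one_sq.mul_left (1 + ‖z‖)) fun k ↦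
    norm_digammaTerm_le k hz

lemma logGammaTerm_one (k : ℕ) : logGammaTerm k 1 = 0 := by
  rw [logGammaTerm, one_mul, ofReal_log (by positivity)]
  push_cast
  ring

lemma isOpen_re_pos_inter_ball (R : ℝ) : IsOpen ({z : ℂ | 0 < z.re} ∩ Metric.ball 0 R) :=
  (isOpen_lt continuous_const continuous_re).inter Metric.isOpen_ball

lemma isPreconnected_re_pos_inter_ball (R : ℝ) :
    IsPreconnected ({z : ℂ | 0 < z.re} ∩ Metric.ball 0 R) :=
  ((convex_halfSpace_re_gt 0).inter (convex_ball 0 R)).isPreconnected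

lemma norm_digammaTerm_le_of_mem_ball (R : ℝ) (k : ℕ) {z : ℂ}
    (hz : z ∈ {z : ℂ | 0 < z.re} ∩ Metric.ball 0 R) :
    ‖digammaTerm k z‖ ≤ (1 + R) * (1 / ((k : ℝ) + 1) ^ 2) := by
  refine (norm_digammaTerm_le k hz.1).trans ?_
  gcongr
  exact (mem_ball_zero_iff.1 hz.2).le

lemma one_mem_re_pos_inter_ball {R : ℝ} (hR : 1 < R) :
    (1 : ℂ) ∈ {z : ℂ | 0 < z.re} ∩ Metric.ball 0 R := by
  simpa using hR

lemma summable_logGammaTerm {z : ℂ} (hz : 0 < z.re) : Summable fun k ↦ logGammaTerm k z :=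
  summable_of_summable_hasDerivAt_of_isPreconnected
    (summable_one_div_add_one_sq.mul_left (1 + (‖z‖ + 2))) (isOpen_re_pos_inter_ball (‖z‖ + 2))
    (isPreconnected_re_pos_inter_ball (‖z‖ + 2)) (fun k _ hy ↦ hasDerivAt_logGammaTerm k hy.1)
    (fun k _ ↦ norm_digammaTerm_le_of_mem_ball _ k)
    (one_mem_re_pos_inter_ball (by linarith [norm_nonneg z]))
    (by simp [logGammaTerm_one, summable_zero]) ⟨hz, by simp⟩

lemma hasDerivAt_tsum_logGammaTerm {z : ℂ} (hz : 0 < z.re) :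
    HasDerivAt (fun z ↦ ∑' k, logGammaTerm k z) (∑' k, digammaTerm k z) z :=
  hasDerivAt_tsum_of_isPreconnected
    (summable_one_div_add_one_sq.mul_left (1 + (‖z‖ + 2))) (isOpen_re_pos_inter_ball (‖z‖ + 2))
    (isPreconnected_re_pos_inter_ball (‖z‖ + 2)) (fun k _ hy ↦ hasDerivAt_logGammaTerm k hy.1)
    (fun k _ ↦ norm_digammaTerm_le_of_mem_ball _ k)
    (one_mem_re_pos_inter_ball (by linarith [norm_nonneg z]))
    (by simp [logGammaTerm_one, summable_zero]) ⟨hz, by simp⟩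

lemma exp_logGammaTerm {z : ℂ} (hz : 0 < z.re) (k : ℕ) :
    exp (logGammaTerm k z) = exp (z * (Real.log (1 + 1 / ((k : ℝ) + 1)) : ℂ)) /
      (1 + z / ((k : ℂ) + 1)) := by
  rw [logGammaTerm, exp_sub, exp_log (slitPlane_ne_zero (one_add_div_mem_slitPlane hz k))]

lemma natCast_add_two_cpow (n : ℕ) (z : ℂ) :
    ((n + 1 + 1 : ℕ) : ℂ) ^ z =
      ((n + 1 : ℕ) : ℂ) ^ z * exp (z * (Real.log (1 + 1 / ((n : ℝ) + 1)) : ℂ)) := by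
  have hdiv : 1 + 1 / ((n : ℝ) + 1) = ((n + 1 + 1 : ℕ) : ℝ) / ((n + 1 : ℕ) : ℝ) := by
    push_cast
    field_simp
  rw [cpow_def_of_ne_zero (Nat.cast_ne_zero.2 (n + 1).succ_ne_zero),
    cpow_def_of_ne_zero (Nat.cast_ne_zero.2 n.succ_ne_zero), ← exp_add, ← natCast_log,
    ← natCast_log, hdiv, Real.log_div (by positivity) (by positivity)]
  congr 1
  push_cast
  ring

lemma GammaSeq_add_two_mul {z : ℂ} (hz : 0 < z.re) (n : ℕ) :
    GammaSeq z (n + 1 + 1) * (1 + z / ((n + 1 : ℕ) + 1)) =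
      GammaSeq z (n + 1) * (1 + z / (n + 1)) * exp (logGammaTerm n z) := by
  have hn1 : (n : ℂ) + 1 ≠ 0 := Nat.cast_add_one_ne_zero n
  have hn2 : (n : ℂ) + 1 + 1 ≠ 0 := by exact_mod_cast Nat.cast_add_one_ne_zero (R := ℂ) (n + 1)
  have hz1 : (n : ℂ) + 1 + z ≠ 0 := natCast_add_one_add_ne_zero hz n
  have hz2 : (n : ℂ) + 1 + 1 + z ≠ 0 := by
    simpa using natCast_add_one_add_ne_zero hz (n + 1)
  have hprod : ∏ j ∈ Finset.range (n + 1), (z + (j : ℂ)) ≠ 0 :=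
    Finset.prod_ne_zero_iff.2 fun j _ ↦ add_natCast_ne_zero hz j
  rw [exp_logGammaTerm hz, GammaSeq, GammaSeq, natCast_add_two_cpow,
    Finset.prod_range_succ _ (n + 1 + 1), Finset.prod_range_succ _ (n + 1),
    Nat.factorial_succ (n + 1), one_add_div_natCast_add_one, one_add_div_natCast_add_one]
  push_cast
  rw [add_comm z ((n : ℂ) + 1), add_comm z ((n : ℂ) + 1 + 1)]
  field_simp

lemma exp_neg_log_add_sum_logGammaTerm {z : ℂ} (hz : 0 < z.re) (n : ℕ) :
    exp (-log z + ∑ k ∈ Finset.range n, logGammaTerm k z) =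
      GammaSeq z (n + 1) * (1 + z / ((n : ℂ) + 1)) := by
  induction n with
  | zero =>
    have hz0 : z ≠ 0 := by simpa using add_natCast_ne_zero hz 0
    have hz1 : z + 1 ≠ 0 := by simpa using add_natCast_ne_zero hz 1
    simp only [Finset.range_zero, Finset.sum_empty, add_zero, exp_neg, exp_log hz0, GammaSeq]
    simp [Finset.prod_range_succ]
    field_simp
    ring
  | succ n ih =>
    rw [Finset.sum_range_succ, ← add_assoc, exp_add, ih, GammaSeq_add_two_mul hz]

lemma Gamma_eq_exp_tsum_logGammaTerm {z : ℂ} (hz : 0 < z.re) :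
    Gamma z = exp (-log z + ∑' k, logGammaTerm k z) := by
  have hexp : Tendsto (fun n ↦ exp (-log z + ∑ k ∈ Finset.range n, logGammaTerm k z)) atTop
      (𝓝 (exp (-log z + ∑' k, logGammaTerm k z))) :=
    (continuous_exp.tendsto _).comp
      ((summable_logGammaTerm hz).hasSum.tendsto_sum_nat.const_add _)
  have hGamma : Tendsto (fun n : ℕ ↦ GammaSeq z (n + 1) * (1 + z * (1 / ((n : ℂ) + 1)))) atTop
      (𝓝 (Gamma z * (1 + z * 0))) :=
    ((GammaSeq_tendsto_Gamma z).comp (tendsto_add_atTop_nat 1)).mul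
      ((tendsto_one_div_add_atTop_nhds_zero_nat.const_mul z).const_add 1)
  simp only [mul_zero, add_zero, mul_one, mul_one_div] at hGamma
  simp_rw [exp_neg_log_add_sum_logGammaTerm hz] at hexp
  exact tendsto_nhds_unique hGamma hexp

lemma digamma_eq_neg_one_div_add_tsum {z : ℂ} (hz : 0 < z.re) :
    digamma z = -(1 / z) + ∑' k, digammaTerm k z := by
  have hderiv : HasDerivAt (fun z ↦ exp (-log z + ∑' k, logGammaTerm k z))
      (exp (-log z + ∑' k, logGammaTerm k z) * (-(1 / z) + ∑' k, digammaTerm k z)) z := by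
    rw [one_div]
    exact ((hasDerivAt_log (Or.inl hz)).neg.add (hasDerivAt_tsum_logGammaTerm hz)).cexp
  have hGamma : Gamma =ᶠ[𝓝 z] fun z ↦ exp (-log z + ∑' k, logGammaTerm k z) :=
    eventuallyEq_of_mem ((isOpen_lt continuous_const continuous_re).mem_nhds hz) fun w hw ↦
      Gamma_eq_exp_tsum_logGammaTerm hw
  rw [digamma_def, logDeriv_apply, (hderiv.congr_of_eventuallyEq hGamma).deriv,
    Gamma_eq_exp_tsum_logGammaTerm hz, mul_div_cancel_left₀ _ (exp_ne_zero _)]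

lemma re_neg_one_div_add_sum_digammaTerm (z : ℂ) (n : ℕ) :
    (-(1 / z) + ∑ k ∈ Finset.range n, digammaTerm k z).re =
      Real.log (n + 1) - ∑ k ∈ Finset.range (n + 1), (1 / (z + k)).re := by
  induction n with
  | zero => simp
  | succ n ih =>
    have hdiv : 1 + 1 / ((n : ℝ) + 1) = ((n : ℝ) + 1 + 1) / ((n : ℝ) + 1) := by field_simp
    have hshift : z + ((n + 1 : ℕ) : ℂ) = (n : ℂ) + 1 + z := by
      push_cast
      ring
    rw [Finset.sum_range_succ, ← add_assoc, add_re, ih, Finset.sum_range_succ _ (n + 1),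
      digammaTerm, hdiv, Real.log_div (by positivity) (by positivity), hshift, sub_re, ofReal_re]
    push_cast
    ring

lemma sum_log_norm_one_add_one_div {z : ℂ} (hz : 0 < z.re) (n : ℕ) :
    ∑ k ∈ Finset.range n, Real.log ‖1 + 1 / (z + k)‖ = Real.log ‖z + n‖ - Real.log ‖z‖ := by
  have hterm (k : ℕ) : Real.log ‖1 + 1 / (z + k)‖ =
      Real.log ‖z + (k + 1 : ℕ)‖ - Real.log ‖z + k‖ := by
    have hk := add_natCast_ne_zero hz k
    have hdiv : 1 + 1 / (z + k) = (z + (k + 1 : ℕ)) / (z + k) := by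
      push_cast
      field_simp
      ring
    rw [hdiv, norm_div, Real.log_div (norm_ne_zero_iff.2 (add_natCast_ne_zero hz _))
      (norm_ne_zero_iff.2 hk)]
  rw [Finset.sum_congr rfl fun k _ ↦ hterm k, Finset.sum_range_sub fun k : ℕ ↦ Real.log ‖z + k‖,
    Nat.cast_zero, add_zero]

lemma tendsto_log_norm_add_sub_log {z : ℂ} (hz : 0 < z.re) :
    Tendsto (fun n : ℕ ↦ Real.log ‖z + (n + 1 : ℕ)‖ - Real.log (n + 1)) atTop (𝓝 0) := by
  have hlim : Tendsto (fun n : ℕ ↦ Real.log ‖z * (1 / ((n : ℂ) + 1)) + 1‖) atTop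
      (𝓝 (Real.log ‖z * 0 + 1‖)) :=
    ((tendsto_one_div_add_atTop_nhds_zero_nat.const_mul z).add_const 1).norm.log (by simp)
  rw [mul_zero, zero_add, norm_one, Real.log_one] at hlim
  refine hlim.congr fun n ↦ ?_
  have hn : (0 : ℝ) < (n : ℝ) + 1 := by positivity
  have hdiv : z * (1 / ((n : ℂ) + 1)) + 1 = (z + (n + 1 : ℕ)) / (((n : ℝ) + 1 : ℝ) : ℂ) := by
    push_cast
    field_simp [Nat.cast_add_one_ne_zero (R := ℂ) n]
  rw [hdiv, norm_div, norm_real, Real.norm_of_nonneg hn.le,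
    Real.log_div (norm_ne_zero_iff.2 (add_natCast_ne_zero hz _)) hn.ne']

lemma tendsto_sum_log_norm_sub_re_one_div {z : ℂ} (hz : 0 < z.re) :
    Tendsto (fun n : ℕ ↦ ∑ k ∈ Finset.range (n + 1),
      (Real.log ‖1 + 1 / (z + k)‖ - (1 / (z + k)).re)) atTop
      (𝓝 ((digamma z).re - Real.log ‖z‖)) := by
  have hdigamma : Tendsto (fun n ↦ (-(1 / z) + ∑ k ∈ Finset.range n, digammaTerm k z).re) atTop
      (𝓝 (digamma z).re) := by
    rw [digamma_eq_neg_one_div_add_tsum hz]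
    exact (continuous_re.tendsto _).comp
      ((summable_digammaTerm hz).hasSum.tendsto_sum_nat.const_add _)
  have hlim := (hdigamma.add (tendsto_log_norm_add_sub_log hz)).sub_const (Real.log ‖z‖)
  rw [add_zero] at hlim
  refine hlim.congr fun n ↦ ?_
  rw [re_neg_one_div_add_sum_digammaTerm, Finset.sum_sub_distrib, sum_log_norm_one_add_one_div hz]
  ring

/-! ### Bounds for the digamma function -/

lemma abs_log_norm_one_add_sub_re_le {w : ℂ} (hw : 1 < ‖w‖) :
    |Real.log ‖1 + 1 / w‖ - (1 / w).re| ≤ 1 / (2 * (‖w‖ * (‖w‖ - 1))) := by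
  have hinv : ‖1 / w‖ < 1 := by rwa [norm_div, norm_one, div_lt_one (by linarith)]
  have hw1 : ‖w‖ - 1 ≠ 0 := by linarith
  have hw0 : ‖w‖ ≠ 0 := by linarith
  have hsub : 1 - 1 / ‖w‖ = (‖w‖ - 1) / ‖w‖ := by field_simp
  calc |Real.log ‖1 + 1 / w‖ - (1 / w).re| = |(log (1 + 1 / w) - 1 / w).re| := by
        rw [sub_re, log_re]
    _ ≤ ‖log (1 + 1 / w) - 1 / w‖ := abs_re_le_norm _
    _ ≤ ‖1 / w‖ ^ 2 * (1 - ‖1 / w‖)⁻¹ / 2 := norm_log_one_add_sub_self_le hinv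
    _ = 1 / (2 * (‖w‖ * (‖w‖ - 1))) := by
        rw [norm_div, norm_one, hsub]
        field_simp

lemma sum_one_div_sub_one_div_le {b : ℝ} (hb : 0 < b) (n : ℕ) :
    ∑ k ∈ Finset.range n, (1 / (b + k) - 1 / (b + k + 1)) ≤ 1 / b := by
  have htele := Finset.sum_range_sub' (fun k : ℕ ↦ 1 / (b + k)) n
  push_cast at htele
  simp only [← add_assoc, add_zero] at htele
  rw [htele, sub_le_self_iff]
  positivity

lemma abs_re_digamma_sub_log_norm_le {z : ℂ} (hz : 0 < z.re) {b C : ℝ} (hb : 0 < b) (hC : 0 ≤ C)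
    (hterm : ∀ k : ℕ, |Real.log ‖1 + 1 / (z + k)‖ - (1 / (z + k)).re| ≤
      C * (1 / (b + k) - 1 / (b + k + 1))) :
    |(digamma z).re - Real.log ‖z‖| ≤ C / b := by
  refine le_of_tendsto (tendsto_sum_log_norm_sub_re_one_div hz).abs
    (Eventually.of_forall fun n ↦ ?_)
  calc |∑ k ∈ Finset.range (n + 1), (Real.log ‖1 + 1 / (z + k)‖ - (1 / (z + k)).re)|
      ≤ ∑ k ∈ Finset.range (n + 1), C * (1 / (b + k) - 1 / (b + k + 1)) :=
        (Finset.abs_sum_le_sum_abs _ _).trans (Finset.sum_le_sum fun k _ ↦ hterm k)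
    _ ≤ C * (1 / b) := by
        rw [← Finset.mul_sum]
        gcongr
        exact sum_one_div_sub_one_div_le hb _
    _ = C / b := mul_one_div _ _

lemma abs_re_digamma_sub_log_norm_le_one {z : ℂ} (hz : 3 / 2 ≤ z.re) :
    |(digamma z).re - Real.log ‖z‖| ≤ 1 := by
  have hb : 1 / 2 / (z.re - 1) ≤ 1 := by
    rw [div_le_one (by linarith)]
    linarith
  refine (abs_re_digamma_sub_log_norm_le (b := z.re - 1) (C := 1 / 2) (by linarith)
    (by linarith) (by norm_num) fun k ↦ ?_).trans hb
  have : (0 : ℝ) ≤ k := Nat.cast_nonneg k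
  have hw : z.re + k ≤ ‖z + k‖ := by simpa using re_le_norm (z + k)
  have hpos : 0 < z.re - 1 + k := by linarith
  have hfrac : 1 / 2 * (1 / (z.re - 1 + k) - 1 / (z.re - 1 + k + 1)) =
      1 / (2 * ((z.re - 1 + k + 1) * (z.re - 1 + k))) := by
    field_simp
    ring
  rw [hfrac]
  refine (abs_log_norm_one_add_sub_re_le (by linarith)).trans ?_
  gcongr <;> linarith

lemma abs_re_digamma_sub_log_norm_le_div_im {z : ℂ} (hz : 3 / 2 ≤ z.re) (hy : 2 ≤ |z.im|) :
    |(digamma z).re - Real.log ‖z‖| ≤ 5 / 3 / |z.im| := by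
  refine abs_re_digamma_sub_log_norm_le (by linarith) (by linarith) (by norm_num) fun k ↦ ?_
  have : (0 : ℝ) ≤ k := Nat.cast_nonneg k
  have hsq : ‖z + k‖ ^ 2 = (z.re + k) ^ 2 + |z.im| ^ 2 := by
    rw [← normSq_eq_norm_sq, normSq_apply, sq_abs]
    simp
    ring
  have hnorm : 5 / 2 ≤ ‖z + k‖ := by
    refine le_of_sq_le_sq ?_ (norm_nonneg _)
    nlinarith
  have hfrac : 5 / 3 * (1 / (|z.im| + k) - 1 / (|z.im| + k + 1)) =
      1 / (2 * (3 / 5 * ((|z.im| + k) * (|z.im| + k + 1)) / 2)) := by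
    field_simp
    ring
  have hlow : (|z.im| + k) * (|z.im| + k + 1) / 2 ≤ ‖z + k‖ ^ 2 := by
    rw [hsq]
    nlinarith [sq_nonneg (z.re + k - |z.im|)]
  rw [hfrac]
  refine (abs_log_norm_one_add_sub_re_le (by linarith)).trans ?_
  gcongr
  nlinarith

lemma log_norm_one_add_sub_re_ofReal {x : ℝ} (hx : 0 < x) (k : ℕ) :
    Real.log ‖1 + 1 / ((x : ℂ) + k)‖ - (1 / ((x : ℂ) + k)).re =
      Real.log (1 + 1 / (x + k)) - 1 / (x + k) := by
  have hcast : 1 / ((x : ℂ) + k) = ((1 / (x + k) : ℝ) : ℂ) := by push_cast; rfl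
  rw [hcast, ofReal_re, ← ofReal_one, ← ofReal_add, norm_real,
    Real.norm_of_nonneg (by positivity)]

lemma log_sub_one_div_le_re_digamma {x : ℝ} (hx : 0 < x) :
    Real.log x - 1 / x ≤ (digamma (x : ℂ)).re := by
  have hlim := tendsto_sum_log_norm_sub_re_one_div (z := (x : ℂ)) (by simpa using hx)
  simp_rw [norm_real, Real.norm_of_nonneg hx.le, log_norm_one_add_sub_re_ofReal hx] at hlim
  have hle : -(1 / x) ≤ (digamma (x : ℂ)).re - Real.log x := by
    refine ge_of_tendsto' hlim fun n ↦ ?_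
    calc -(1 / x) ≤ ∑ k ∈ Finset.range (n + 1), -(1 / (x + k) - 1 / (x + k + 1)) := by
          rw [Finset.sum_neg_distrib, neg_le_neg_iff]
          exact sum_one_div_sub_one_div_le hx (n + 1)
      _ ≤ ∑ k ∈ Finset.range (n + 1), (Real.log (1 + 1 / (x + k)) - 1 / (x + k)) :=
          Finset.sum_le_sum fun k _ ↦ by
            linarith [one_div_add_one_le_log_one_add (w := x + k) (by positivity)]
  linarith

lemma re_digamma_ofReal_le_log {x : ℝ} (hx : 0 < x) : (digamma (x : ℂ)).re ≤ Real.log x := by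
  have hlim := tendsto_sum_log_norm_sub_re_one_div (z := (x : ℂ)) (by simpa using hx)
  simp_rw [norm_real, Real.norm_of_nonneg hx.le, log_norm_one_add_sub_re_ofReal hx] at hlim
  refine sub_nonpos.1 (le_of_tendsto' hlim fun n ↦ Finset.sum_nonpos fun k _ ↦ ?_)
  exact sub_nonpos.2 (log_one_add_one_div_le (by positivity))

lemma re_digamma_ofReal_le_log_add_one_sub {x : ℝ} (hx : 0 < x) :
    (digamma (x : ℂ)).re ≤ Real.log (x + 1) - 1 / x := by
  have hshift := digamma_apply_add_one (x : ℂ) fun m ↦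
    fun h ↦ add_natCast_ne_zero (z := (x : ℂ)) (by simpa using hx) m (by rw [h, neg_add_cancel])
  have hle := re_digamma_ofReal_le_log (x := x + 1) (by linarith)
  rw [ofReal_add, ofReal_one, hshift, add_re, ← one_div, ← ofReal_one, ← ofReal_div,
    ofReal_re] at hle
  linarith

/-! ### The logarithmic derivative of `ζ` -/

lemma xi_eq_mul_Gamma_add_one {s : ℂ} (hs : 1 < s.re) :
    xi s = 2 * (s - 1) * ((π : ℂ) ^ (-s / 2) * (Gamma (s / 2 + 1) * riemannZeta s)) := by
  have hs0 : s / 2 ≠ 0 := div_ne_zero (by rintro rfl; norm_num at hs) two_ne_zero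
  rw [xi_eq_mul_riemannZeta hs, Gamma_add_one _ hs0]
  ring

lemma logDeriv_const_cpow_neg_half {c : ℂ} (hc : c ≠ 0) (z : ℂ) :
    logDeriv (fun s : ℂ ↦ c ^ (-s / 2)) z = -log c / 2 := by
  have hder : HasDerivAt (fun s : ℂ ↦ c ^ (-s / 2)) (c ^ (-z / 2) * log c * (-1 / 2)) z :=
    ((hasDerivAt_id z).neg.div_const 2).const_cpow (Or.inl hc)
  have hne : c ^ (-z / 2) ≠ 0 := by simp [cpow_eq_zero_iff, hc]
  rw [logDeriv_apply, hder.deriv, mul_assoc, mul_div_cancel_left₀ _ hne]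
  ring

lemma neg_deriv_riemannZeta_div {z : ℂ} (hz : 1 < z.re) :
    -deriv riemannZeta z / riemannZeta z = 1 / (z - 1) - (Real.log π : ℂ) / 2 +
      digamma (z / 2 + 1) / 2 - logDeriv xi z := by
  have hz1 : z ≠ 1 := by rintro rfl; norm_num at hz
  have hre : 0 < (z / 2 + 1).re := by rw [add_re, div_ofNat_re, one_re]; linarith
  have hdGamma : DifferentiableAt ℂ Gamma (z / 2 + 1) := by
    refine differentiableAt_Gamma _ fun m h ↦ ?_
    rw [h, neg_re, natCast_re] at hre
    linarith [m.cast_nonneg (α := ℝ)]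
  have hpi : (π : ℂ) ≠ 0 := ofReal_ne_zero.2 Real.pi_ne_zero
  have hpow : (π : ℂ) ^ (-z / 2) ≠ 0 := by simp [cpow_eq_zero_iff, hpi]
  have hGamma : Gamma (z / 2 + 1) ≠ 0 := Gamma_ne_zero_of_re_pos hre
  have hzeta : riemannZeta z ≠ 0 := riemannZeta_ne_zero_of_one_lt_re hz
  have hdzeta : DifferentiableAt ℂ riemannZeta z := differentiableAt_riemannZeta hz1
  have hdGamma' : DifferentiableAt ℂ (fun s ↦ Gamma (s / 2 + 1)) z :=
    hdGamma.comp z (by fun_prop)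
  have hdpow : DifferentiableAt ℂ (fun s : ℂ ↦ (π : ℂ) ^ (-s / 2)) z :=
    DifferentiableAt.const_cpow (by fun_prop) (Or.inl hpi)
  have hd₁ : DifferentiableAt ℂ (fun s ↦ Gamma (s / 2 + 1) * riemannZeta s) z :=
    hdGamma'.fun_mul hdzeta
  have hlin : logDeriv (fun s ↦ 2 * (s - 1)) z = 1 / (z - 1) := by
    rw [logDeriv_const_mul z 2 two_ne_zero, logDeriv_apply, deriv_sub_const_fun, deriv_id'']
  have hcomp : logDeriv (fun s ↦ Gamma (s / 2 + 1)) z = digamma (z / 2 + 1) / 2 := by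
    have h := logDeriv_comp (g := fun s : ℂ ↦ s / 2 + 1) hdGamma (by fun_prop)
    rw [deriv_add_const, deriv_div_const, deriv_id'', mul_one_div] at h
    exact h
  have hxi : xi =ᶠ[𝓝 z] fun s ↦
      2 * (s - 1) * ((π : ℂ) ^ (-s / 2) * (Gamma (s / 2 + 1) * riemannZeta s)) :=
    eventuallyEq_of_mem ((isOpen_lt continuous_const continuous_re).mem_nhds hz)
      fun w hw ↦ xi_eq_mul_Gamma_add_one hw
  rw [(logDeriv_congr_nhds hxi).eq_of_nhds,
    logDeriv_mul z (by simp [sub_ne_zero, hz1]) (by simp [hpow, hGamma, hzeta]) (by fun_prop)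
      (hdpow.fun_mul hd₁),
    logDeriv_mul z hpow (by simp [hGamma, hzeta]) hdpow hd₁,
    logDeriv_mul z hGamma hzeta hdGamma' hdzeta, hlin, hcomp,
    logDeriv_const_cpow_neg_half hpi, logDeriv_apply riemannZeta, ofReal_log Real.pi_pos.le]
  ring

/-- The real part of `-ζ'(z) / ζ(z)`, the quantity compared with sums over the zeros of `ξ`. -/
noncomputable def reNegLogDerivZeta (z : ℂ) : ℝ := (-deriv riemannZeta z / riemannZeta z).re

lemma reNegLogDerivZeta_eq {z : ℂ} (hz : 1 < z.re) :
    reNegLogDerivZeta z = (1 / (z - 1)).re - Real.log π / 2 + (digamma (z / 2 + 1)).re / 2 -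
      (logDeriv xi z).re := by
  rw [reNegLogDerivZeta, neg_deriv_riemannZeta_div hz, sub_re, add_re, sub_re, div_ofNat_re,
    div_ofNat_re, ofReal_re]

lemma re_LSeries_term_ofReal (f : ℕ → ℝ) (σ v : ℝ) (n : ℕ) :
    (LSeries.term (fun n ↦ (f n : ℂ)) (σ + v * I) n).re =
      if n = 0 then 0 else f n * (n : ℝ) ^ (-σ) * Real.cos (v * Real.log n) := by
  split_ifs with hn
  · rw [hn, LSeries.term_zero, zero_re]
  have hpow : ((n : ℂ) ^ ((σ : ℂ) + v * I))⁻¹ =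
      (((n : ℝ) ^ (-σ) : ℝ) : ℂ) * exp (((-(v * Real.log n) : ℝ) : ℂ) * I) := by
    rw [← cpow_neg, cpow_def_of_ne_zero (Nat.cast_ne_zero.2 hn),
      Real.rpow_def_of_pos (by positivity), ofReal_exp, ← exp_add, ← natCast_log]
    push_cast
    ring_nf
  rw [LSeries.term_of_ne_zero hn, div_eq_mul_inv, hpow, ← mul_assoc, ← ofReal_mul, re_ofReal_mul,
    exp_ofReal_mul_I_re, Real.cos_neg]

lemma hasSum_reNegLogDerivZeta {σ : ℝ} (hσ : 1 < σ) (v : ℝ) :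
    HasSum (fun n : ℕ ↦ Λ n * (n : ℝ) ^ (-σ) * Real.cos (v * Real.log n))
      (reNegLogDerivZeta (σ + v * I)) := by
  have hre : 1 < ((σ : ℂ) + v * I).re := by simpa using hσ
  have hsum := (ArithmeticFunction.LSeriesSummable_vonMangoldt hre).LSeriesHasSum
  rw [ArithmeticFunction.LSeries_vonMangoldt_eq_deriv_riemannZeta_div hre] at hsum
  refine (hasSum_re hsum).congr_fun fun n ↦ ?_
  rw [re_LSeries_term_ofReal]
  split_ifs with hn <;> simp [hn]

/-! ### Stechkin's difference -/

/-- The Poisson kernel `a / (a² + v²)` of the half-plane, without the factor `1 / π`: it is the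
real part of `1 / (a + iv)`. -/
noncomputable def poisson (a v : ℝ) : ℝ := a / (a ^ 2 + v ^ 2)

lemma poisson_nonneg {a : ℝ} (ha : 0 ≤ a) (v : ℝ) : 0 ≤ poisson a v := by
  unfold poisson; positivity

lemma re_one_div_eq_poisson (w : ℂ) : (1 / w).re = poisson w.re w.im := by
  rw [re_one_div, poisson, ← normSq_eq_norm_sq, normSq_apply, sq, sq]

lemma poisson_add_poisson {a b : ℝ} (ha : a ≠ 0) (hb : b ≠ 0) (v : ℝ) :
    poisson a v + poisson b v = (a + b) * (a * b + v ^ 2) /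
      ((a * b) ^ 2 + ((a + b) ^ 2 - 2 * (a * b)) * v ^ 2 + (v ^ 2) ^ 2) := by
  have hfactor : (a * b) ^ 2 + ((a + b) ^ 2 - 2 * (a * b)) * v ^ 2 + (v ^ 2) ^ 2 =
      (a ^ 2 + v ^ 2) * (b ^ 2 + v ^ 2) := by ring
  have ha' : a ^ 2 + v ^ 2 ≠ 0 := by positivity
  have hb' : b ^ 2 + v ^ 2 ≠ 0 := by positivity
  rw [hfactor, poisson, poisson]
  field_simp
  ring

/-- The point `1 + s + iv`; the real part is measured from the edge `Re z = 1` of the half-plane of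
absolute convergence. -/
noncomputable def edgePoint (s v : ℝ) : ℂ := ((1 + s : ℝ) : ℂ) + v * I

lemma edgePoint_re (s v : ℝ) : (edgePoint s v).re = 1 + s := by simp [edgePoint]

lemma edgePoint_im (s v : ℝ) : (edgePoint s v).im = v := by simp [edgePoint]

lemma hasSum_reNegLogDerivZeta_edgePoint {s : ℝ} (hs : 0 < s) (v : ℝ) :
    HasSum (fun n : ℕ ↦ Λ n * (n : ℝ) ^ (-(1 + s)) * Real.cos (v * Real.log n))
      (reNegLogDerivZeta (edgePoint s v)) :=
  hasSum_reNegLogDerivZeta (by linarith) v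

/-- Stechkin's difference `Re (-ζ'/ζ)(1 + s + iv) - κ Re (-ζ'/ζ)(1.62 + iv)` with `κ = 0.446`.
Subtracting a multiple of the second term keeps the Dirichlet coefficients and the contribution of
the zeros nonnegative while it reduces the main term `log (|v| / 2π) / 2` by the factor `1 - κ`. -/
noncomputable def stechkinDiff (s v : ℝ) : ℝ :=
  reNegLogDerivZeta (edgePoint s v) - 223 / 500 * reNegLogDerivZeta (edgePoint (31 / 50) v)

/-- The coefficient of `cos (v log n)` in the Dirichlet series of `stechkinDiff s v`. -/
noncomputable def stechkinCoeff (s : ℝ) (n : ℕ) : ℝ :=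
  Λ n * ((n : ℝ) ^ (-(1 + s)) - 223 / 500 * (n : ℝ) ^ (-(1 + 31 / 50 : ℝ)))

lemma stechkinCoeff_nonneg {s : ℝ} (hs : s ≤ 31 / 50) (n : ℕ) : 0 ≤ stechkinCoeff s n := by
  rcases n.eq_zero_or_pos with rfl | hn
  · simp [stechkinCoeff]
  refine mul_nonneg ArithmeticFunction.vonMangoldt_nonneg (sub_nonneg.2 ?_)
  calc 223 / 500 * (n : ℝ) ^ (-(1 + 31 / 50 : ℝ)) ≤ 1 * (n : ℝ) ^ (-(1 + 31 / 50 : ℝ)) := by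
        gcongr; norm_num
    _ ≤ (n : ℝ) ^ (-(1 + s)) := by
        rw [one_mul]
        exact Real.rpow_le_rpow_of_exponent_le (mod_cast hn) (by linarith)

lemma hasSum_stechkinDiff {s : ℝ} (hs : 0 < s) (v : ℝ) :
    HasSum (fun n : ℕ ↦ stechkinCoeff s n * Real.cos (v * Real.log n)) (stechkinDiff s v) := by
  have hsum := (hasSum_reNegLogDerivZeta_edgePoint hs v).sub
    ((hasSum_reNegLogDerivZeta_edgePoint (s := 31 / 50) (by norm_num) v).mul_left (223 / 500))
  refine hsum.congr_fun fun n ↦ ?_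
  rw [stechkinCoeff]
  ring

-- The coefficients of powers of `V` are compared one by one; here `t = s * (1 + s)`,
-- `w = β * (1 - β)` and `1.0044 = 0.62 * 1.62`.
lemma stechkin_poly_le {t w V : ℝ} (ht : 0 < t) (ht' : t ≤ 1 / 10) (hw : 0 < w) (hV : 0 ≤ V) :
    (1.0044 + w + V) * ((t + w) ^ 2 + (1 + 4 * t - 2 * (t + w)) * V + V ^ 2) ≤
      (t + w + V) * ((1.0044 + w) ^ 2 + (2.24 ^ 2 - 2 * (1.0044 + w)) * V + V ^ 2) := by
  have hcoeff0 : (1.0044 + w) * (t + w) ^ 2 ≤ (t + w) * (1.0044 + w) ^ 2 := by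
    have : (1.0044 + w) * (t + w) * (t + w) ≤ (1.0044 + w) * (t + w) * (1.0044 + w) := by
      gcongr; linarith
    linarith
  have hcoeff1 : (1.0044 + w) * (1 + 4 * t - 2 * (t + w)) + (t + w) ^ 2 ≤
      (t + w) * (2.24 ^ 2 - 2 * (1.0044 + w)) + (1.0044 + w) ^ 2 := by
    have : t * w ≤ 1 / 10 * w := by gcongr
    have : t * t ≤ 1 / 10 * t := by gcongr
    linarith
  have hcoeff2 : 1.0044 + w + (1 + 4 * t - 2 * (t + w)) ≤
      t + w + (2.24 ^ 2 - 2 * (1.0044 + w)) := by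
    norm_num; linarith
  have h1 := mul_le_mul_of_nonneg_right hcoeff1 hV
  have h2 := mul_le_mul_of_nonneg_right hcoeff2 (sq_nonneg V)
  linarith

lemma mul_stechkin_poly_le {s w V : ℝ} (hs : 0 < s) (hs' : s ≤ 7 / 100) (hw : 0 < w)
    (hw' : w ≤ 1 / 4) (hV : 0 ≤ V) :
    223 / 500 * 2.24 * ((1.0044 + w + V) * ((s * (1 + s) + w) ^ 2 +
      ((1 + 2 * s) ^ 2 - 2 * (s * (1 + s) + w)) * V + V ^ 2)) ≤
    (1 + 2 * s) * ((s * (1 + s) + w + V) * ((1.0044 + w) ^ 2 +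
      (2.24 ^ 2 - 2 * (1.0044 + w)) * V + V ^ 2)) := by
  have hsq : (1 + 2 * s) ^ 2 = 1 + 4 * (s * (1 + s)) := by ring
  have hpoly := stechkin_poly_le (t := s * (1 + s)) (by positivity) (by nlinarith) hw hV
  have hpos : 0 ≤ (2.24 : ℝ) ^ 2 - 2 * (1.0044 + w) := by norm_num; linarith
  rw [hsq]
  calc _ ≤ 223 / 500 * 2.24 * ((s * (1 + s) + w + V) * ((1.0044 + w) ^ 2 +
        (2.24 ^ 2 - 2 * (1.0044 + w)) * V + V ^ 2)) := by gcongr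
    _ ≤ _ := by gcongr; norm_num; linarith

-- Stechkin's inequality: it makes the contribution of each pair of zeros `β + iγ`, `1 - β + iγ`
-- to `stechkinDiff` nonpositive.
lemma mul_poisson_add_poisson_le {s β : ℝ} (hs : 0 < s) (hs' : s ≤ 7 / 100) (hβ : β ∈ Set.Ioo 0 1)
    (v : ℝ) :
    223 / 500 * (poisson (1 + 31 / 50 - β) v + poisson (1 + 31 / 50 - 1 + β) v) ≤
      poisson (1 + s - β) v + poisson (1 + s - 1 + β) v := by
  obtain ⟨hβ0, hβ1⟩ := hβ
  have hw : 0 < β * (1 - β) := mul_pos hβ0 (by linarith)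
  have hw' : β * (1 - β) ≤ 1 / 4 := by linarith [sq_nonneg (β - 1 / 2)]
  have hV : 0 ≤ v ^ 2 := sq_nonneg v
  rw [poisson_add_poisson (by linarith) (by linarith),
    poisson_add_poisson (by linarith) (by linarith),
    show (1 + 31 / 50 - β) * (1 + 31 / 50 - 1 + β) = 1.0044 + β * (1 - β) by ring,
    show (1 + s - β) * (1 + s - 1 + β) = s * (1 + s) + β * (1 - β) by ring,
    show (1 + 31 / 50 - β) + (1 + 31 / 50 - 1 + β) = 2.24 by ring,
    show (1 + s - β) + (1 + s - 1 + β) = 1 + 2 * s by ring, ← mul_div_assoc]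
  generalize β * (1 - β) = w at *
  generalize v ^ 2 = V at *
  have hcoeff1 : 0 ≤ 2.24 ^ 2 - 2 * (1.0044 + w) := by norm_num; linarith
  have hcoeff2 : 0 ≤ (1 + 2 * s) ^ 2 - 2 * (s * (1 + s) + w) := by nlinarith
  rw [div_le_div_iff₀ (by positivity) (by positivity)]
  linarith [mul_stechkin_poly_le hs hs' hw hw' hV]

/-! ### The contribution of the zeros to Stechkin's difference -/

/-- The contribution `Re (1 / (1 + s + iv - a))` of the point `a` to the real part of the
logarithmic derivative of `ξ` at `1 + s + iv`. -/
noncomputable def zeroPoisson (s v : ℝ) (a : ℂ) : ℝ := poisson (1 + s - a.re) (v - a.im)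

/-- The argument `(1 + s + iv) / 2 + 1` of the digamma term in `-ζ'/ζ` at `1 + s + iv`. -/
noncomputable def gammaPoint (s v : ℝ) : ℂ := edgePoint s v / 2 + 1

lemma re_one_div_edgePoint_sub (s v : ℝ) (a : ℂ) :
    (1 / (edgePoint s v - a)).re = zeroPoisson s v a := by
  rw [re_one_div_eq_poisson, sub_re, sub_im, edgePoint_re, edgePoint_im, zeroPoisson]

lemma summable_xiOrder_mul_zeroPoisson (s v : ℝ) :
    Summable fun a : ℂ ↦ (xiOrder a : ℝ) * zeroPoisson s v a := by
  simpa only [re_one_div_edgePoint_sub] using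
    summable_xiOrder_mul_re_one_div_sub (edgePoint s v)

lemma xiOrder_mul_zeroPoisson_nonneg {s : ℝ} (hs : 0 ≤ s) (v : ℝ) (a : ℂ) :
    0 ≤ (xiOrder a : ℝ) * zeroPoisson s v a := by
  rw [← re_one_div_edgePoint_sub]
  exact xiOrder_mul_re_one_div_sub_nonneg (by rw [edgePoint_re]; linarith) a

lemma reNegLogDerivZeta_edgePoint_eq {s : ℝ} (hs : 0 < s) (v : ℝ) :
    reNegLogDerivZeta (edgePoint s v) = poisson s v - Real.log π / 2 +
      (gammaPoint s v).digamma.re / 2 -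
      ∑' a, (xiOrder a : ℝ) * zeroPoisson s v a := by
  have hre : 1 < (edgePoint s v).re := by rw [edgePoint_re]; linarith
  rw [reNegLogDerivZeta_eq hre, re_logDeriv_xi_eq_tsum (xi_ne_zero_of_one_le_re hre.le),
    re_one_div_eq_poisson, sub_re, sub_im, edgePoint_re, edgePoint_im, one_re, one_im, sub_zero,
    add_sub_cancel_left, gammaPoint]
  simp only [re_one_div_edgePoint_sub]

/-- The contribution of the point `a` to `-stechkinDiff s v`. -/
noncomputable def stechkinTerm (s v : ℝ) (a : ℂ) : ℝ :=
  zeroPoisson s v a - 223 / 500 * zeroPoisson (31 / 50) v a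

lemma hasSum_stechkinTerm (s v : ℝ) :
    HasSum (fun a : ℂ ↦ (xiOrder a : ℝ) * stechkinTerm s v a)
      (∑' a, (xiOrder a : ℝ) * zeroPoisson s v a -
        223 / 500 * ∑' a, (xiOrder a : ℝ) * zeroPoisson (31 / 50) v a) := by
  refine ((summable_xiOrder_mul_zeroPoisson s v).hasSum.sub
    ((summable_xiOrder_mul_zeroPoisson (31 / 50) v).hasSum.mul_left _)).congr_fun fun a ↦ ?_
  rw [stechkinTerm]
  ring

lemma stechkinDiff_eq {s : ℝ} (hs : 0 < s) (v : ℝ) :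
    stechkinDiff s v = poisson s v - 223 / 500 * poisson (31 / 50) v - 277 / 1000 * Real.log π +
      ((gammaPoint s v).digamma.re / 2 -
        223 / 1000 * (gammaPoint (31 / 50) v).digamma.re) -
      ∑' a, (xiOrder a : ℝ) * stechkinTerm s v a := by
  rw [stechkinDiff, (hasSum_stechkinTerm s v).tsum_eq, reNegLogDerivZeta_edgePoint_eq hs,
    reNegLogDerivZeta_edgePoint_eq (by norm_num)]
  ring

/-- The joint contribution to `-stechkinDiff s v` of `a` and of its reflection `1 - conj a` in the
critical line. -/
noncomputable def stechkinPair (s v : ℝ) (a : ℂ) : ℝ :=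
  stechkinTerm s v a + stechkinTerm s v (1 - conj a)

lemma hasSum_stechkinPair (s v : ℝ) :
    HasSum (fun a : ℂ ↦ (xiOrder a : ℝ) * (stechkinPair s v a / 2))
      (∑' a, (xiOrder a : ℝ) * stechkinTerm s v a) := by
  have hsum := (hasSum_stechkinTerm s v).summable
  have hrefl := (summable_xiOrder_mul_one_sub_conj hsum).hasSum
  rw [tsum_xiOrder_mul_one_sub_conj] at hrefl
  have hpair := (hsum.hasSum.add hrefl).div_const 2
  rw [add_self_div_two] at hpair
  refine hpair.congr_fun fun a ↦ ?_
  rw [stechkinPair]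
  ring

lemma stechkinPair_nonneg {s : ℝ} (hs : 0 < s) (hs' : s ≤ 7 / 100) (v : ℝ) {a : ℂ}
    (ha : xi a = 0) : 0 ≤ stechkinPair s v a := by
  have h := mul_poisson_add_poisson_le hs hs' (re_mem_Ioo_of_xi_eq_zero ha) (v - a.im)
  simp only [stechkinPair, stechkinTerm, zeroPoisson, sub_re, one_re, conj_re, sub_im, one_im,
    conj_im, zero_sub, neg_neg, ← sub_add]
  linarith

lemma xiOrder_mul_stechkinPair_nonneg {s : ℝ} (hs : 0 < s) (hs' : s ≤ 7 / 100) (v : ℝ) (a : ℂ) :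
    0 ≤ (xiOrder a : ℝ) * (stechkinPair s v a / 2) := by
  by_cases ha : xi a = 0
  · have := stechkinPair_nonneg hs hs' v ha
    positivity
  · simp [xiOrder_eq_zero ha]

lemma tsum_stechkinTerm_nonneg {s : ℝ} (hs : 0 < s) (hs' : s ≤ 7 / 100) (v : ℝ) :
    0 ≤ ∑' a, (xiOrder a : ℝ) * stechkinTerm s v a :=
  (hasSum_stechkinPair s v).nonneg (xiOrder_mul_stechkinPair_nonneg hs hs' v)

lemma poisson_zero_right (a : ℝ) : poisson a 0 = 1 / a := by
  rw [poisson, sq, zero_pow two_ne_zero, add_zero, div_self_mul_self', one_div]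

lemma one_div_sub_le_stechkinPair {s : ℝ} (hs : 0 < s) (hs' : s ≤ 1) {a : ℂ}
    (ha : xi a = 0) : 1 / (s + (1 - a.re)) - s ≤ stechkinPair s a.im a := by
  obtain ⟨hre0, hre1⟩ := re_mem_Ioo_of_xi_eq_zero ha
  simp only [stechkinPair, stechkinTerm, zeroPoisson, sub_re, one_re, conj_re, sub_im, one_im,
    conj_im, zero_sub, neg_neg, sub_self, poisson_zero_right]
  have hw : 0 < a.re * (1 - a.re) := mul_pos hre0 (by linarith)
  have hsum : 1 / (1 + 31 / 50 - a.re) + 1 / (1 + 31 / 50 - (1 - a.re)) ≤ 2.24 := by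
    rw [div_add_div _ _ (by linarith) (by linarith), div_le_iff₀ (by nlinarith)]
    linarith
  have hrefl : 1 - s ≤ 1 / (1 + s - (1 - a.re)) := by
    rw [le_div_iff₀ (by linarith)]
    nlinarith
  rw [← add_sub_assoc, add_comm s 1]
  linarith

lemma one_div_sub_le_tsum_stechkinTerm {s : ℝ} (hs : 0 < s) (hs' : s ≤ 7 / 100) {a : ℂ}
    (ha : xi a = 0) (hre : 1 / 2 < a.re) :
    1 / (s + (1 - a.re)) - s ≤ ∑' b, (xiOrder b : ℝ) * stechkinTerm s a.im b := by
  have hne : a ≠ 1 - conj a := by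
    intro h
    have hre' : a.re = 1 - a.re := by simpa using congrArg re h
    linarith
  have hpair : ∑ b ∈ {a, 1 - conj a}, (xiOrder b : ℝ) * (stechkinPair s a.im b / 2) =
      xiOrder a * stechkinPair s a.im a := by
    rw [Finset.sum_pair hne, xiOrder_one_sub, xiOrder_conj, stechkinPair, stechkinPair, map_sub,
      map_one, conj_conj, sub_sub_cancel]
    ring
  have hone : (1 : ℝ) ≤ xiOrder a := mod_cast one_le_xiOrder ha
  calc 1 / (s + (1 - a.re)) - s ≤ stechkinPair s a.im a :=
        one_div_sub_le_stechkinPair hs (by linarith) ha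
    _ ≤ xiOrder a * stechkinPair s a.im a :=
        le_mul_of_one_le_left (stechkinPair_nonneg hs hs' _ ha) hone
    _ = ∑ b ∈ {a, 1 - conj a}, (xiOrder b : ℝ) * (stechkinPair s a.im b / 2) := hpair.symm
    _ ≤ ∑' b, (xiOrder b : ℝ) * stechkinTerm s a.im b :=
        sum_le_hasSum _ (fun b _ ↦ xiOrder_mul_stechkinPair_nonneg hs hs' _ b)
          (hasSum_stechkinPair s a.im)

/-! ### Numerical bounds for Stechkin's difference -/

lemma le_log_two_mul_pi : 1.8378 ≤ Real.log (2 * π) := by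
  have hle : Real.log (5 ^ 2 / 2 ^ 2 * (6.283 / 6.25)) ≤ Real.log (2 * π) :=
    Real.log_le_log (by norm_num) (by linarith [Real.pi_gt_d6])
  rw [Real.log_mul (by norm_num) (by norm_num), Real.log_div (by norm_num) (by norm_num),
    Real.log_pow, Real.log_pow] at hle
  have := Real.one_sub_inv_le_log_of_pos (x := 6.283 / 6.25) (by norm_num)
  have := Real.log_two_lt_d9
  have := Real.log_five_gt_d9
  norm_num at *
  linarith

lemma le_log_pi : 1.1446 ≤ Real.log π := by
  have h := le_log_two_mul_pi
  rw [Real.log_mul two_ne_zero Real.pi_ne_zero] at h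
  linarith [Real.log_two_lt_d9]

lemma le_log_fourteen : 2.66 ≤ Real.log 14.4 := by
  rw [show (14.4 : ℝ) = 2 ^ 3 * 3 ^ 2 / 5 by norm_num,
    Real.log_div (by norm_num) (by norm_num), Real.log_mul (by norm_num) (by norm_num),
    Real.log_pow, Real.log_pow]
  have := Real.log_two_gt_d9
  have := Real.log_three_gt_d9
  have := Real.log_five_lt_d9
  norm_num
  linarith

lemma log_half_sub_log_pi {V : ℝ} (hV : V ≠ 0) :
    Real.log (V / 2) - Real.log π = Real.log (V / (2 * π)) := by
  rw [← Real.log_div (by positivity) Real.pi_ne_zero, div_div]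

lemma gammaPoint_re (s v : ℝ) : (gammaPoint s v).re = 3 / 2 + s / 2 := by
  rw [gammaPoint, add_re, div_ofNat_re, edgePoint_re, one_re]
  ring

lemma gammaPoint_im (s v : ℝ) : (gammaPoint s v).im = v / 2 := by
  rw [gammaPoint, add_im, div_ofNat_im, edgePoint_im, one_im, add_zero]

lemma gammaPoint_zero_right (s : ℝ) : gammaPoint s 0 = ((3 / 2 + s / 2 : ℝ) : ℂ) :=
  Complex.ext (by simp [gammaPoint_re]) (by simp [gammaPoint_im])

lemma sq_norm_gammaPoint (s v : ℝ) :
    ‖gammaPoint s v‖ ^ 2 = (3 / 2 + s / 2) ^ 2 + (v / 2) ^ 2 := by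
  rw [← normSq_eq_norm_sq, normSq_apply, gammaPoint_re, gammaPoint_im, sq, sq]

lemma norm_gammaPoint_mono {s s' : ℝ} (hs : 0 ≤ s) (hss' : s ≤ s') (v : ℝ) :
    ‖gammaPoint s v‖ ≤ ‖gammaPoint s' v‖ := by
  refine (sq_le_sq₀ (norm_nonneg _) (norm_nonneg _)).1 ?_
  rw [sq_norm_gammaPoint, sq_norm_gammaPoint]
  gcongr

lemma norm_gammaPoint_pos {s : ℝ} (hs : 0 ≤ s) (v : ℝ) : 0 < ‖gammaPoint s v‖ := by
  refine lt_of_lt_of_le ?_ (re_le_norm _)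
  rw [gammaPoint_re]
  linarith

lemma log_norm_gammaPoint_le_of_abs_le {v V : ℝ} (hV : 1500 ≤ V) (hv : |v| ≤ 100) :
    Real.log ‖gammaPoint (31 / 50) v‖ ≤ Real.log (V / 2) - 2.66 := by
  have hnorm : ‖gammaPoint (31 / 50) v‖ ≤ 52 := by
    refine (sq_le_sq₀ (norm_nonneg _) (by norm_num)).1 ?_
    rw [sq_norm_gammaPoint]
    have : v ^ 2 ≤ 100 ^ 2 := sq_le_sq' (neg_le_of_abs_le hv) (le_of_abs_le hv)
    linarith
  have hlog : Real.log ‖gammaPoint (31 / 50) v‖ ≤ Real.log (V / 2 / 14.4) :=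
    Real.log_le_log (norm_gammaPoint_pos (by norm_num) v)
      (hnorm.trans (by rw [le_div_iff₀ (by norm_num)]; linarith))
  rw [Real.log_div (by linarith) (by norm_num)] at hlog
  linarith [le_log_fourteen]

lemma log_norm_gammaPoint_le_of_lt_abs {v V : ℝ} (hv : 100 < |v|) (hvV : |v| ≤ V) :
    Real.log ‖gammaPoint (31 / 50) v‖ ≤ Real.log (V / 2) + 0.001 := by
  have hnorm : ‖gammaPoint (31 / 50) v‖ ≤ |v| / 2 * 1.001 := by
    refine (sq_le_sq₀ (norm_nonneg _) (by positivity)).1 ?_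
    rw [sq_norm_gammaPoint, mul_pow, div_pow, div_pow, sq_abs]
    have : 100 ^ 2 ≤ v ^ 2 := by rw [← sq_abs v]; gcongr
    linarith
  have hlog : Real.log ‖gammaPoint (31 / 50) v‖ ≤ Real.log (V / 2 * 1.001) :=
    Real.log_le_log (norm_gammaPoint_pos (by norm_num) v) (by linarith)
  rw [Real.log_mul (by linarith) (by norm_num)] at hlog
  linarith [Real.log_le_sub_one_of_pos (x := 1.001) (by norm_num)]

lemma abs_re_digamma_gammaPoint_sub_le_one {s : ℝ} (hs : 0 ≤ s) (v : ℝ) :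
    |(gammaPoint s v).digamma.re - Real.log ‖gammaPoint s v‖| ≤ 1 :=
  abs_re_digamma_sub_log_norm_le_one (by rw [gammaPoint_re]; linarith)

lemma abs_re_digamma_gammaPoint_sub_le_of_lt_abs {s v : ℝ} (hs : 0 ≤ s) (hv : 100 < |v|) :
    |(gammaPoint s v).digamma.re - Real.log ‖gammaPoint s v‖| ≤ 1 / 30 := by
  have him : |(gammaPoint s v).im| = |v| / 2 := by rw [gammaPoint_im, abs_div, abs_two]
  refine (abs_re_digamma_sub_log_norm_le_div_im (by rw [gammaPoint_re]; linarith)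
    (by rw [him]; linarith)).trans ?_
  rw [him, div_le_iff₀ (by linarith)]
  linarith

-- For `|v| ≤ 100` the crude bound for the digamma function loses `1`, which the gap between
-- `|v|` and `V` makes up for.
lemma re_digamma_gammaPoint_sub_le {s v V : ℝ} (hs : 0 ≤ s) (hs' : s ≤ 31 / 50) (hV : 1500 ≤ V)
    (hv : |v| ≤ V) :
    (gammaPoint s v).digamma.re / 2 - 223 / 1000 * (gammaPoint (31 / 50) v).digamma.re ≤
      277 / 1000 * Real.log (V / 2) + 0.025 := by
  have hlog : Real.log ‖gammaPoint s v‖ ≤ Real.log ‖gammaPoint (31 / 50) v‖ :=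
    Real.log_le_log (norm_gammaPoint_pos hs v) (norm_gammaPoint_mono hs hs' v)
  rcases le_or_gt |v| 100 with h | h
  · have h1 := abs_le.1 (abs_re_digamma_gammaPoint_sub_le_one hs v)
    have h2 := abs_le.1 (abs_re_digamma_gammaPoint_sub_le_one (s := 31 / 50) (by norm_num) v)
    linarith [log_norm_gammaPoint_le_of_abs_le hV h]
  · have h1 := abs_le.1 (abs_re_digamma_gammaPoint_sub_le_of_lt_abs hs h)
    have h2 := abs_le.1
      (abs_re_digamma_gammaPoint_sub_le_of_lt_abs (s := 31 / 50) (by norm_num) h)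
    linarith [log_norm_gammaPoint_le_of_lt_abs h hv]

lemma re_digamma_gammaPoint_le {s v V : ℝ} (hs : 0 ≤ s) (hs' : s ≤ 31 / 50) (hV : 1500 ≤ V)
    (hv : |v| ≤ V) :
    (gammaPoint s v).digamma.re / 2 ≤ Real.log (V / 2) / 2 + 0.02 := by
  have hlog : Real.log ‖gammaPoint s v‖ ≤ Real.log ‖gammaPoint (31 / 50) v‖ :=
    Real.log_le_log (norm_gammaPoint_pos hs v) (norm_gammaPoint_mono hs hs' v)
  rcases le_or_gt |v| 100 with h | h
  · have h1 := abs_le.1 (abs_re_digamma_gammaPoint_sub_le_one hs v)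
    linarith [log_norm_gammaPoint_le_of_abs_le hV h]
  · have h1 := abs_le.1 (abs_re_digamma_gammaPoint_sub_le_of_lt_abs hs h)
    linarith [log_norm_gammaPoint_le_of_lt_abs h hv]

lemma stechkinDiff_le {s v V : ℝ} (hs : 0 < s) (hs' : s ≤ 7 / 100) (hV : 1500 ≤ V)
    (hv : |v| ≤ V) :
    stechkinDiff s v ≤ poisson s v + 277 / 1000 * Real.log (V / (2 * π)) + 0.025 := by
  rw [stechkinDiff_eq hs, ← log_half_sub_log_pi (by linarith)]
  have hdigamma := re_digamma_gammaPoint_sub_le hs.le (by linarith) hV hv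
  have hzeros := tsum_stechkinTerm_nonneg hs hs' v
  have hpole := poisson_nonneg (a := 31 / 50) (by norm_num) v
  linarith

lemma stechkinDiff_im_le {s V : ℝ} (hs : 0 < s) (hs' : s ≤ 7 / 100) (hV : 1500 ≤ V) {a : ℂ}
    (ha : xi a = 0) (hre : 1 / 2 < a.re) (hv : |a.im| ≤ V) :
    stechkinDiff s a.im ≤ poisson s a.im + 277 / 1000 * Real.log (V / (2 * π)) + 0.025 -
      1 / (s + (1 - a.re)) + s := by
  rw [stechkinDiff_eq hs, ← log_half_sub_log_pi (by linarith)]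
  have hdigamma := re_digamma_gammaPoint_sub_le hs.le (by linarith) hV hv
  have hzeros := one_div_sub_le_tsum_stechkinTerm hs hs' ha hre
  have hpole := poisson_nonneg (a := 31 / 50) (by norm_num) a.im
  linarith

lemma re_digamma_gammaPoint_zero_le {s : ℝ} (hs : 0 < s) (hs' : s ≤ 7 / 100) :
    (gammaPoint s 0).digamma.re ≤ 0.2792 := by
  rw [gammaPoint_zero_right]
  refine (re_digamma_ofReal_le_log_add_one_sub (by linarith)).trans ?_
  have hlog : Real.log (3 / 2 + s / 2 + 1) ≤ Real.log (5 / 2 * 1.014) :=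
    Real.log_le_log (by linarith) (by linarith)
  rw [Real.log_mul (by norm_num) (by norm_num), Real.log_div (by norm_num) (by norm_num)] at hlog
  have hinv : (1 : ℝ) / 1.535 ≤ 1 / (3 / 2 + s / 2) :=
    one_div_le_one_div_of_le (by linarith) (by linarith)
  have := Real.log_le_sub_one_of_pos (x := 1.014) (by norm_num)
  have := Real.log_two_gt_d9
  have := Real.log_five_lt_d9
  norm_num at *
  linarith

lemma le_re_digamma_gammaPoint_zero : 0.0352 ≤ (gammaPoint (31 / 50) 0).digamma.re := by
  rw [gammaPoint_zero_right]
  refine le_trans ?_ (log_sub_one_div_le_re_digamma (by norm_num))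
  have hlog : Real.log (3 ^ 2 / 5) ≤ Real.log (3 / 2 + 31 / 50 / 2) :=
    Real.log_le_log (by norm_num) (by norm_num)
  rw [Real.log_div (by norm_num) (by norm_num), Real.log_pow] at hlog
  have := Real.log_three_gt_d9
  have := Real.log_five_lt_d9
  norm_num at *
  linarith

lemma stechkinDiff_zero_right_le {s : ℝ} (hs : 0 < s) (hs' : s ≤ 7 / 100) :
    stechkinDiff s 0 ≤ 1 / s - 0.9 := by
  rw [stechkinDiff_eq hs, poisson_zero_right, poisson_zero_right]
  linarith [re_digamma_gammaPoint_zero_le hs hs', le_re_digamma_gammaPoint_zero,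
    tsum_stechkinTerm_nonneg hs hs' 0, le_log_pi]

lemma reNegLogDerivZeta_edgePoint_zero_le {s : ℝ} (hs : 0 < s) (hs' : s ≤ 7 / 100) :
    reNegLogDerivZeta (edgePoint s 0) ≤ 1 / s - 0.43 := by
  rw [reNegLogDerivZeta_edgePoint_eq hs, poisson_zero_right]
  have hzeros : 0 ≤ ∑' a, (xiOrder a : ℝ) * zeroPoisson s 0 a :=
    tsum_nonneg (xiOrder_mul_zeroPoisson_nonneg hs.le 0)
  linarith [re_digamma_gammaPoint_zero_le hs hs', le_log_pi]

lemma neg_reNegLogDerivZeta_edgePoint_le {s : ℝ} (hs : 0 < s) (v : ℝ) :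
    -reNegLogDerivZeta (edgePoint s v) ≤ reNegLogDerivZeta (edgePoint s 0) := by
  refine hasSum_le (fun n ↦ ?_) (hasSum_reNegLogDerivZeta_edgePoint hs v).neg
    (hasSum_reNegLogDerivZeta_edgePoint hs 0)
  have hcoeff : 0 ≤ Λ n * (n : ℝ) ^ (-(1 + s)) :=
    mul_nonneg ArithmeticFunction.vonMangoldt_nonneg (by positivity)
  rw [zero_mul, Real.cos_zero, ← mul_neg]
  exact mul_le_mul_of_nonneg_left (neg_le.1 (Real.neg_one_le_cos _)) hcoeff

lemma tsum_zeroPoisson_le {s v V : ℝ} (hs : 0 < s) (hs' : s ≤ 7 / 100) (hV : 1500 ≤ V)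
    (hv : |v| ≤ V) :
    ∑' a, (xiOrder a : ℝ) * zeroPoisson s v a ≤
      poisson s v + 1 / s + Real.log (V / (2 * π)) / 2 - 0.41 := by
  rw [← log_half_sub_log_pi (by linarith)]
  linarith [reNegLogDerivZeta_edgePoint_eq hs v, neg_reNegLogDerivZeta_edgePoint_le hs v,
    reNegLogDerivZeta_edgePoint_zero_le hs hs', re_digamma_gammaPoint_le hs.le (by linarith) hV hv]

/-! ### Zeros of small height and the number of zeros -/

lemma reNegLogDerivZeta_edgePoint_zero_nonneg {s : ℝ} (hs : 0 < s) :
    0 ≤ reNegLogDerivZeta (edgePoint s 0) := by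
  refine (hasSum_reNegLogDerivZeta_edgePoint hs 0).nonneg fun n ↦ ?_
  rw [zero_mul, Real.cos_zero, mul_one]
  exact mul_nonneg ArithmeticFunction.vonMangoldt_nonneg (by positivity)

lemma log_two_div_eight_le_reNegLogDerivZeta :
    Real.log 2 / 8 ≤ reNegLogDerivZeta (edgePoint 2 0) := by
  have hle := sum_le_hasSum {2} (fun n _ ↦ ?_)
    (hasSum_reNegLogDerivZeta_edgePoint (s := 2) (by norm_num) 0)
  · refine le_of_eq_of_le ?_ hle
    rw [Finset.sum_singleton, ArithmeticFunction.vonMangoldt_apply_prime Nat.prime_two, zero_mul,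
      Real.cos_zero, mul_one, show (-(1 + 2) : ℝ) = ((-3 : ℤ) : ℝ) by norm_num, Real.rpow_intCast]
    norm_num
    ring
  · rw [zero_mul, Real.cos_zero, mul_one]
    exact mul_nonneg ArithmeticFunction.vonMangoldt_nonneg (by positivity)

lemma re_digamma_gammaPoint_two_zero_le : (gammaPoint 2 0).digamma.re ≤ 0.8629 := by
  rw [gammaPoint_zero_right]
  refine (re_digamma_ofReal_le_log_add_one_sub (by norm_num)).trans ?_
  have hlog : Real.log ((3 / 2 + 2 / 2 + 1) ^ 2) ≤ Real.log (5 ^ 2 / 2) :=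
    Real.log_le_log (by norm_num) (by norm_num)
  rw [Real.log_div (by norm_num) (by norm_num), Real.log_pow, Real.log_pow] at hlog
  have := Real.log_two_gt_d9
  have := Real.log_five_lt_d9
  norm_num at *
  linarith

-- The sum over the zeros at the point `3` is so small that it leaves no room for a zero close to
-- the real axis.
lemma le_abs_im_of_xi_eq_zero {a : ℂ} (ha : xi a = 0) : 1.3 ≤ |a.im| := by
  by_contra! him
  obtain ⟨hre0, hre1⟩ := re_mem_Ioo_of_xi_eq_zero ha
  have hzeta := log_two_div_eight_le_reNegLogDerivZeta
  rw [reNegLogDerivZeta_edgePoint_eq (by norm_num), poisson_zero_right] at hzeta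
  have hterm : 0.28 ≤ zeroPoisson 2 0 a := by
    have him2 : a.im ^ 2 ≤ 1.69 := by rw [← sq_abs]; nlinarith [abs_nonneg a.im]
    rw [zeroPoisson, poisson, le_div_iff₀ (by nlinarith)]
    nlinarith
  have hsum : (xiOrder a : ℝ) * zeroPoisson 2 0 a ≤ ∑' b, (xiOrder b : ℝ) * zeroPoisson 2 0 b :=
    (summable_xiOrder_mul_zeroPoisson 2 0).le_tsum a
      fun b _ ↦ xiOrder_mul_zeroPoisson_nonneg (by norm_num) 0 b
  have hone : (1 : ℝ) ≤ xiOrder a := mod_cast one_le_xiOrder ha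
  have hmul : zeroPoisson 2 0 a ≤ xiOrder a * zeroPoisson 2 0 a :=
    le_mul_of_one_le_left (by linarith) hone
  linarith [le_log_pi, Real.log_two_gt_d9, re_digamma_gammaPoint_two_zero_le]

lemma poisson_im_le_mul_zeroPoisson {T : ℝ} (hT : 0 < T) {a : ℂ} (ha : xi a = 0) :
    poisson T a.im ≤ (1 + 1 / T) ^ 2 * zeroPoisson T 0 a := by
  obtain ⟨hre0, hre1⟩ := re_mem_Ioo_of_xi_eq_zero ha
  have hzero : T / ((T + 1) ^ 2 + a.im ^ 2) ≤ zeroPoisson T 0 a := by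
    have hpos : 0 < 1 + T - a.re := by linarith
    rw [zeroPoisson, poisson, zero_sub, neg_sq]
    gcongr <;> linarith
  have hscale : (T + 1) ^ 2 + a.im ^ 2 ≤ (1 + 1 / T) ^ 2 * (T ^ 2 + a.im ^ 2) := by
    have hsq : (1 + 1 / T) ^ 2 * T ^ 2 = (T + 1) ^ 2 := by field_simp
    have hone : 1 ≤ (1 + 1 / T) ^ 2 := one_le_pow₀ (by linarith [one_div_pos.2 hT])
    linarith [le_mul_of_one_le_left (sq_nonneg a.im) hone]
  calc poisson T a.im ≤ (1 + 1 / T) ^ 2 * (T / ((T + 1) ^ 2 + a.im ^ 2)) := by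
        rw [poisson, ← mul_div_assoc, div_le_div_iff₀ (by positivity) (by positivity)]
        linarith [mul_le_mul_of_nonneg_left hscale hT.le]
    _ ≤ (1 + 1 / T) ^ 2 * zeroPoisson T 0 a := by gcongr

lemma xiOrder_mul_poisson_im_le {T : ℝ} (hT : 0 < T) (a : ℂ) :
    (xiOrder a : ℝ) * poisson T a.im ≤
      (1 + 1 / T) ^ 2 * ((xiOrder a : ℝ) * zeroPoisson T 0 a) := by
  by_cases ha : xi a = 0
  · rw [mul_left_comm]
    gcongr
    exact poisson_im_le_mul_zeroPoisson hT ha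
  · simp [xiOrder_eq_zero ha]

lemma summable_xiOrder_mul_poisson_im {T : ℝ} (hT : 0 < T) :
    Summable fun a : ℂ ↦ (xiOrder a : ℝ) * poisson T a.im :=
  .of_nonneg_of_le (fun _ ↦ mul_nonneg (Nat.cast_nonneg _) (poisson_nonneg hT.le _))
    (xiOrder_mul_poisson_im_le hT) ((summable_xiOrder_mul_zeroPoisson T 0).mul_left _)

lemma re_digamma_gammaPoint_zero_le_log_add {T : ℝ} (hT : 0 < T) :
    (gammaPoint T 0).digamma.re ≤ Real.log (T / 2) + 5 / T := by
  rw [gammaPoint_zero_right]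
  refine (re_digamma_ofReal_le_log_add_one_sub (by positivity)).trans ?_
  have hinv : 0 ≤ 1 / (3 / 2 + T / 2) := by positivity
  have hfactor : 3 / 2 + T / 2 + 1 = T / 2 * (1 + 5 / T) := by field_simp; ring
  rw [hfactor, Real.log_mul (by positivity) (by positivity)]
  linarith [Real.log_le_sub_one_of_pos (x := 1 + 5 / T) (by positivity)]

lemma tsum_zeroPoisson_zero_le {T : ℝ} (hT : 0 < T) :
    ∑' a, (xiOrder a : ℝ) * zeroPoisson T 0 a ≤ Real.log (T / (2 * π)) / 2 + 3.5 / T := by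
  have hzeta := reNegLogDerivZeta_edgePoint_zero_nonneg hT
  rw [reNegLogDerivZeta_edgePoint_eq hT, poisson_zero_right] at hzeta
  have hdigamma := re_digamma_gammaPoint_zero_le_log_add hT
  have hinv : 1 / T + 5 / T / 2 = 3.5 / T := by ring
  rw [← log_half_sub_log_pi hT.ne']
  linarith

lemma log_le_div_exp_one {y : ℝ} (hy : 0 < y) : Real.log y ≤ y / Real.exp 1 := by
  have h := Real.log_le_sub_one_of_pos (x := y / Real.exp 1) (by positivity)
  rw [Real.log_div hy.ne' (Real.exp_ne_zero _), Real.log_exp] at h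
  linarith

lemma log_div_two_mul_pi_le {T : ℝ} (hT : 0 < T) : Real.log (T / (2 * π)) ≤ 0.059 * T := by
  refine (log_le_div_exp_one (by positivity)).trans ?_
  rw [div_div, div_le_iff₀ (by positivity)]
  have hprod : 3.14 * 2.71 ≤ π * Real.exp 1 :=
    mul_le_mul (by linarith [Real.pi_gt_d6]) (by linarith [Real.exp_one_gt_d9]) (by norm_num)
      Real.pi_pos.le
  nlinarith

lemma tsum_xiOrder_mul_poisson_im_le {T : ℝ} (hT : 60 ≤ T) :
    ∑' a : ℂ, (xiOrder a : ℝ) * poisson T a.im ≤ Real.log (T / (2 * π)) / 2 + 0.13 := by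
  have hT0 : 0 < T := by linarith
  have hu : 1 / T ≤ 1 / 60 := one_div_le_one_div_of_le (by norm_num) hT
  have : 0 ≤ Real.log (T / (2 * π)) :=
    Real.log_nonneg ((le_div_iff₀ (by positivity)).2 (by linarith [Real.pi_lt_d2]))
  have hlog : Real.log (T / (2 * π)) * (1 / T) ≤ 0.059 := by
    rw [mul_one_div, div_le_iff₀ hT0]
    exact log_div_two_mul_pi_le hT0
  calc ∑' a : ℂ, (xiOrder a : ℝ) * poisson T a.im
      ≤ (1 + 1 / T) ^ 2 * ∑' a, (xiOrder a : ℝ) * zeroPoisson T 0 a := by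
        rw [← tsum_mul_left]
        exact (summable_xiOrder_mul_poisson_im hT0).tsum_le_tsum (xiOrder_mul_poisson_im_le hT0)
          ((summable_xiOrder_mul_zeroPoisson T 0).mul_left _)
    _ ≤ (1 + 2.02 * (1 / T)) * (Real.log (T / (2 * π)) / 2 + 3.5 * (1 / T)) := by
        rw [mul_one_div 3.5]
        gcongr
        · exact tsum_nonneg (xiOrder_mul_zeroPoisson_nonneg hT0.le 0)
        · nlinarith [one_div_pos.2 hT0]
        · exact tsum_zeroPoisson_zero_le hT0
    _ ≤ Real.log (T / (2 * π)) / 2 + 0.13 := by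
        nlinarith [mul_le_mul hu hu (one_div_pos.2 hT0).le (by norm_num)]

/-! ### A zero-free region and a density bound -/

lemma poisson_le_div_sq {s v : ℝ} (hs : 0 ≤ s) (hv : v ≠ 0) : poisson s v ≤ s / v ^ 2 := by
  unfold poisson
  gcongr
  exact le_add_of_nonneg_left (sq_nonneg s)

lemma im_ne_zero_of_xi_eq_zero {a : ℂ} (ha : xi a = 0) : a.im ≠ 0 :=
  abs_pos.1 (lt_of_lt_of_le (by norm_num) (le_abs_im_of_xi_eq_zero ha))

lemma le_sq_im_of_xi_eq_zero {a : ℂ} (ha : xi a = 0) : 1.69 ≤ a.im ^ 2 := by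
  rw [← sq_abs]
  nlinarith [le_abs_im_of_xi_eq_zero ha]

lemma stechkinDiff_trig_nonneg {s : ℝ} (hs : 0 < s) (hs' : s ≤ 31 / 50) (v : ℝ) :
    0 ≤ 5 * stechkinDiff s 0 + 8 * stechkinDiff s v + 4 * stechkinDiff s (2 * v) +
      stechkinDiff s (3 * v) := by
  have hsum := ((((hasSum_stechkinDiff hs 0).mul_left 5).add
    ((hasSum_stechkinDiff hs v).mul_left 8)).add
      ((hasSum_stechkinDiff hs (2 * v)).mul_left 4)).add (hasSum_stechkinDiff hs (3 * v))
  refine hsum.nonneg fun n ↦ ?_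
  have hcoeff := stechkinCoeff_nonneg hs' n
  have hcos := Real.neg_one_le_cos (v * Real.log n)
  calc 0 ≤ stechkinCoeff s n *
        ((1 + Real.cos (v * Real.log n)) * (1 + 2 * Real.cos (v * Real.log n)) ^ 2) :=
        mul_nonneg hcoeff (mul_nonneg (by linarith) (sq_nonneg _))
    _ = _ := by
        rw [zero_mul, Real.cos_zero, mul_assoc 2, Real.cos_two_mul, mul_assoc 3,
          Real.cos_three_mul]
        ring

lemma eight_div_add_one_sub_re_le {s T : ℝ} (hs : 0 < s) (hs' : s ≤ 7 / 100) (hT : 1500 ≤ T)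
    {a : ℂ} (ha : xi a = 0) (hre : 1 / 2 < a.re) (him : |a.im| ≤ T) :
    8 * (1 / (s + (1 - a.re))) ≤
      5 * (1 / s) + 3.601 * Real.log (T / (2 * π)) - 3.1 + 8 * s + 9.2 * (s / a.im ^ 2) := by
  have hne := im_ne_zero_of_xi_eq_zero ha
  have hlog (c : ℝ) (hc : 0 < c) :
      Real.log (c * T / (2 * π)) = Real.log c + Real.log (T / (2 * π)) := by
    rw [mul_div_assoc, Real.log_mul hc.ne' (by positivity)]
  have hpoisson (c : ℝ) (hc : 0 < c) : poisson s (c * a.im) ≤ s / a.im ^ 2 / c ^ 2 := by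
    refine (poisson_le_div_sq hs.le (by positivity)).trans_eq ?_
    rw [mul_pow, mul_comm, div_div]
  have habs (c : ℝ) (hc : 0 < c) : |c * a.im| ≤ c * T := by
    rw [abs_mul, abs_of_pos hc]
    gcongr
  have htrig := stechkinDiff_trig_nonneg hs (by linarith) a.im
  have hzero := stechkinDiff_zero_right_le hs hs'
  have hone := stechkinDiff_im_le hs hs' hT ha hre him
  have htwo := stechkinDiff_le hs hs' (by linarith) (habs 2 two_pos)
  have hthree := stechkinDiff_le hs hs' (by linarith) (habs 3 three_pos)
  rw [hlog 2 two_pos] at htwo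
  rw [hlog 3 three_pos] at hthree
  have := poisson_le_div_sq hs.le hne
  have := hpoisson 2 two_pos
  have := hpoisson 3 three_pos
  have : 0 ≤ s / a.im ^ 2 := by positivity
  linarith [Real.log_two_lt_d9, Real.log_three_lt_d9]

lemma log_exp_div_two_mul_pi_le (τ : ℝ) : Real.log (Real.exp τ / (2 * π)) ≤ τ - 1.8378 := by
  rw [Real.log_div (Real.exp_ne_zero _) (by positivity), Real.log_exp]
  linarith [le_log_two_mul_pi]

lemma le_exp_of_eight_le {τ : ℝ} (hτ : 8 ≤ τ) : 2900 ≤ Real.exp τ :=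
  calc (2900 : ℝ) ≤ 2.718 ^ 8 := by norm_num
    _ ≤ Real.exp 1 ^ 8 := by gcongr; linarith [Real.exp_one_gt_d9]
    _ = Real.exp 8 := by rw [← Real.exp_nat_mul]; norm_num
    _ ≤ Real.exp τ := Real.exp_le_exp.2 hτ

-- The choice `s = 1.32 / A` nearly maximises the lower bound for `η`.
lemma div_le_of_eight_div_le {A η : ℝ} (hA : 0 < A) (hη : 0 < η)
    (h : 8 * (1 / (1.32 / A + η)) ≤ 5 * (1 / (1.32 / A)) + A) : 0.3508 / A ≤ η := by
  rw [mul_one_div, div_le_iff₀ (by positivity)] at h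
  have hexpand : (5 * (1 / (1.32 / A)) + A) * (1.32 / A + η) =
      6.32 + (5 / 1.32 + 1) * (A * η) := by
    field_simp
    ring
  rw [div_le_iff₀' hA]
  linarith

lemma le_one_sub_re_of_abs_im_le {a : ℂ} (ha : xi a = 0) (him : |a.im| ≤ Real.exp 8) :
    0.01754 ≤ 1 - a.re := by
  obtain ⟨-, hre1⟩ := re_mem_Ioo_of_xi_eq_zero ha
  rcases le_or_gt a.re (1 / 2) with hre | hre
  · linarith
  have hineq := eight_div_add_one_sub_re_le (s := 1.32 / 20) (by norm_num) (by norm_num)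
    (by linarith [le_exp_of_eight_le le_rfl]) ha hre him
  have hlog := log_exp_div_two_mul_pi_le 8
  have hsq : 1.32 / 20 / a.im ^ 2 ≤ 0.04 := by
    have := le_sq_im_of_xi_eq_zero ha
    rw [div_le_iff₀ (by linarith)]
    linarith
  have := div_le_of_eight_div_le (A := 20) (η := 1 - a.re) (by norm_num) (by linarith)
    (by linarith)
  linarith

lemma div_sq_im_le {a : ℂ} (him : 8 ≤ Real.log |a.im|) {s : ℝ} (hs : s ≤ 7 / 100) :
    s / a.im ^ 2 ≤ 0.0001 := by
  have hpos : 0 < |a.im| := by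
    refine (abs_nonneg _).lt_of_ne fun h ↦ ?_
    rw [← h, Real.log_zero] at him
    linarith
  have hle : 2900 ≤ |a.im| := by
    rw [← Real.exp_log hpos]
    exact le_exp_of_eight_le him
  have : (2900 : ℝ) ^ 2 ≤ a.im ^ 2 := by
    rw [← sq_abs a.im]
    gcongr
  rw [div_le_iff₀ (by linarith)]
  linarith

lemma exp_log_abs_im {a : ℂ} (ha : xi a = 0) : Real.exp (Real.log |a.im|) = |a.im| :=
  Real.exp_log (abs_pos.2 (im_ne_zero_of_xi_eq_zero ha))

lemma div_le_one_sub_re {a : ℂ} (ha : xi a = 0) (him : 8 ≤ Real.log |a.im|) :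
    0.3508 / (3.601 * Real.log |a.im| - 9.15) ≤ 1 - a.re := by
  obtain ⟨-, hre1⟩ := re_mem_Ioo_of_xi_eq_zero ha
  set A := 3.601 * Real.log |a.im| - 9.15 with hA
  have hA19 : 19.658 ≤ A := by linarith
  have hA0 : 0 < A := by linarith
  rcases le_or_gt a.re (1 / 2) with hre | hre
  · rw [div_le_iff₀ hA0]
    nlinarith
  have hs : 1.32 / A ≤ 0.0672 := by
    rw [div_le_iff₀ hA0]
    linarith
  have hineq := eight_div_add_one_sub_re_le (s := 1.32 / A) (by positivity) (by linarith)
    (by linarith [le_exp_of_eight_le him]) ha hre (exp_log_abs_im ha).ge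
  have hlog := log_exp_div_two_mul_pi_le (Real.log |a.im|)
  have hsq := div_sq_im_le him (s := 1.32 / A) (by linarith)
  exact div_le_of_eight_div_le hA0 (by linarith) (by linarith)

lemma sq_add_two_mul_sum_cos_add_sum_cos_sub {ι : Type*} (S : Finset ι) (A : ℝ) (m θ : ι → ℝ) :
    A ^ 2 + 2 * A * ∑ a ∈ S, m a * Real.cos (θ a) +
      ∑ a ∈ S, ∑ b ∈ S, m a * m b * Real.cos (θ a - θ b) =
    (A + ∑ a ∈ S, m a * Real.cos (θ a)) ^ 2 + (∑ a ∈ S, m a * Real.sin (θ a)) ^ 2 := by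
  have hdouble : ∑ a ∈ S, ∑ b ∈ S, m a * m b * Real.cos (θ a - θ b) =
      (∑ a ∈ S, m a * Real.cos (θ a)) ^ 2 + (∑ a ∈ S, m a * Real.sin (θ a)) ^ 2 := by
    rw [sq, sq, Finset.sum_mul_sum, Finset.sum_mul_sum, ← Finset.sum_add_distrib]
    refine Finset.sum_congr rfl fun a _ ↦ ?_
    rw [← Finset.sum_add_distrib]
    refine Finset.sum_congr rfl fun b _ ↦ ?_
    rw [Real.cos_sub]
    ring
  rw [hdouble]
  ring

lemma stechkinDiff_quadratic_nonneg {ι : Type*} {s : ℝ} (hs : 0 < s) (hs' : s ≤ 31 / 50)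
    (S : Finset ι) (A : ℝ) (m γ : ι → ℝ) :
    0 ≤ A ^ 2 * stechkinDiff s 0 + 2 * A * ∑ a ∈ S, m a * stechkinDiff s (γ a) +
      ∑ a ∈ S, ∑ b ∈ S, m a * m b * stechkinDiff s (γ a - γ b) := by
  have hsum := (((hasSum_stechkinDiff hs 0).mul_left (A ^ 2)).add
    ((hasSum_sum fun a (_ : a ∈ S) ↦ (hasSum_stechkinDiff hs (γ a)).mul_left (m a)).mul_left
      (2 * A))).add
    (hasSum_sum fun a (_ : a ∈ S) ↦ hasSum_sum fun b (_ : b ∈ S) ↦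
      (hasSum_stechkinDiff hs (γ a - γ b)).mul_left (m a * m b))
  refine hsum.nonneg fun n ↦ ?_
  have hcoeff := stechkinCoeff_nonneg hs' n
  have hsq := sq_add_two_mul_sum_cos_add_sum_cos_sub S A m fun a ↦ γ a * Real.log n
  calc 0 ≤ stechkinCoeff s n * ((A + ∑ a ∈ S, m a * Real.cos (γ a * Real.log n)) ^ 2 +
        (∑ a ∈ S, m a * Real.sin (γ a * Real.log n)) ^ 2) := by positivity
    _ = _ := by
        simp only [← hsq, zero_mul, Real.cos_zero, sub_mul, mul_left_comm _ (stechkinCoeff s n),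
          ← Finset.mul_sum]
        ring

lemma poisson_le_mul_poisson_add {s η η' v : ℝ} (hs : 0 < s) (hη : 0 ≤ η) (hη' : η ≤ η') :
    poisson s v ≤ (s + η') / s * poisson (s + η) v :=
  calc poisson s v ≤ (s + η) / s * poisson (s + η) v := by
        rw [poisson, poisson, div_mul_div_comm, div_le_div_iff₀ (by positivity) (by positivity)]
        nlinarith [mul_nonneg (mul_nonneg hs.le hη) (sq_nonneg v),
          mul_nonneg (sq_nonneg η) (sq_nonneg v)]
    _ ≤ (s + η') / s * poisson (s + η) v := by
        have := poisson_nonneg (a := s + η) (by linarith) v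
        gcongr

lemma sum_xiOrder_mul_poisson_sub_le {s τ η : ℝ} (hs : 0 < s) (hs' : s ≤ 7 / 100) (hτ : 8 ≤ τ)
    (hη : 0 ≤ η) (S : Finset ℂ) (hS : ∀ b ∈ S, xi b = 0 ∧ 1 - b.re ≤ η) {a : ℂ} (ha : xi a = 0)
    (him : |a.im| ≤ Real.exp τ) :
    ∑ b ∈ S, (xiOrder b : ℝ) * poisson s (a.im - b.im) ≤
      (s + η) / s * (1 / s + (τ - 1.8378) / 2 - 0.36) := by
  have hterm (b) (hb : b ∈ S) : (xiOrder b : ℝ) * poisson s (a.im - b.im) ≤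
      (s + η) / s * ((xiOrder b : ℝ) * zeroPoisson s a.im b) := by
    obtain ⟨hxi, hre⟩ := hS b hb
    rw [zeroPoisson, add_comm 1, add_sub_assoc, mul_left_comm]
    gcongr
    exact poisson_le_mul_poisson_add hs (by linarith [(re_mem_Ioo_of_xi_eq_zero hxi).2]) hre
  have hpole : poisson s a.im ≤ 0.05 := by
    have := le_sq_im_of_xi_eq_zero ha
    refine (poisson_le_div_sq hs.le (im_ne_zero_of_xi_eq_zero ha)).trans ?_
    rw [div_le_iff₀ (by linarith)]
    linarith
  calc ∑ b ∈ S, (xiOrder b : ℝ) * poisson s (a.im - b.im)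
      ≤ (s + η) / s * ∑ b ∈ S, (xiOrder b : ℝ) * zeroPoisson s a.im b := by
        rw [Finset.mul_sum]
        exact Finset.sum_le_sum hterm
    _ ≤ (s + η) / s * ∑' b, (xiOrder b : ℝ) * zeroPoisson s a.im b := by
        gcongr
        exact (summable_xiOrder_mul_zeroPoisson s a.im).sum_le_tsum S fun b _ ↦
          xiOrder_mul_zeroPoisson_nonneg hs.le a.im b
    _ ≤ (s + η) / s * (1 / s + (τ - 1.8378) / 2 - 0.36) := by
        gcongr
        linarith [tsum_zeroPoisson_le hs hs' (by linarith [le_exp_of_eight_le hτ]) him,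
          log_exp_div_two_mul_pi_le τ]

lemma sum_sum_xiOrder_mul_stechkinDiff_le {s τ η : ℝ} (hs : 0 < s) (hs' : s ≤ 7 / 100)
    (hτ : 8 ≤ τ) (hη : 0 ≤ η) (S : Finset ℂ)
    (hS : ∀ a ∈ S, xi a = 0 ∧ 1 - a.re ≤ η ∧ |a.im| ≤ Real.exp τ) :
    ∑ a ∈ S, ∑ b ∈ S, (xiOrder a : ℝ) * xiOrder b * stechkinDiff s (a.im - b.im) ≤
      (∑ a ∈ S, (xiOrder a : ℝ)) * ((s + η) / s * (1 / s + (τ - 1.8378) / 2 - 0.36) +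
        (∑ a ∈ S, (xiOrder a : ℝ)) * (277 / 1000 * (τ - 1.1446) + 0.025)) := by
  have hlog : Real.log (2 * Real.exp τ / (2 * π)) ≤ τ - 1.1446 := by
    rw [mul_div_mul_left _ _ two_ne_zero, Real.log_div (Real.exp_ne_zero _) Real.pi_ne_zero,
      Real.log_exp]
    linarith [le_log_pi]
  have hdiff (a) (ha : a ∈ S) (b) (hb : b ∈ S) : stechkinDiff s (a.im - b.im) ≤
      poisson s (a.im - b.im) + (277 / 1000 * (τ - 1.1446) + 0.025) := by
    have hsub : |a.im - b.im| ≤ 2 * Real.exp τ := by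
      linarith [abs_sub a.im b.im, (hS a ha).2.2, (hS b hb).2.2]
    linarith [stechkinDiff_le hs hs' (by linarith [le_exp_of_eight_le hτ]) hsub]
  rw [Finset.sum_mul]
  refine Finset.sum_le_sum fun a ha ↦ ?_
  calc ∑ b ∈ S, (xiOrder a : ℝ) * xiOrder b * stechkinDiff s (a.im - b.im)
      ≤ ∑ b ∈ S, (xiOrder a : ℝ) * xiOrder b *
          (poisson s (a.im - b.im) + (277 / 1000 * (τ - 1.1446) + 0.025)) :=
        Finset.sum_le_sum fun b hb ↦
          mul_le_mul_of_nonneg_left (hdiff a ha b hb) (by positivity)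
    _ = xiOrder a * (∑ b ∈ S, (xiOrder b : ℝ) * poisson s (a.im - b.im) +
          (∑ b ∈ S, (xiOrder b : ℝ)) * (277 / 1000 * (τ - 1.1446) + 0.025)) := by
        rw [Finset.sum_mul, ← Finset.sum_add_distrib, Finset.mul_sum]
        simp only [mul_add, mul_assoc]
    _ ≤ _ := by
        gcongr
        exact sum_xiOrder_mul_poisson_sub_le hs hs' hτ hη S
          (fun b hb ↦ ⟨(hS b hb).1, (hS b hb).2.1⟩) (hS a ha).1 (hS a ha).2.2

lemma sum_xiOrder_mul_le {s τ η X : ℝ} (hs : 0 < s) (hs' : s ≤ 7 / 100) (hτ : 8 ≤ τ) (hη : 0 ≤ η)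
    (hX : 0 ≤ X) (S : Finset ℂ) (hS : ∀ a ∈ S, xi a = 0 ∧ 1 - a.re ≤ η ∧ |a.im| ≤ Real.exp τ)
    (hSX : ∀ a ∈ S, stechkinDiff s a.im ≤ -X) :
    (∑ a ∈ S, (xiOrder a : ℝ)) *
        (X ^ 2 / (1 / s - 0.9) - (277 / 1000 * (τ - 1.1446) + 0.025)) ≤
      (s + η) / s * (1 / s + (τ - 1.8378) / 2 - 0.36) := by
  have hs14 : 14 ≤ 1 / s := by
    rw [le_div_iff₀ hs]
    linarith
  have hf : 0 < 1 / s - 0.9 := by linarith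
  have hdouble := sum_sum_xiOrder_mul_stechkinDiff_le hs hs' hτ hη S hS
  have hsingle : ∑ a ∈ S, (xiOrder a : ℝ) * stechkinDiff s a.im ≤
      -((∑ a ∈ S, (xiOrder a : ℝ)) * X) := by
    rw [← mul_neg, Finset.sum_mul]
    exact Finset.sum_le_sum fun a ha ↦ mul_le_mul_of_nonneg_left (hSX a ha) (Nat.cast_nonneg _)
  have hM : 0 ≤ ∑ a ∈ S, (xiOrder a : ℝ) := by positivity
  have hquad (A : ℝ) := stechkinDiff_quadratic_nonneg hs (by linarith) S A
    (fun a ↦ (xiOrder a : ℝ)) fun a ↦ a.im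
  generalize ∑ a ∈ S, (xiOrder a : ℝ) = M at *
  rcases hM.eq_or_lt with rfl | hM
  · rw [zero_mul]
    exact mul_nonneg (by positivity) (by linarith)
  -- `A = M X / (1 / s - 0.9)` minimises the quadratic `A² (1 / s - 0.9) - 2 A M X`.
  set A := M * X / (1 / s - 0.9)
  have hA : 0 ≤ A := by positivity
  have hmin : A ^ 2 * (1 / s - 0.9) + 2 * A * -(M * X) = -(M * (M * (X ^ 2 / (1 / s - 0.9)))) := by
    simp only [A]
    field_simp
    ring
  have : A ^ 2 * stechkinDiff s 0 ≤ A ^ 2 * (1 / s - 0.9) := by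
    gcongr
    exact stechkinDiff_zero_right_le hs hs'
  have := mul_le_mul_of_nonneg_left hsingle (mul_nonneg zero_le_two hA)
  refine le_of_mul_le_mul_left ?_ hM
  linarith [hquad A]

lemma stechkinDiff_im_le_neg {s τ : ℝ} (hs : 0 < s) (hs' : s ≤ 7 / 100) {a : ℂ}
    (ha : xi a = 0) (hre : 1 / 2 < a.re) (him : 8 ≤ Real.log |a.im|) (hτ : Real.log |a.im| ≤ τ) :
    stechkinDiff s a.im ≤ -(1 / (s + (1 - a.re)) - 277 / 1000 * (τ - 1.8378) - s - 0.0251) := by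
  have hle : |a.im| ≤ Real.exp τ := by
    rw [← exp_log_abs_im ha]
    exact Real.exp_le_exp.2 hτ
  linarith [stechkinDiff_im_le hs hs' (by linarith [le_exp_of_eight_le (him.trans hτ)]) ha hre hle,
    log_exp_div_two_mul_pi_le τ, poisson_le_div_sq hs.le (im_ne_zero_of_xi_eq_zero ha),
    div_sq_im_le him hs']

/-! ### Counting the zeros with large contributions -/

/-- At `x = exp 2000` a zero `a` contributes about `x * exp (-zeroLevel a)` to `ψ x`. -/
noncomputable def zeroLevel (a : ℂ) : ℝ := 2000 * (1 - a.re) + Real.log |a.im|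

/-- The zeros of height at least `exp 8` whose level is at most `Y`. -/
def levelZeros (Y : ℝ) : Set ℂ := {a | xi a = 0 ∧ 8 ≤ Real.log |a.im| ∧ zeroLevel a ≤ Y}

lemma le_mul_of_zeroLevel_le {a : ℂ} {Y : ℝ} (ha : a ∈ levelZeros Y) :
    701.6 ≤ (Y - Real.log |a.im|) * (3.601 * Real.log |a.im| - 9.15) := by
  obtain ⟨hxi, him, hlevel⟩ := ha
  have hpos : 0 < 3.601 * Real.log |a.im| - 9.15 := by linarith
  have hfree := div_le_one_sub_re hxi him
  rw [div_le_iff₀ hpos] at hfree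
  unfold zeroLevel at hlevel
  nlinarith

lemma le_zeroLevel {a : ℂ} (ha : xi a = 0) (him : 8 ≤ Real.log |a.im|) : 30.44 ≤ zeroLevel a := by
  by_contra! hlt
  have := le_mul_of_zeroLevel_le (Y := 30.44) ⟨ha, him, hlt.le⟩
  nlinarith [sq_nonneg (Real.log |a.im| - 16.4999)]

lemma sum_xiOrder_mul_le_of_subset_levelZeros {s Y lo hi X : ℝ} (hs : 0 < s) (hs' : s ≤ 7 / 100)
    (hhi : 8 ≤ hi) (hY : Y ≤ 100) (hX : 0 ≤ X) (hlo : lo ≤ Y)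
    (hrange : ∀ l : ℝ, 8 ≤ l → 701.6 ≤ (Y - l) * (3.601 * l - 9.15) → lo ≤ l ∧ l ≤ hi)
    (hXl : ∀ l : ℝ, lo ≤ l → l ≤ hi →
      (s + (Y - l) / 2000) * (X + 277 / 1000 * (l - 1.8378) + s + 0.0251) ≤ 1)
    {S : Finset ℂ} (hS : ↑S ⊆ levelZeros Y) :
    (∑ a ∈ S, (xiOrder a : ℝ)) *
        (X ^ 2 / (1 / s - 0.9) - (277 / 1000 * (hi - 1.1446) + 0.025)) ≤
      (s + (Y - lo) / 2000) / s * (1 / s + (hi - 1.8378) / 2 - 0.36) := by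
  have hl (a) (ha : a ∈ S) : lo ≤ Real.log |a.im| ∧ Real.log |a.im| ≤ hi :=
    hrange _ (hS ha).2.1 (le_mul_of_zeroLevel_le (hS ha))
  have hre (a) (ha : a ∈ S) : 1 - a.re ≤ (Y - Real.log |a.im|) / 2000 := by
    have := (hS ha).2.2
    unfold zeroLevel at this
    linarith
  refine sum_xiOrder_mul_le hs hs' hhi (by linarith) hX S
    (fun a ha ↦ ⟨(hS ha).1, by linarith [hre a ha, hl a ha], ?_⟩) fun a ha ↦ ?_
  · rw [← exp_log_abs_im (hS ha).1]
    exact Real.exp_le_exp.2 (hl a ha).2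
  · obtain ⟨-, hre1⟩ := re_mem_Ioo_of_xi_eq_zero (hS ha).1
    have hdiff := stechkinDiff_im_le_neg hs hs' (hS ha).1 (by linarith [hre a ha, (hS ha).2.1])
      (hS ha).2.1 le_rfl
    have hpos : 0 < s + (1 - a.re) := by linarith
    have hbound : X + 277 / 1000 * (Real.log |a.im| - 1.8378) + s + 0.0251 ≤
        1 / (s + (1 - a.re)) := by
      rw [le_div_iff₀' hpos]
      refine le_trans ?_ (hXl _ (hl a ha).1 (hl a ha).2)
      gcongr
      · linarith [(hS ha).2.1]
      · exact hre a ha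
    linarith

lemma sum_xiOrder_le_of_subset_levelZeros_low {S : Finset ℂ} (hS : ↑S ⊆ levelZeros 34) :
    ∑ a ∈ S, (xiOrder a : ℝ) ≤ 9 := by
  have h := sum_xiOrder_mul_le_of_subset_levelZeros (s := 0.028) (lo := 11) (hi := 25.6)
    (X := 22.7) (by norm_num) (by norm_num) (by norm_num) (by norm_num) (by norm_num) (by norm_num)
    (fun l _ h ↦ by constructor <;> nlinarith) (fun l _ _ ↦ by nlinarith) hS
  norm_num at h
  linarith

lemma sum_xiOrder_le_of_subset_levelZeros_high {S : Finset ℂ} (hS : ↑S ⊆ levelZeros 42) :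
    ∑ a ∈ S, (xiOrder a : ℝ) ≤ 45 := by
  have h := sum_xiOrder_mul_le_of_subset_levelZeros (s := 0.024) (lo := 8.3) (hi := 36.3)
    (X := 22.6) (by norm_num) (by norm_num) (by norm_num) (by norm_num) (by norm_num) (by norm_num)
    (fun l _ h ↦ by constructor <;> nlinarith) (fun l _ _ ↦ by nlinarith) hS
  norm_num at h
  linarith

/-- The distance to the line `re s = 1` within which the zeros of height between `exp k` and
`exp (k + 1)` are counted separately. It is rational so that finite sums depending on it can be
evaluated by computation. -/
def nearLineWidth (k : ℕ) : ℚ := 0.5 / (k - 0.8378) - 0.3 / (k - 0.8378) ^ 2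

/-- The zeros of height between `exp k` and `exp (k + 1)` within `nearLineWidth k` of the line
`re s = 1`. -/
def nearLineZeros (k : ℕ) : Set ℂ :=
  {a | xi a = 0 ∧ Real.log |a.im| ∈ Set.Icc (k : ℝ) (k + 1) ∧ 1 - a.re ≤ nearLineWidth k}

lemma nearLineWidth_eq {k : ℕ} {t : ℝ} (ht : t * (k - 0.8378) = 1) :
    (nearLineWidth k : ℝ) = 0.5 * t - 0.3 * t ^ 2 := by
  have hcast : (nearLineWidth k : ℝ) = 0.5 / (k - 0.8378) - 0.3 / (k - 0.8378) ^ 2 := by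
    norm_num [nearLineWidth]
  rw [hcast, eq_one_div_of_mul_eq_one_left ht, one_div_pow, mul_one_div, mul_one_div]

lemma le_of_mul_le_nearLine {M y t : ℝ} (hy : y ∈ Set.Icc 7.16 63.17) (ht : 0 < t) (hM : 0 ≤ M)
    (h : M * ((0.913476 * y + 0.37) ^ 2 / (50 / 17 * y - 0.9) -
      (277 / 1000 * (y + 0.6932) + 0.025)) ≤
        (0.34 * t + (0.5 * t - 0.3 * t ^ 2)) / (0.34 * t) * (50 / 17 * y + y / 2 - 0.36)) :
    M ≤ 1100 := by
  obtain ⟨hy7, hy63⟩ := hy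
  have hlower : 0.2837 * y + 0.307 ≤ (0.913476 * y + 0.37) ^ 2 / (50 / 17 * y - 0.9) := by
    rw [le_div_iff₀ (by linarith)]
    nlinarith
  have hratio : (0.34 * t + (0.5 * t - 0.3 * t ^ 2)) / (0.34 * t) ≤ 2.4706 := by
    rw [div_le_iff₀ (by positivity)]
    nlinarith
  have hupper : M * (0.0067 * y + 0.0899) ≤ 2.4706 * (50 / 17 * y + y / 2) :=
    calc M * (0.0067 * y + 0.0899)
        ≤ M * ((0.913476 * y + 0.37) ^ 2 / (50 / 17 * y - 0.9) -
            (277 / 1000 * (y + 0.6932) + 0.025)) := by gcongr; linarith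
      _ ≤ _ := h
      _ ≤ 2.4706 * (50 / 17 * y + y / 2) := by gcongr <;> linarith
  by_contra! hlt
  have : 1100 * (0.0067 * y + 0.0899) ≤ M * (0.0067 * y + 0.0899) := by gcongr
  linarith

lemma le_one_div_nearLine {y t : ℝ} (ht : 0 < t) (ht' : t ≤ 0.14) (hty : t * y = 1) :
    1.190476 * y + 0.3951 + 0.34 * t ≤ 1 / (0.34 * t + (0.5 * t - 0.3 * t ^ 2)) := by
  have hpos : 0 < 0.34 * t + (0.5 * t - 0.3 * t ^ 2) := by nlinarith
  rw [le_div_iff₀ hpos]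
  calc (1.190476 * y + 0.3951 + 0.34 * t) * (0.34 * t + (0.5 * t - 0.3 * t ^ 2))
      = (1.190476 * (t * y) + 0.3951 * t + 0.34 * t ^ 2) * (0.84 - 0.3 * t) := by ring
    _ ≤ 1 := by
        rw [hty]
        nlinarith [mul_nonneg ht.le (sub_nonneg.2 ht'), mul_pos ht (mul_pos ht ht)]

-- The parameters of the density bound are scaled to the height: `s = 0.34 / (k - 0.8378)`.
lemma sum_xiOrder_le_of_subset_nearLineZeros {k : ℕ} (hk : k ∈ Set.Icc 8 64) {S : Finset ℂ}
    (hS : ↑S ⊆ nearLineZeros k) : ∑ a ∈ S, (xiOrder a : ℝ) ≤ 1100 := by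
  have hk8 : (8 : ℝ) ≤ k := by exact_mod_cast hk.1
  have hk64 : (k : ℝ) ≤ 64 := by exact_mod_cast hk.2
  obtain ⟨y, hy⟩ : ∃ y : ℝ, (k : ℝ) = y + 0.8378 := ⟨k - 0.8378, by ring⟩
  have hy7 : 7.16 ≤ y := by linarith
  obtain ⟨t, ht⟩ : ∃ t : ℝ, t = 1 / y := ⟨_, rfl⟩
  have hty : t * y = 1 := by rw [ht, one_div_mul_cancel (by linarith)]
  have ht0 : 0 < t := by rw [ht]; positivity
  have ht' : t ≤ 0.14 := by
    rw [ht, div_le_iff₀ (by linarith)]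
    linarith
  have hwidth : (nearLineWidth k : ℝ) = 0.5 * t - 0.3 * t ^ 2 :=
    nearLineWidth_eq (by rw [hy, add_sub_cancel_right, hty])
  have h := sum_xiOrder_mul_le (s := 0.34 * t) (τ := k + 1) (η := nearLineWidth k)
    (X := 0.913476 * y + 0.37) (by positivity) (by linarith) (by linarith)
    (by rw [hwidth]; nlinarith) (by positivity) S (fun a ha ↦ ⟨(hS ha).1, (hS ha).2.2, ?_⟩)
    fun a ha ↦ ?_
  · rw [hwidth, show 1 / (0.34 * t) = 50 / 17 * y by rw [ht]; field_simp; norm_num,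
      show (k : ℝ) + 1 = y + 1.8378 by rw [hy]; ring, add_sub_cancel_right,
      show y + 1.8378 - 1.1446 = y + 0.6932 by ring] at h
    exact le_of_mul_le_nearLine ⟨hy7, by linarith⟩ ht0 (by positivity) h
  · rw [← exp_log_abs_im (hS ha).1]
    exact Real.exp_le_exp.2 (hS ha).2.1.2
  · obtain ⟨hxi, ⟨hlog, hlog'⟩, hre⟩ := hS ha
    rw [hwidth] at hre
    have hdiff := stechkinDiff_im_le_neg (s := 0.34 * t) (by positivity) (by linarith) hxi
      (by nlinarith) (by linarith) hlog'
    have : 1 / (0.34 * t + (0.5 * t - 0.3 * t ^ 2)) ≤ 1 / (0.34 * t + (1 - a.re)) :=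
      one_div_le_one_div_of_le (by linarith [(re_mem_Ioo_of_xi_eq_zero hxi).2]) (by linarith)
    linarith [le_one_div_nearLine ht0 ht' hty]

/-! ### The sum over zeros -/

lemma exp_neg_le_pow {n : ℕ} {x : ℝ} (h : (n : ℝ) / 8 ≤ x) : Real.exp (-x) ≤ 0.8825 ^ n := by
  have hbase : Real.exp (-(1 / 8)) ≤ 0.8825 := by
    refine (pow_le_pow_iff_left₀ (Real.exp_pos _).le (by norm_num) (n := 8) (by norm_num)).1 ?_
    rw [← Real.exp_nat_mul, show ((8 : ℕ) : ℝ) * -(1 / 8) = -1 by norm_num, Real.exp_neg,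
      inv_le_comm₀ (Real.exp_pos 1) (by norm_num)]
    refine le_trans ?_ Real.exp_one_gt_d9.le
    norm_num
  calc Real.exp (-x) ≤ Real.exp (n * (-(1 / 8))) := Real.exp_le_exp.2 (by linarith)
    _ = Real.exp (-(1 / 8)) ^ n := by rw [Real.exp_nat_mul]
    _ ≤ 0.8825 ^ n := by gcongr

/-- The weight of a zero `a` in the bound for `ψ` at `exp 2000`. Here `exp (-2000 * (1 - a.re))` is
the size of `x ^ a / x`, and the factor `a.im⁻²` that comes from smoothing `ψ` takes over above the
height `exp (233 / 8)`. -/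
noncomputable def zeroWeight (a : ℂ) : ℝ :=
  Real.exp (-(2000 * (1 - a.re))) * min (1 / |a.im|) (Real.exp (233 / 8) / a.im ^ 2)

lemma zeroWeight_le_exp_mul_inv (a : ℂ) :
    zeroWeight a ≤ Real.exp (-(2000 * (1 - a.re))) * |a.im|⁻¹ := by
  unfold zeroWeight
  gcongr
  exact (min_le_left _ _).trans_eq (one_div _)

lemma zeroWeight_le_exp_mul_div_sq (a : ℂ) :
    zeroWeight a ≤ Real.exp (-(2000 * (1 - a.re))) * (Real.exp (233 / 8) / a.im ^ 2) := by
  unfold zeroWeight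
  gcongr
  exact min_le_right _ _

lemma inv_abs_im_eq_exp {a : ℂ} (ha : xi a = 0) : |a.im|⁻¹ = Real.exp (-Real.log |a.im|) := by
  rw [Real.exp_neg, exp_log_abs_im ha]

lemma sq_im_eq_exp {a : ℂ} (ha : xi a = 0) : a.im ^ 2 = Real.exp (2 * Real.log |a.im|) := by
  rw [two_mul, Real.exp_add, exp_log_abs_im ha, ← sq, sq_abs]

lemma zeroWeight_le_exp_neg_zeroLevel {a : ℂ} (ha : xi a = 0) :
    zeroWeight a ≤ Real.exp (-zeroLevel a) := by
  refine (zeroWeight_le_exp_mul_inv a).trans_eq ?_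
  rw [inv_abs_im_eq_exp ha, ← Real.exp_add, zeroLevel, neg_add]

lemma two_mul_cosh_le {x : ℝ} (hx : |x| ≤ 1 / 2) : 2 * Real.cosh x ≤ 2.2667 := by
  have hexp : Real.exp (1 / 8) ≤ 1.1333 := by
    refine (pow_le_pow_iff_left₀ (Real.exp_pos _).le (by norm_num) (n := 8) (by norm_num)).1 ?_
    rw [← Real.exp_nat_mul, show ((8 : ℕ) : ℝ) * (1 / 8) = 1 by norm_num]
    refine Real.exp_one_lt_d9.le.trans ?_
    norm_num
  have hsq : x ^ 2 ≤ (1 / 2) ^ 2 := by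
    rw [← sq_abs]
    gcongr
  have hmono : Real.exp (x ^ 2 / 2) ≤ Real.exp (1 / 8) := Real.exp_le_exp.2 (by linarith)
  linarith [Real.cosh_le_exp_half_sq x]

lemma inv_abs_im_le_poisson {a : ℂ} (ha : xi a = 0) {τ : ℝ} (h : |Real.log |a.im| - τ| ≤ 1 / 2) :
    |a.im|⁻¹ ≤ 2.2667 * poisson (Real.exp τ) a.im := by
  have hcosh : |a.im|⁻¹ * (Real.exp τ ^ 2 + a.im ^ 2) =
      2 * Real.cosh (Real.log |a.im| - τ) * Real.exp τ := by
    rw [inv_abs_im_eq_exp ha, sq_im_eq_exp ha, Real.cosh_eq, ← Real.exp_nat_mul, mul_add,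
      ← Real.exp_add, ← Real.exp_add, mul_div_cancel₀ _ two_ne_zero, add_mul, ← Real.exp_add,
      ← Real.exp_add, add_comm]
    congr 2
    · ring
    · push_cast
      ring
  rw [poisson, mul_div_assoc', le_div_iff₀ (by positivity), hcosh]
  gcongr
  exact two_mul_cosh_le h

/-- A lower bound for `8 * zeroLevel a`, or its smoothed analogue, over the zeros `a` of height
between `exp k` and `exp (k + 1)` outside `nearLineZeros k`, without the contribution of
`log |a.im|`. -/
def genericExponent (k : ℕ) : ℕ := ⌊8 * (2000 * nearLineWidth k + max 0 ((k : ℚ) - 233 / 8))⌋₊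

lemma nearLineWidth_nonneg {k : ℕ} (hk : 2 ≤ k) : 0 ≤ nearLineWidth k := by
  have hk2 : (2 : ℚ) ≤ k := by exact_mod_cast hk
  unfold nearLineWidth
  rw [sub_nonneg, div_le_div_iff₀ (pow_pos (by linarith) 2) (by linarith), sq]
  nlinarith

lemma genericExponent_div_eight_le {k : ℕ} (hk : 2 ≤ k) :
    (genericExponent k : ℝ) / 8 ≤ 2000 * nearLineWidth k + max 0 ((k : ℝ) - 233 / 8) := by
  have hle : (genericExponent k : ℚ) ≤ 8 * (2000 * nearLineWidth k + max 0 ((k : ℚ) - 233 / 8)) :=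
    Nat.floor_le (by have := nearLineWidth_nonneg hk; positivity)
  rw [div_le_iff₀' (by norm_num)]
  have hcast := (Rat.cast_le (K := ℝ)).2 hle
  push_cast at hcast
  exact hcast

/-- The function equal to `0.8825 ^ n`, an upper bound for `exp (-n / 8)`, on `Z` and to `0`
elsewhere. -/
noncomputable def indicatorPow (Z : Set ℂ) (n : ℕ) : ℂ → ℝ := Z.indicator fun _ ↦ 0.8825 ^ n

lemma indicatorPow_nonneg (Z : Set ℂ) (n : ℕ) (a : ℂ) : 0 ≤ indicatorPow Z n a :=
  Set.indicator_nonneg (fun _ _ ↦ by positivity) a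

lemma zeroWeight_le_indicatorPow {Z : Set ℂ} {n : ℕ} {a : ℂ} (ha : xi a = 0) (haZ : a ∈ Z)
    (h : n / 8 ≤ zeroLevel a) : zeroWeight a ≤ indicatorPow Z n a := by
  rw [indicatorPow, Set.indicator_of_mem haZ]
  exact (zeroWeight_le_exp_neg_zeroLevel ha).trans (exp_neg_le_pow h)

lemma sum_xiOrder_mul_indicatorPow_le {Z : Set ℂ} {B : ℝ}
    (hZ : ∀ S : Finset ℂ, ↑S ⊆ Z → ∑ a ∈ S, (xiOrder a : ℝ) ≤ B) (n : ℕ) (S : Finset ℂ) :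
    ∑ a ∈ S, (xiOrder a : ℝ) * indicatorPow Z n a ≤ 0.8825 ^ n * B := by
  classical
  calc ∑ a ∈ S, (xiOrder a : ℝ) * indicatorPow Z n a
      = 0.8825 ^ n * ∑ a ∈ S with a ∈ Z, (xiOrder a : ℝ) := by
        simp only [indicatorPow, Set.indicator_apply, Finset.mul_sum, Finset.sum_filter, mul_ite,
          mul_zero, ite_mul, zero_mul, mul_comm]
    _ ≤ 0.8825 ^ n * B := by
        gcongr
        exact hZ _ fun a ha ↦ (Finset.mem_filter.1 ha).2

lemma zeroWeight_le_of_log_le_eight {a : ℂ} (ha : xi a = 0) (h : Real.log |a.im| ≤ 8) :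
    zeroWeight a ≤ 0.8825 ^ 280 * 50 * poisson 60 a.im := by
  have hle : |a.im| ≤ Real.exp 8 := by
    rw [← exp_log_abs_im ha]
    exact Real.exp_le_exp.2 h
  have hle' : |a.im| ≤ 2990 :=
    calc |a.im| ≤ Real.exp 8 := hle
      _ = Real.exp 1 ^ 8 := by rw [← Real.exp_nat_mul]; norm_num
      _ ≤ 2.719 ^ 8 := by gcongr; linarith [Real.exp_one_lt_d9]
      _ ≤ 2990 := by norm_num
  have hinv : |a.im|⁻¹ ≤ 50 * poisson 60 a.im := by
    have hge := le_abs_im_of_xi_eq_zero ha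
    rw [poisson, ← sq_abs a.im, mul_div_assoc', inv_eq_one_div,
      div_le_div_iff₀ (by linarith) (by positivity)]
    nlinarith
  refine (zeroWeight_le_exp_mul_inv a).trans ?_
  rw [mul_assoc]
  gcongr
  exact exp_neg_le_pow (by norm_num; linarith [le_one_sub_re_of_abs_im_le ha hle])

lemma zeroWeight_le_of_le_log {a : ℂ} (ha : xi a = 0) (h : 65 ≤ Real.log |a.im|) :
    zeroWeight a ≤ 0.8825 ^ 287 * 2 * poisson (Real.exp 65) a.im := by
  have hle : Real.exp 65 ^ 2 ≤ a.im ^ 2 := by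
    rw [sq_im_eq_exp ha, ← Real.exp_nat_mul]
    exact Real.exp_le_exp.2 (by push_cast; linarith)
  have hpos : 0 < Real.exp 65 ^ 2 := by positivity
  calc zeroWeight a
      ≤ Real.exp (-(2000 * (1 - a.re))) * (Real.exp (233 / 8) / a.im ^ 2) :=
        zeroWeight_le_exp_mul_div_sq a
    _ ≤ 1 * (Real.exp (233 / 8) / a.im ^ 2) := by
        gcongr
        exact Real.exp_le_one_iff.2 (by linarith [(re_mem_Ioo_of_xi_eq_zero ha).2])
    _ = Real.exp (-(287 / 8)) * (Real.exp 65 / a.im ^ 2) := by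
        rw [one_mul, mul_div_assoc', ← Real.exp_add]
        norm_num
    _ ≤ 0.8825 ^ 287 * (2 * poisson (Real.exp 65) a.im) := by
        gcongr
        · exact exp_neg_le_pow (by norm_num)
        · rw [poisson, mul_div_assoc', div_le_div_iff₀ (by linarith) (by positivity)]
          nlinarith [Real.exp_pos 65]
    _ = _ := (mul_assoc _ _ _).symm

lemma zeroWeight_le_of_nearLineWidth_le {a : ℂ} (ha : xi a = 0) {k : ℕ} (hk : 2 ≤ k)
    (hlog : Real.log |a.im| ∈ Set.Icc (k : ℝ) (k + 1)) (hre : nearLineWidth k ≤ 1 - a.re) :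
    zeroWeight a ≤ 0.8825 ^ genericExponent k * 2.2667 * poisson (Real.exp (k + 1 / 2)) a.im := by
  obtain ⟨hlog1, hlog2⟩ := hlog
  have hdecay : zeroWeight a ≤ Real.exp (-(2000 * nearLineWidth k + max 0 ((k : ℝ) - 233 / 8))) *
      |a.im|⁻¹ := by
    rw [inv_abs_im_eq_exp ha, ← Real.exp_add]
    rcases max_choice 0 ((k : ℝ) - 233 / 8) with hmax | hmax <;> rw [hmax]
    · refine (zeroWeight_le_exp_neg_zeroLevel ha).trans (Real.exp_le_exp.2 ?_)
      unfold zeroLevel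
      linarith
    · refine (zeroWeight_le_exp_mul_div_sq a).trans ?_
      rw [sq_im_eq_exp ha, ← Real.exp_sub, ← Real.exp_add]
      exact Real.exp_le_exp.2 (by linarith)
  refine hdecay.trans ?_
  rw [mul_assoc]
  gcongr
  · exact exp_neg_le_pow (genericExponent_div_eight_le hk)
  · exact inv_abs_im_le_poisson ha (abs_le.2 ⟨by linarith, by linarith⟩)

/-- A bound for the weights of the zeros of height between `exp k` and `exp (k + 1)` that do not
have a small level. -/
noncomputable def shellMajorant (k : ℕ) (a : ℂ) : ℝ :=
  indicatorPow (nearLineZeros k) 336 a +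
    0.8825 ^ genericExponent k * 2.2667 * poisson (Real.exp (k + 1 / 2)) a.im

lemma shellMajorant_nonneg (k : ℕ) (a : ℂ) : 0 ≤ shellMajorant k a := by
  have := poisson_nonneg (Real.exp_pos (k + 1 / 2)).le a.im
  exact add_nonneg (indicatorPow_nonneg _ _ a) (by positivity)

lemma zeroWeight_le_shellMajorant {a : ℂ} (ha : xi a = 0) {k : ℕ} (hk : 8 ≤ k)
    (hlog : Real.log |a.im| ∈ Set.Icc (k : ℝ) (k + 1)) :
    zeroWeight a ≤ indicatorPow (levelZeros 34) 243 a + indicatorPow (levelZeros 42) 272 a +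
      shellMajorant k a := by
  have hlog8 : 8 ≤ Real.log |a.im| := le_trans (by exact_mod_cast hk) hlog.1
  have hlow := indicatorPow_nonneg (levelZeros 34) 243 a
  have hhigh := indicatorPow_nonneg (levelZeros 42) 272 a
  have hnear := indicatorPow_nonneg (nearLineZeros k) 336 a
  have hshell := shellMajorant_nonneg k a
  rcases le_or_gt (zeroLevel a) 34 with h34 | h34
  · have := zeroWeight_le_indicatorPow (Z := levelZeros 34) (n := 243) ha ⟨ha, hlog8, h34⟩
      (by push_cast; linarith [le_zeroLevel ha hlog8])
    linarith
  rcases le_or_gt (zeroLevel a) 42 with h42 | h42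
  · have := zeroWeight_le_indicatorPow (Z := levelZeros 42) (n := 272) ha ⟨ha, hlog8, h42⟩
      (by push_cast; linarith)
    linarith
  suffices zeroWeight a ≤ shellMajorant k a by linarith
  rcases le_or_gt (1 - a.re) (nearLineWidth k) with hre | hre
  · refine le_add_of_le_of_nonneg
      (zeroWeight_le_indicatorPow ha ⟨ha, hlog, hre⟩ (by push_cast; linarith)) ?_
    have := poisson_nonneg (Real.exp_pos (k + 1 / 2)).le a.im
    positivity
  · exact le_add_of_nonneg_of_le hnear
      (zeroWeight_le_of_nearLineWidth_le ha (by omega) hlog hre.le)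

/-- An upper bound for `zeroWeight`, to be summed term by term over the zeros. -/
noncomputable def zeroMajorant (a : ℂ) : ℝ :=
  0.8825 ^ 280 * 50 * poisson 60 a.im + 0.8825 ^ 287 * 2 * poisson (Real.exp 65) a.im +
    (indicatorPow (levelZeros 34) 243 a + indicatorPow (levelZeros 42) 272 a) +
      ∑ k ∈ Finset.Ico 8 65, shellMajorant k a

lemma zeroWeight_le_zeroMajorant {a : ℂ} (ha : xi a = 0) : zeroWeight a ≤ zeroMajorant a := by
  have hlevel := add_nonneg (indicatorPow_nonneg (levelZeros 34) 243 a)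
    (indicatorPow_nonneg (levelZeros 42) 272 a)
  have hshell : 0 ≤ ∑ k ∈ Finset.Ico 8 65, shellMajorant k a :=
    Finset.sum_nonneg fun k _ ↦ shellMajorant_nonneg k a
  have hlow : 0 ≤ 0.8825 ^ 280 * 50 * poisson 60 a.im :=
    mul_nonneg (by positivity) (poisson_nonneg (by norm_num) _)
  have hhigh : 0 ≤ 0.8825 ^ 287 * 2 * poisson (Real.exp 65) a.im :=
    mul_nonneg (by positivity) (poisson_nonneg (Real.exp_pos 65).le _)
  unfold zeroMajorant
  rcases le_or_gt (Real.log |a.im|) 8 with h8 | h8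
  · refine (zeroWeight_le_of_log_le_eight ha h8).trans ?_
    rw [add_assoc, add_assoc]
    exact le_add_of_nonneg_right (add_nonneg hhigh (add_nonneg hlevel hshell))
  rcases le_or_gt 65 (Real.log |a.im|) with h65 | h65
  · refine (zeroWeight_le_of_le_log ha h65).trans ?_
    rw [add_assoc]
    exact (le_add_of_nonneg_left hlow).trans (le_add_of_nonneg_right (add_nonneg hlevel hshell))
  have hlog : 0 ≤ Real.log |a.im| := by linarith
  have hk8 : 8 ≤ ⌊Real.log |a.im|⌋₊ := Nat.le_floor (by exact_mod_cast h8.le)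
  have hk65 : ⌊Real.log |a.im|⌋₊ < 65 := (Nat.floor_lt hlog).2 (by exact_mod_cast h65)
  have hterm := Finset.single_le_sum (f := fun k ↦ shellMajorant k a)
    (fun k _ ↦ shellMajorant_nonneg k a) (Finset.mem_Ico.2 ⟨hk8, hk65⟩)
  refine (zeroWeight_le_shellMajorant ha hk8
    ⟨Nat.floor_le hlog, (Nat.lt_floor_add_one (Real.log |a.im|)).le⟩).trans ?_
  have hpoisson := add_nonneg hlow hhigh
  exact add_le_add (le_add_of_nonneg_left hpoisson) hterm

lemma sum_xiOrder_mul_poisson_im_le {T : ℝ} (hT : 60 ≤ T) (S : Finset ℂ) :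
    ∑ a ∈ S, (xiOrder a : ℝ) * poisson T a.im ≤ Real.log (T / (2 * π)) / 2 + 0.13 := by
  have hT0 : 0 < T := by linarith
  exact ((summable_xiOrder_mul_poisson_im hT0).sum_le_tsum S fun a _ ↦
    mul_nonneg (Nat.cast_nonneg _) (poisson_nonneg hT0.le _)).trans
      (tsum_xiOrder_mul_poisson_im_le hT)

lemma sum_xiOrder_mul_poisson_exp_le {τ : ℝ} (hτ : 8 ≤ τ) (S : Finset ℂ) :
    ∑ a ∈ S, (xiOrder a : ℝ) * poisson (Real.exp τ) a.im ≤ τ / 2 - 0.7889 := by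
  linarith [sum_xiOrder_mul_poisson_im_le (T := Real.exp τ)
    (by linarith [le_exp_of_eight_le hτ]) S,
    log_exp_div_two_mul_pi_le τ]

lemma sum_xiOrder_mul_poisson_sixty_le (S : Finset ℂ) :
    ∑ a ∈ S, (xiOrder a : ℝ) * poisson 60 a.im ≤ 1.27 := by
  have hlog : Real.log 60 = 2 * Real.log 2 + Real.log 3 + Real.log 5 := by
    rw [show (60 : ℝ) = 2 ^ 2 * 3 * 5 by norm_num, Real.log_mul (by norm_num) (by norm_num),
      Real.log_mul (by norm_num) (by norm_num), Real.log_pow]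
    norm_num
  have h := sum_xiOrder_mul_poisson_im_le le_rfl S
  rw [Real.log_div (by norm_num) (by positivity), hlog] at h
  linarith [le_log_two_mul_pi, Real.log_two_lt_d9, Real.log_three_lt_d9, Real.log_five_lt_d9]

lemma sum_xiOrder_mul_shellMajorant_le {k : ℕ} (hk : k ∈ Finset.Ico 8 65) (S : Finset ℂ) :
    ∑ a ∈ S, (xiOrder a : ℝ) * shellMajorant k a ≤
      0.8825 ^ 336 * 1100 + 0.8825 ^ genericExponent k * 2.2667 * (k / 2 - 0.5389) := by
  obtain ⟨hk8, hk65⟩ := Finset.mem_Ico.1 hk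
  have hτ : (8 : ℝ) ≤ k + 1 / 2 := by
    have : (8 : ℝ) ≤ k := by exact_mod_cast hk8
    linarith
  simp only [shellMajorant, mul_add, Finset.sum_add_distrib, mul_left_comm (xiOrder _ : ℝ),
    ← Finset.mul_sum]
  gcongr
  · exact sum_xiOrder_mul_indicatorPow_le
      (fun S hS ↦ sum_xiOrder_le_of_subset_nearLineZeros ⟨hk8, by omega⟩ hS) _ S
  · linarith [sum_xiOrder_mul_poisson_exp_le hτ S]

/-- The bound for the sum of `zeroMajorant` over the zeros, as a rational number so that its
size can be decided by evaluation. -/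
def zeroSumBound : ℚ :=
  0.8825 ^ 280 * 50 * 1.27 + 0.8825 ^ 287 * 2 * (65 / 2 - 0.7889) +
    (0.8825 ^ 243 * 9 + 0.8825 ^ 272 * 45) +
      ∑ k ∈ Finset.Ico 8 65, ((0.8825 : ℚ) ^ 336 * 1100 +
        (0.8825 : ℚ) ^ genericExponent k * 2.2667 * ((k : ℚ) / 2 - 0.5389))

lemma zeroSumBound_le : zeroSumBound ≤ 1.2e-12 := by
  decide +kernel

lemma sum_xiOrder_mul_zeroWeight_le (S : Finset ℂ) (hS : ∀ a ∈ S, xi a = 0) :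
    ∑ a ∈ S, (xiOrder a : ℝ) * zeroWeight a ≤ 1.2e-12 := by
  calc ∑ a ∈ S, (xiOrder a : ℝ) * zeroWeight a
      ≤ ∑ a ∈ S, (xiOrder a : ℝ) * zeroMajorant a :=
        Finset.sum_le_sum fun a ha ↦
          mul_le_mul_of_nonneg_left (zeroWeight_le_zeroMajorant (hS a ha)) (Nat.cast_nonneg _)
    _ = 0.8825 ^ 280 * 50 * ∑ a ∈ S, (xiOrder a : ℝ) * poisson 60 a.im +
        0.8825 ^ 287 * 2 * ∑ a ∈ S, (xiOrder a : ℝ) * poisson (Real.exp 65) a.im +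
        (∑ a ∈ S, (xiOrder a : ℝ) * indicatorPow (levelZeros 34) 243 a +
          ∑ a ∈ S, (xiOrder a : ℝ) * indicatorPow (levelZeros 42) 272 a) +
        ∑ k ∈ Finset.Ico 8 65, ∑ a ∈ S, (xiOrder a : ℝ) * shellMajorant k a := by
        rw [Finset.sum_comm]
        simp only [zeroMajorant, mul_add, Finset.sum_add_distrib, Finset.mul_sum,
          mul_left_comm (xiOrder _ : ℝ)]
    _ ≤ 0.8825 ^ 280 * 50 * 1.27 + 0.8825 ^ 287 * 2 * (65 / 2 - 0.7889) +
        (0.8825 ^ 243 * 9 + 0.8825 ^ 272 * 45) +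
        ∑ k ∈ Finset.Ico 8 65, ((0.8825 : ℝ) ^ 336 * 1100 +
          (0.8825 : ℝ) ^ genericExponent k * 2.2667 * ((k : ℝ) / 2 - 0.5389)) := by
        gcongr with k hk
        · exact sum_xiOrder_mul_poisson_sixty_le S
        · exact sum_xiOrder_mul_poisson_exp_le (by norm_num) S
        · exact sum_xiOrder_mul_indicatorPow_le
            (fun S hS ↦ sum_xiOrder_le_of_subset_levelZeros_low hS) _ S
        · exact sum_xiOrder_mul_indicatorPow_le
            (fun S hS ↦ sum_xiOrder_le_of_subset_levelZeros_high hS) _ S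
        · exact sum_xiOrder_mul_shellMajorant_le hk S
    _ = zeroSumBound := by simp [zeroSumBound]
    _ ≤ 1.2e-12 := by
        have h := (Rat.cast_le (K := ℝ)).2 zeroSumBound_le
        rwa [Rat.cast_ofScientific] at h

/-! ### Dominated series and their Mellin transforms -/

section DominatedSeries

variable {ι E F : Type*} [NormedAddCommGroup E] [NormedAddCommGroup F]

lemma continuousOn_tsum_of_norm_le_mul_norm {X : Type*} [TopologicalSpace X] [CompleteSpace E]
    {U : Set X} {f : ι → X → E} {g : X → F} {c : ι → ℝ} (hc : Summable c)
    (hf : ∀ i, ContinuousOn (f i) U) (hg : ContinuousOn g U)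
    (hfg : ∀ i, ∀ x ∈ U, ‖f i x‖ ≤ c i * ‖g x‖) : ContinuousOn (fun x ↦ ∑' i, f i x) U := by
  intro x₀ hx₀
  have hnear : {x ∈ U | ‖g x‖ ≤ ‖g x₀‖ + 1} ∈ 𝓝[U] x₀ :=
    inter_mem self_mem_nhdsWithin ((hg x₀ hx₀).norm.eventually_le_const (lt_add_one _))
  have hcont : ContinuousOn (fun x ↦ ∑' i, f i x) {x ∈ U | ‖g x‖ ≤ ‖g x₀‖ + 1} := by
    refine continuousOn_tsum (fun i ↦ (hf i).mono (Set.sep_subset _ _))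
      (hc.abs.mul_right (‖g x₀‖ + 1)) fun i x hx ↦ (hfg i x hx.1).trans ?_
    exact mul_le_mul (le_abs_self _) hx.2 (norm_nonneg _) (abs_nonneg _)
  exact (hcont x₀ ⟨hx₀, (lt_add_one _).le⟩).mono_of_mem_nhdsWithin hnear

variable [NormedSpace ℂ E] [NormedSpace ℂ F]

lemma hasMellin_tsum [CompleteSpace E] [Countable ι] {f : ι → ℝ → E} {g : ℝ → F} {c : ι → ℝ} {s : ℂ}
    {m : ι → E} (hc : Summable c) (hg : MellinConvergent g s)
    (hfg : ∀ i t, 0 < t → ‖f i t‖ ≤ c i * ‖g t‖) (hm : ∀ i, HasMellin (f i) s (m i)) :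
    HasMellin (fun t ↦ ∑' i, f i t) s (∑' i, m i) := by
  have hbound : ∀ i, ∀ᵐ t : ℝ ∂volume.restrict (Set.Ioi 0),
      ‖(t : ℂ) ^ (s - 1) • f i t‖ ≤ c i * ‖(t : ℂ) ^ (s - 1) • g t‖ := by
    intro i
    filter_upwards [ae_restrict_mem measurableSet_Ioi] with t ht
    rw [norm_smul, norm_smul, mul_left_comm]
    gcongr
    exact hfg i t ht
  have hint : Integrable (fun t : ℝ ↦ ∑' i, c i * ‖(t : ℂ) ^ (s - 1) • g t‖)
      (volume.restrict (Set.Ioi 0)) := by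
    simp only [tsum_mul_right]
    exact Integrable.const_mul (Integrable.norm hg) _
  have hsum : ∀ᵐ t : ℝ ∂volume.restrict (Set.Ioi 0),
      HasSum (fun i ↦ (t : ℂ) ^ (s - 1) • f i t) ((t : ℂ) ^ (s - 1) • ∑' i, f i t) := by
    filter_upwards [ae_restrict_mem measurableSet_Ioi] with t ht
    exact (Summable.of_norm_bounded (hc.mul_right _) fun i ↦ hfg i t ht).hasSum.const_smul _
  refine ⟨?_, ?_⟩
  · refine Integrable.mono' hint (aestronglyMeasurable_of_tendsto_ae atTop
      (fun S ↦ Finset.aestronglyMeasurable_fun_sum S fun i _ ↦ (hm i).1.1) hsum) ?_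
    filter_upwards [hsum, ae_all_iff.2 hbound] with t ht hle
    rw [← ht.tsum_eq]
    exact tsum_of_norm_bounded (hc.mul_right _).hasSum hle
  · have h := hasSum_integral_of_dominated_convergence _ (fun i ↦ (hm i).1.1) hbound
      (ae_of_all _ fun t ↦ hc.mul_right _) hint hsum
    exact (h.congr_fun fun i ↦ (hm i).2.symm).tsum_eq.symm

end DominatedSeries

/-! ### Terms of the explicit formula and their Mellin transforms -/

section MellinTerms

variable {f g : ℝ → ℂ} {s m n : ℂ}

lemma hasMellin_fun_add (hf : HasMellin f s m) (hg : HasMellin g s n) :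
    HasMellin (fun t ↦ f t + g t) s (m + n) := by
  simpa only [hf.2, hg.2] using hasMellin_add hf.1 hg.1

lemma hasMellin_fun_sub (hf : HasMellin f s m) (hg : HasMellin g s n) :
    HasMellin (fun t ↦ f t - g t) s (m - n) := by
  simpa only [hf.2, hg.2] using hasMellin_sub hf.1 hg.1

lemma hasMellin_const_mul (c : ℂ) (hf : HasMellin f s m) :
    HasMellin (fun t ↦ c * f t) s (c * m) := by
  simpa only [hf.2, smul_eq_mul] using hasMellin_const_smul hf.1 c

lemma hasMellin_comp_mul_left (hf : HasMellin f s m) {a : ℝ} (ha : 0 < a) :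
    HasMellin (fun t ↦ f (a * t)) s ((a : ℂ) ^ (-s) * m) :=
  ⟨(MellinConvergent.comp_mul_left ha).2 hf.1, by
    rw [mellin_comp_mul_left f s ha, hf.2, smul_eq_mul]⟩

/-- The power `t ^ (-ω)` cut off to `(0, 1]`. In terms of `x = t⁻¹` this is `x ^ ω` for `x ≥ 1`. -/
noncomputable def truncCpow (ω : ℂ) (t : ℝ) : ℂ :=
  (Set.Ioc (0 : ℝ) 1).indicator (fun t : ℝ ↦ (t : ℂ) ^ (-ω)) t

lemma truncCpow_of_mem (ω : ℂ) {t : ℝ} (ht : t ∈ Set.Ioc (0 : ℝ) 1) :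
    truncCpow ω t = (t : ℂ) ^ (-ω) :=
  Set.indicator_of_mem ht _

lemma truncCpow_of_notMem (ω : ℂ) {t : ℝ} (ht : t ∉ Set.Ioc (0 : ℝ) 1) : truncCpow ω t = 0 :=
  Set.indicator_of_notMem ht _

lemma truncCpow_inv (ω : ℂ) {x : ℝ} (hx : 1 ≤ x) : truncCpow ω x⁻¹ = (x : ℂ) ^ ω := by
  have hx0 : 0 < x := by linarith
  rw [truncCpow_of_mem ω ⟨inv_pos.2 hx0, inv_le_one_of_one_le₀ hx⟩, ofReal_inv, cpow_neg,
    inv_cpow _ _ (by rw [arg_ofReal_of_nonneg hx0.le]; exact Real.pi_pos.ne), inv_inv]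

lemma norm_truncCpow_of_mem (ω : ℂ) {t : ℝ} (ht : t ∈ Set.Ioc (0 : ℝ) 1) :
    ‖truncCpow ω t‖ = t ^ (-ω.re) := by
  rw [truncCpow_of_mem ω ht, norm_cpow_eq_rpow_re_of_pos ht.1, neg_re]

lemma norm_truncCpow_le {ω b : ℂ} (h : ω.re ≤ b.re) (t : ℝ) :
    ‖truncCpow ω t‖ ≤ ‖truncCpow b t‖ := by
  by_cases ht : t ∈ Set.Ioc (0 : ℝ) 1
  · rw [norm_truncCpow_of_mem ω ht, norm_truncCpow_of_mem b ht]
    exact Real.rpow_le_rpow_of_exponent_ge ht.1 ht.2 (neg_le_neg h)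
  · rw [truncCpow_of_notMem ω ht, truncCpow_of_notMem b ht]

lemma continuousOn_truncCpow (ω : ℂ) : ContinuousOn (truncCpow ω) (Set.Ioo 0 1) := by
  refine ContinuousOn.congr (fun t ht ↦ ?_) fun t ht ↦ truncCpow_of_mem ω ⟨ht.1, ht.2.le⟩
  exact (continuousAt_ofReal_cpow_const t (-ω) (Or.inr ht.1.ne')).continuousWithinAt

lemma hasMellin_truncCpow {ω s : ℂ} (h : ω.re < s.re) : HasMellin (truncCpow ω) s (1 / (s - ω)) :=
  hasMellin_cpow_Ioc (-ω) (by rwa [neg_re, ← sub_eq_add_neg, sub_pos])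

/-- The contribution of a zero `ω` of `ζ` to the explicit formula: in terms of `x = t⁻¹ ≥ 1` it is
`∫ (u ^ ω / ω) du` over `[1, x]` up to a constant depending on `ω`. -/
noncomputable def zeroTerm (ω : ℂ) (t : ℝ) : ℂ :=
  1 / (ω * (ω + 1)) * (truncCpow (ω + 1) t - truncCpow 0 t)

lemma continuousOn_zeroTerm (ω : ℂ) : ContinuousOn (zeroTerm ω) (Set.Ioo 0 1) :=
  continuousOn_const.mul ((continuousOn_truncCpow _).sub (continuousOn_truncCpow _))

lemma norm_zeroTerm_le {ω b : ℂ} (hω : ω.re + 1 ≤ b.re) (hb : 0 ≤ b.re) (t : ℝ) :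
    ‖zeroTerm ω t‖ ≤ 2 / ‖ω * (ω + 1)‖ * ‖truncCpow b t‖ := by
  rw [zeroTerm, norm_mul, norm_div, norm_one, div_mul_eq_mul_div, div_mul_eq_mul_div, one_mul,
    two_mul]
  gcongr
  exact (norm_sub_le _ _).trans (add_le_add (norm_truncCpow_le (by simpa using hω) t)
    (norm_truncCpow_le (by simpa using hb) t))

lemma hasMellin_zeroTerm {ω s : ℂ} (hω : ω ≠ 0) (hω1 : ω + 1 ≠ 0) (h : ω.re + 1 < s.re)
    (hs : 1 < s.re) :
    HasMellin (zeroTerm ω) s ((1 / (s - 1 - ω) + 1 / ω) * (1 / ((s - 1) * s))) := by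
  have hs0 : s ≠ 0 := ne_of_apply_ne re (by rw [zero_re]; linarith)
  have hs1 : s - 1 ≠ 0 := ne_of_apply_ne re (by rw [sub_re, one_re, zero_re]; linarith)
  have hsω : s - 1 - ω ≠ 0 := ne_of_apply_ne re (by rw [sub_re, sub_re, one_re, zero_re]; linarith)
  convert hasMellin_const_mul (1 / (ω * (ω + 1))) (hasMellin_fun_sub
    (hasMellin_truncCpow (ω := ω + 1) (s := s) (by simpa using h))
    (hasMellin_truncCpow (ω := 0) (s := s) (by rw [zero_re]; linarith))) using 1
  · rfl
  rw [sub_zero, show s - (ω + 1) = s - 1 - ω by ring]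
  field_simp
  ring

/-- The contribution `Λ n * (x - n)⁺` of `n` to `psiOne x`. -/
noncomputable def psiOneTerm (n : ℕ) (x : ℝ) : ℝ := Λ n * max (x - n) 0

/-- The integral `ψ₁` of `ψ` over `[0, x]`. -/
noncomputable def psiOne (x : ℝ) : ℝ := ∑' n, psiOneTerm n x

lemma continuousOn_psiOneTerm_inv (n : ℕ) :
    ContinuousOn (fun t : ℝ ↦ (psiOneTerm n t⁻¹ : ℂ)) {0}ᶜ := by
  unfold psiOneTerm
  exact continuous_ofReal.comp_continuousOn (continuousOn_const.mul
    ((continuousOn_inv₀.sub continuousOn_const).sup continuousOn_const))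

lemma le_inv_of_natCast_mul_mem_Ioc {n : ℕ} (hn : 0 < n) {t : ℝ}
    (ht : n * t ∈ Set.Ioc (0 : ℝ) 1) : n ≤ t⁻¹ := by
  have ht0 : 0 < t := (mul_pos_iff_of_pos_left (by exact_mod_cast hn)).1 ht.1
  rw [← one_div, le_div_iff₀ ht0]
  exact ht.2

lemma psiOneTerm_inv_of_mem {n : ℕ} (hn : 0 < n) {t : ℝ} (ht : n * t ∈ Set.Ioc (0 : ℝ) 1) :
    psiOneTerm n t⁻¹ = Λ n * (t⁻¹ - n) := by
  rw [psiOneTerm, max_eq_left (sub_nonneg.2 (le_inv_of_natCast_mul_mem_Ioc hn ht))]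

lemma psiOneTerm_inv_of_notMem {n : ℕ} {t : ℝ} (ht : n * t ∉ Set.Ioc (0 : ℝ) 1) :
    psiOneTerm n t⁻¹ = 0 := by
  rcases Nat.eq_zero_or_pos n with rfl | hn
  · simp [psiOneTerm]
  have hn0 : (0 : ℝ) < n := by exact_mod_cast hn
  have : t⁻¹ ≤ n := by
    rcases le_or_gt t 0 with ht0 | ht0
    · exact (inv_nonpos.2 ht0).trans hn0.le
    · rw [inv_le_iff_one_le_mul₀ ht0]
      exact (not_le.1 fun h ↦ ht ⟨mul_pos hn0 ht0, h⟩).le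
  rw [psiOneTerm, max_eq_right (by linarith), mul_zero]

lemma psiOneTerm_inv_eq {n : ℕ} (hn : 0 < n) (t : ℝ) : (psiOneTerm n t⁻¹ : ℂ) =
    ((Λ n * n : ℝ) : ℂ) * (truncCpow 1 (n * t) - truncCpow 0 (n * t)) := by
  by_cases ht : n * t ∈ Set.Ioc (0 : ℝ) 1
  · have hn0 : (n : ℂ) ≠ 0 := by exact_mod_cast hn.ne'
    rw [psiOneTerm_inv_of_mem hn ht, truncCpow_of_mem 1 ht, truncCpow_of_mem 0 ht, neg_zero,
      cpow_zero, cpow_neg_one]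
    push_cast
    field_simp
  · rw [psiOneTerm_inv_of_notMem ht, truncCpow_of_notMem 1 ht, truncCpow_of_notMem 0 ht]
    simp

lemma hasMellin_psiOneTerm_inv (n : ℕ) {s : ℂ} (hs : 1 < s.re) :
    HasMellin (fun t ↦ (psiOneTerm n t⁻¹ : ℂ)) s
      (LSeries.term (fun n ↦ (Λ n : ℂ)) (s - 1) n * (1 / ((s - 1) * s))) := by
  have hdiff := hasMellin_fun_sub (hasMellin_truncCpow (ω := 1) (s := s) (by rwa [one_re]))
    (hasMellin_truncCpow (ω := 0) (s := s) (by rw [zero_re]; linarith))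
  rcases Nat.eq_zero_or_pos n with rfl | hn
  · simpa [psiOneTerm] using hasMellin_const_mul 0 hdiff
  have hn0 : (n : ℂ) ≠ 0 := by exact_mod_cast hn.ne'
  have hns : (n : ℂ) ^ s ≠ 0 := by simp [cpow_eq_zero_iff, hn0]
  have hs0 : s ≠ 0 := ne_of_apply_ne re (by rw [zero_re]; linarith)
  have hs1 : s - 1 ≠ 0 := ne_of_apply_ne re (by rw [sub_re, one_re, zero_re]; linarith)
  simp only [psiOneTerm_inv_eq hn]
  convert hasMellin_const_mul ((Λ n * n : ℝ) : ℂ)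
    (hasMellin_comp_mul_left hdiff (a := n) (by exact_mod_cast hn)) using 1
  rw [LSeries.term_of_ne_zero hn.ne', cpow_sub _ _ hn0, cpow_one, cpow_neg]
  push_cast
  field_simp
  ring

lemma norm_psiOneTerm_inv_le (n : ℕ) {b : ℝ} (hb : 1 ≤ b) {t : ℝ} (ht : 0 < t) :
    ‖(psiOneTerm n t⁻¹ : ℂ)‖ ≤ Λ n * (n : ℝ) ^ (1 - b) * ‖truncCpow b t‖ := by
  have hΛ : 0 ≤ Λ n := ArithmeticFunction.vonMangoldt_nonneg
  by_cases hnt : n * t ∈ Set.Ioc (0 : ℝ) 1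
  · have hn : 0 < n := by exact_mod_cast (pos_iff_pos_of_mul_pos hnt.1).2 ht
    have hn1 : (1 : ℝ) ≤ n := by exact_mod_cast hn
    have ht1 : t ≤ 1 := le_trans (le_mul_of_one_le_left ht.le hn1) hnt.2
    rw [psiOneTerm_inv_of_mem hn hnt, norm_truncCpow_of_mem _ ⟨ht, ht1⟩, ofReal_re, norm_real,
      norm_mul, Real.norm_of_nonneg hΛ, mul_assoc]
    gcongr
    have := le_inv_of_natCast_mul_mem_Ioc hn hnt
    calc ‖t⁻¹ - n‖ ≤ t⁻¹ := by
          rw [Real.norm_of_nonneg (by linarith)]; linarith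
      _ ≤ (n * t) ^ (1 - b) * t⁻¹ := by
          exact le_mul_of_one_le_left (inv_pos.2 ht).le
            (Real.one_le_rpow_of_pos_of_le_one_of_nonpos hnt.1 hnt.2 (by linarith))
      _ = (n : ℝ) ^ (1 - b) * t ^ (-b) := by
          rw [Real.mul_rpow (by linarith) ht.le, mul_assoc, ← Real.rpow_neg_one t,
            ← Real.rpow_add ht]
          ring_nf
  · rw [psiOneTerm_inv_of_notMem hnt, ofReal_zero, norm_zero]
    positivity

end MellinTerms

/-! ### The Mellin transform of the explicit formula -/

/-- The set of zeros of `ξ`, that is, of nontrivial zeros of `ζ`. -/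
def xiZeros : Set ℂ := {a | xi a = 0}

instance : Countable xiZeros :=
  (Set.countable_iUnion fun n : ℕ ↦ (xiZerosInBall n).finite_toSet.countable).mono fun a ha ↦
    let ⟨n, hn⟩ := exists_nat_ge ‖a‖
    Set.mem_iUnion.2 ⟨n, mem_xiZerosInBall.2 ⟨ha, hn⟩⟩

lemma tsum_xiZeros (g : ℂ → ℂ) :
    ∑' a : xiZeros, (xiOrder (a : ℂ) : ℂ) * g a = ∑' a, (xiOrder a : ℂ) * g a :=
  tsum_subtype_eq_of_support_subset (f := fun a : ℂ ↦ (xiOrder a : ℂ) * g a) fun a ha ↦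
    by_contra fun h ↦ ha (by simp [xiOrder_eq_zero h])

lemma ne_zero_of_xi_eq_zero {a : ℂ} (ha : xi a = 0) : a ≠ 0 := by
  rintro rfl
  exact xi_zero_ne_zero ha

lemma add_one_ne_zero_of_xi_eq_zero {a : ℂ} (ha : xi a = 0) : a + 1 ≠ 0 :=
  ne_of_apply_ne re (by
    rw [add_re, one_re, zero_re]
    linarith [(re_mem_Ioo_of_xi_eq_zero ha).1])

lemma norm_sq_le_norm_mul_add_one {a : ℂ} (ha : 0 ≤ a.re) : ‖a‖ ^ 2 ≤ ‖a * (a + 1)‖ := by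
  have : ‖a‖ ≤ ‖a + 1‖ := by
    rw [← sq_le_sq₀ (norm_nonneg _) (norm_nonneg _), ← normSq_eq_norm_sq, ← normSq_eq_norm_sq,
      normSq_apply, normSq_apply, add_re, add_im, one_re, one_im]
    nlinarith
  rw [norm_mul, sq]
  gcongr

lemma summable_xiOrder_mul_div_norm (K : ℝ) :
    Summable fun a : xiZeros ↦ (xiOrder (a : ℂ) : ℝ) * (K / ‖(a : ℂ) * (a + 1)‖) := by
  refine (summable_xiOrder_mul_of_abs_le (g := fun a ↦ K / ‖a * (a + 1)‖) 0 |K|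
    fun a ha h0 ↦ ?_).subtype xiZeros
  rw [abs_div, abs_norm]
  gcongr
  exact norm_sq_le_norm_mul_add_one (re_mem_Ioo_of_xi_eq_zero ha).1.le

/-- The trivial zeros `-2, -4, -6, …` of `ζ`. -/
noncomputable def trivialZero (j : ℕ) : ℂ := -(2 * (j + 1))

lemma trivialZero_re (j : ℕ) : (trivialZero j).re = -(2 * (j + 1)) := by simp [trivialZero]

lemma trivialZero_ne_zero (j : ℕ) : trivialZero j ≠ 0 :=
  neg_ne_zero.2 (mul_ne_zero two_ne_zero (Nat.cast_add_one_ne_zero j))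

lemma trivialZero_re_le (j : ℕ) : (trivialZero j).re ≤ -2 := by
  rw [trivialZero_re]
  linarith [Nat.cast_nonneg (α := ℝ) j]

lemma trivialZero_add_one_ne_zero (j : ℕ) : trivialZero j + 1 ≠ 0 :=
  ne_of_apply_ne re (by
    rw [add_re, one_re, zero_re]
    linarith [trivialZero_re_le j])

lemma add_one_sq_le_norm_trivialZero (j : ℕ) :
    ((j : ℝ) + 1) ^ 2 ≤ ‖trivialZero j * (trivialZero j + 1)‖ := by
  have : trivialZero j * (trivialZero j + 1) =
      ((2 * ((j : ℝ) + 1) * (2 * j + 1) : ℝ) : ℂ) := by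
    rw [trivialZero]
    push_cast
    ring
  rw [this, norm_real, Real.norm_of_nonneg (by positivity)]
  nlinarith [Nat.cast_nonneg (α := ℝ) j]

lemma div_norm_trivialZero_le {K : ℝ} (hK : 0 ≤ K) (j : ℕ) :
    K / ‖trivialZero j * (trivialZero j + 1)‖ ≤ K * (1 / ((j : ℝ) + 1) ^ 2) := by
  rw [mul_one_div]
  gcongr
  exact add_one_sq_le_norm_trivialZero j

lemma summable_div_norm_trivialZero {K : ℝ} (hK : 0 ≤ K) :
    Summable fun j : ℕ ↦ K / ‖trivialZero j * (trivialZero j + 1)‖ :=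
  .of_nonneg_of_le (fun j ↦ by positivity) (div_norm_trivialZero_le hK)
    (summable_one_div_add_one_sq.mul_left K)

lemma one_div_sub_trivialZero_succ {w : ℂ} (hw : 0 < w.re) (k : ℕ) :
    1 / (w - trivialZero (k + 1)) + 1 / trivialZero (k + 1) =
      -((digammaTerm k (w / 2 + 1) - digammaTerm k 1) / 2) := by
  have hwk : w + 2 * (k + 2) ≠ 0 := ne_of_apply_ne re (by
    simp only [add_re, mul_re, natCast_re, natCast_im, re_ofNat, im_ofNat, add_im, zero_re]
    linarith [Nat.cast_nonneg (α := ℝ) k])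
  have hk : (k : ℂ) + 2 ≠ 0 := by exact_mod_cast (k + 1).succ_ne_zero
  rw [trivialZero, digammaTerm, digammaTerm, Nat.cast_add, Nat.cast_one,
    show w - -(2 * ((k : ℂ) + 1 + 1)) = w + 2 * (k + 2) by ring,
    show (k : ℂ) + 1 + (w / 2 + 1) = (w + 2 * (k + 2)) / 2 by ring,
    show (k : ℂ) + 1 + 1 = k + 2 by ring]
  field_simp
  ring

lemma tsum_one_div_sub_trivialZero {w : ℂ} (hw : 0 < w.re) :
    ∑' j, (1 / (w - trivialZero j) + 1 / trivialZero j) =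
      digamma 1 / 2 - digamma (w / 2 + 1) / 2 := by
  have hz : 0 < (w / 2 + 1).re := by rw [add_re, div_ofNat_re, one_re]; linarith
  have h1 : 0 < (1 : ℂ).re := by rw [one_re]; exact one_pos
  have hsum := summable_digammaTerm hz
  have hsum1 := summable_digammaTerm h1
  have hsummable : Summable fun j ↦ 1 / (w - trivialZero j) + 1 / trivialZero j :=
    (summable_nat_add_iff 1).1 <| ((hsum.sub hsum1).div_const 2).neg.congr fun k ↦
      (one_div_sub_trivialZero_succ hw k).symm
  have hw2 : w + 2 ≠ 0 := ne_of_apply_ne re (by rw [add_re, re_ofNat, zero_re]; linarith)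
  rw [hsummable.tsum_eq_zero_add, tsum_congr (one_div_sub_trivialZero_succ hw), tsum_neg,
    tsum_div_const, hsum.tsum_sub hsum1, digamma_eq_neg_one_div_add_tsum hz,
    digamma_eq_neg_one_div_add_tsum h1, trivialZero, Nat.cast_zero,
    show w - -(2 * (0 + 1)) = w + 2 by ring, show 1 / (w / 2 + 1) = 2 / (w + 2) by field_simp]
  ring

/-- The value at `0` of `-ζ'/ζ(s) - 1/(s - 1)`. -/
noncomputable def regularPartConst : ℂ :=
  -(Real.log π : ℂ) / 2 + digamma 1 / 2 - logDeriv xi 0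

/-- The contributions of the pole of `ζ` and of the constant term of `-ζ'/ζ` to `psiOne t⁻¹`. -/
noncomputable def mainTerm (t : ℝ) : ℂ :=
  1 / 2 * truncCpow 2 t - truncCpow 1 t + 1 / 2 * truncCpow 0 t +
    regularPartConst * (truncCpow 1 t - truncCpow 0 t)

/-- The difference of the two sides of the explicit formula for `psiOne`, as a function of
`t = x⁻¹`. -/
noncomputable def explicitFormulaDefect (t : ℝ) : ℂ :=
  ∑' n, (psiOneTerm n t⁻¹ : ℂ) - mainTerm t +
    ∑' a : xiZeros, (xiOrder (a : ℂ) : ℂ) * zeroTerm a t + ∑' j, zeroTerm (trivialZero j) t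

lemma summable_vonMangoldt_mul_rpow {σ : ℝ} (hσ : 1 < σ) :
    Summable fun n : ℕ ↦ Λ n * (n : ℝ) ^ (-σ) := by
  simpa using (hasSum_reNegLogDerivZeta hσ 0).summable

lemma norm_psiOneTerm_inv_le_truncCpow (n : ℕ) {t : ℝ} (ht : 0 < t) :
    ‖(psiOneTerm n t⁻¹ : ℂ)‖ ≤ Λ n * (n : ℝ) ^ (-(3 / 2) : ℝ) * ‖truncCpow (5 / 2 : ℝ) t‖ := by
  have := norm_psiOneTerm_inv_le n (b := 5 / 2) (by norm_num) ht
  norm_num at this ⊢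
  exact this

lemma norm_xiOrder_mul_zeroTerm_le (a : xiZeros) (t : ℝ) :
    ‖(xiOrder (a : ℂ) : ℂ) * zeroTerm a t‖ ≤
      (xiOrder (a : ℂ) : ℝ) * (2 / ‖(a : ℂ) * (a + 1)‖) * ‖truncCpow (5 / 2 : ℝ) t‖ := by
  rw [norm_mul, norm_natCast, mul_assoc]
  gcongr
  refine norm_zeroTerm_le ?_ ?_ t <;> rw [ofReal_re]
  · linarith [(re_mem_Ioo_of_xi_eq_zero a.2).2]
  · norm_num

lemma norm_zeroTerm_trivialZero_le (j : ℕ) (t : ℝ) : ‖zeroTerm (trivialZero j) t‖ ≤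
    2 / ‖trivialZero j * (trivialZero j + 1)‖ * ‖truncCpow (5 / 2 : ℝ) t‖ := by
  refine norm_zeroTerm_le ?_ ?_ t <;> rw [ofReal_re]
  · linarith [trivialZero_re_le j]
  · norm_num

lemma continuousOn_mainTerm : ContinuousOn mainTerm (Set.Ioo 0 1) :=
  (((continuousOn_const.mul (continuousOn_truncCpow 2)).sub (continuousOn_truncCpow 1)).add
    (continuousOn_const.mul (continuousOn_truncCpow 0))).add
      (continuousOn_const.mul ((continuousOn_truncCpow 1).sub (continuousOn_truncCpow 0)))

lemma continuousOn_explicitFormulaDefect : ContinuousOn explicitFormulaDefect (Set.Ioo 0 1) := by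
  have hpow := continuousOn_truncCpow (5 / 2 : ℝ)
  have hpsi := continuousOn_tsum_of_norm_le_mul_norm
    (summable_vonMangoldt_mul_rpow (by norm_num))
    (fun n ↦ (continuousOn_psiOneTerm_inv n).mono fun t (ht : t ∈ Set.Ioo 0 1) ↦ ht.1.ne')
    hpow fun n t ht ↦ norm_psiOneTerm_inv_le_truncCpow n ht.1
  have hzeros := continuousOn_tsum_of_norm_le_mul_norm
    (summable_xiOrder_mul_div_norm 2)
    (fun a ↦ continuousOn_const.mul (continuousOn_zeroTerm a)) hpow
    fun a t _ ↦ norm_xiOrder_mul_zeroTerm_le a t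
  have htrivial := continuousOn_tsum_of_norm_le_mul_norm
    (summable_div_norm_trivialZero zero_le_two)
    (fun j ↦ continuousOn_zeroTerm (trivialZero j)) hpow
    fun j t _ ↦ norm_zeroTerm_trivialZero_le j t
  exact ((hpsi.sub continuousOn_mainTerm).add hzeros).add htrivial

lemma mellinConvergent_truncCpow_five_halves {s : ℂ} (hs : 5 / 2 < s.re) :
    MellinConvergent (truncCpow (5 / 2 : ℝ)) s :=
  (hasMellin_truncCpow (by rwa [ofReal_re])).1

lemma hasMellin_tsum_psiOneTerm {s : ℂ} (hs : 5 / 2 < s.re) :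
    HasMellin (fun t ↦ ∑' n, (psiOneTerm n t⁻¹ : ℂ)) s
      ((1 / (s - 2) - (Real.log π : ℂ) / 2 + digamma ((s - 1) / 2 + 1) / 2 -
        logDeriv xi (s - 1)) * (1 / ((s - 1) * s))) := by
  have hw : 1 < (s - 1).re := by rw [sub_re, one_re]; linarith
  convert hasMellin_tsum (summable_vonMangoldt_mul_rpow (by norm_num))
    (mellinConvergent_truncCpow_five_halves hs)
    (fun n t ht ↦ norm_psiOneTerm_inv_le_truncCpow n ht)
    (fun n ↦ hasMellin_psiOneTerm_inv n (s := s) (by linarith)) using 1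
  rw [tsum_mul_right, show s - 2 = s - 1 - 1 by ring, ← neg_deriv_riemannZeta_div hw,
    ← ArithmeticFunction.LSeries_vonMangoldt_eq_deriv_riemannZeta_div hw]
  rfl

lemma hasMellin_mainTerm {s : ℂ} (hs : 2 < s.re) :
    HasMellin mainTerm s ((1 / (s - 2) + regularPartConst) * (1 / ((s - 1) * s))) := by
  have h0 := hasMellin_truncCpow (ω := 0) (s := s) (by rw [zero_re]; linarith)
  have h1 := hasMellin_truncCpow (ω := 1) (s := s) (by rw [one_re]; linarith)
  have h2 := hasMellin_truncCpow (ω := 2) (s := s) (by rw [re_ofNat]; linarith)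
  have hs0 : s ≠ 0 := ne_of_apply_ne re (by rw [zero_re]; linarith)
  have hs1 : s - 1 ≠ 0 := ne_of_apply_ne re (by rw [sub_re, one_re, zero_re]; linarith)
  have hs2 : s - 2 ≠ 0 := ne_of_apply_ne re (by rw [sub_re, re_ofNat, zero_re]; linarith)
  convert hasMellin_fun_add (hasMellin_fun_add (hasMellin_fun_sub (hasMellin_const_mul (1 / 2) h2)
    h1) (hasMellin_const_mul (1 / 2) h0)) (hasMellin_const_mul regularPartConst
      (hasMellin_fun_sub h1 h0)) using 1
  · rfl
  rw [sub_zero]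
  field_simp
  ring

lemma hasMellin_tsum_zeroTerm {s : ℂ} (hs : 5 / 2 < s.re) :
    HasMellin (fun t ↦ ∑' a : xiZeros, (xiOrder (a : ℂ) : ℂ) * zeroTerm a t) s
      ((logDeriv xi (s - 1) - logDeriv xi 0) * (1 / ((s - 1) * s))) := by
  convert hasMellin_tsum (summable_xiOrder_mul_div_norm 2)
    (mellinConvergent_truncCpow_five_halves hs)
    (fun a t _ ↦ norm_xiOrder_mul_zeroTerm_le a t)
    (fun a ↦ hasMellin_const_mul _ (hasMellin_zeroTerm (ne_zero_of_xi_eq_zero a.2)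
      (add_one_ne_zero_of_xi_eq_zero a.2) (s := s)
      (by linarith [(re_mem_Ioo_of_xi_eq_zero a.2).2]) (by linarith))) using 1
  have hw : 1 ≤ (s - 1).re := by rw [sub_re, one_re]; linarith
  simp only [← mul_assoc, tsum_mul_right]
  rw [logDeriv_xi_eq_add_tsum (xi_ne_zero_of_one_le_re hw), add_sub_cancel_left,
    tsum_xiZeros fun a ↦ 1 / (s - 1 - a) + 1 / a]

lemma hasMellin_tsum_zeroTerm_trivialZero {s : ℂ} (hs : 5 / 2 < s.re) :
    HasMellin (fun t ↦ ∑' j, zeroTerm (trivialZero j) t) s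
      ((digamma 1 / 2 - digamma ((s - 1) / 2 + 1) / 2) * (1 / ((s - 1) * s))) := by
  convert hasMellin_tsum (summable_div_norm_trivialZero zero_le_two)
    (mellinConvergent_truncCpow_five_halves hs) (fun j t _ ↦ norm_zeroTerm_trivialZero_le j t)
    (fun j ↦ hasMellin_zeroTerm (trivialZero_ne_zero j) (trivialZero_add_one_ne_zero j)
      (s := s) (by linarith [trivialZero_re_le j]) (by linarith)) using 1
  rw [tsum_mul_right, tsum_one_div_sub_trivialZero (by rw [sub_re, one_re]; linarith)]

lemma hasMellin_explicitFormulaDefect {s : ℂ} (hs : 5 / 2 < s.re) :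
    HasMellin explicitFormulaDefect s 0 := by
  convert hasMellin_fun_add (hasMellin_fun_add (hasMellin_fun_sub (hasMellin_tsum_psiOneTerm hs)
    (hasMellin_mainTerm (by linarith))) (hasMellin_tsum_zeroTerm hs))
    (hasMellin_tsum_zeroTerm_trivialZero hs) using 1
  · rfl
  rw [regularPartConst]
  ring

lemma explicitFormulaDefect_eq_zero {t : ℝ} (ht : t ∈ Set.Ioo (0 : ℝ) 1) :
    explicitFormulaDefect t = 0 := by
  have hmellin (y : ℝ) : mellin explicitFormulaDefect ((3 : ℝ) + y * I) = 0 :=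
    (hasMellin_explicitFormulaDefect (by simp; norm_num)).2
  have hvert : VerticalIntegrable (mellin explicitFormulaDefect) 3 := by
    simp only [VerticalIntegrable, hmellin]
    exact integrable_zero _ _ _
  rw [← mellinInv_mellin_eq 3 explicitFormulaDefect ht.1
    (hasMellin_explicitFormulaDefect (by simp; norm_num)).1 hvert
    (continuousOn_explicitFormulaDefect.continuousAt (Ioo_mem_nhds ht.1 ht.2))]
  simp only [mellinInv, hmellin, smul_zero, integral_zero]

/-! ### The explicit formula for the integral of `ψ` -/

/-- The function `x ^ (ω + 1) / (ω * (ω + 1))`, a primitive of `x ^ ω / ω`. A zero `ω` of `ζ`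
contributes it, up to sign and an additive constant, to `psiOne x`. -/
noncomputable def zeroPrimitive (ω : ℂ) (x : ℝ) : ℂ := 1 / (ω * (ω + 1)) * (x : ℂ) ^ (ω + 1)

lemma zeroTerm_inv (ω : ℂ) {x : ℝ} (hx : 1 ≤ x) :
    zeroTerm ω x⁻¹ = zeroPrimitive ω x - 1 / (ω * (ω + 1)) := by
  rw [zeroTerm, zeroPrimitive, truncCpow_inv _ hx, truncCpow_inv _ hx, cpow_zero, mul_sub_one]

lemma norm_zeroPrimitive (ω : ℂ) {x : ℝ} (hx : 0 < x) :
    ‖zeroPrimitive ω x‖ = x ^ (ω.re + 1) / ‖ω * (ω + 1)‖ := by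
  rw [zeroPrimitive, norm_mul, norm_div, norm_one, norm_cpow_eq_rpow_re_of_pos hx, add_re, one_re,
    one_div_mul_eq_div]

lemma norm_zeroPrimitive_sub_le {ω : ℂ} {x y M : ℝ} (hx : 0 < x) (hy : 0 < y)
    (hxM : x ^ (ω.re + 1) ≤ M) (hyM : y ^ (ω.re + 1) ≤ M) :
    ‖zeroPrimitive ω y - zeroPrimitive ω x‖ ≤ 2 * M / ‖ω * (ω + 1)‖ := by
  refine (norm_sub_le _ _).trans ?_
  rw [norm_zeroPrimitive ω hx, norm_zeroPrimitive ω hy, ← add_div]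
  gcongr
  linarith

lemma norm_zeroPrimitive_trivialZero_sub_le (j : ℕ) {x y : ℝ} (hx : 1 ≤ x) (hy : 1 ≤ y) :
    ‖zeroPrimitive (trivialZero j) y - zeroPrimitive (trivialZero j) x‖ ≤
      2 / ‖trivialZero j * (trivialZero j + 1)‖ := by
  have hre : (trivialZero j).re + 1 ≤ 0 := by linarith [trivialZero_re_le j]
  simpa using norm_zeroPrimitive_sub_le (by linarith) (by linarith)
    (Real.rpow_le_one_of_one_le_of_nonpos hx hre) (Real.rpow_le_one_of_one_le_of_nonpos hy hre)

lemma tsum_div_norm_trivialZero_le :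
    ∑' j, 2 / ‖trivialZero j * (trivialZero j + 1)‖ ≤ 4 := by
  have hbasel : ∑' j : ℕ, 1 / ((j : ℝ) + 1) ^ 2 = π ^ 2 / 6 := by
    have h := hasSum_zeta_two.summable.tsum_eq_zero_add
    rw [hasSum_zeta_two.tsum_eq] at h
    simpa using h.symm
  calc ∑' j, 2 / ‖trivialZero j * (trivialZero j + 1)‖
      ≤ ∑' j : ℕ, 2 * (1 / ((j : ℝ) + 1) ^ 2) :=
        (summable_div_norm_trivialZero zero_le_two).tsum_le_tsum
          (div_norm_trivialZero_le zero_le_two) (summable_one_div_add_one_sq.mul_left 2)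
    _ = 2 * (π ^ 2 / 6) := by rw [tsum_mul_left, hbasel]
    _ ≤ 4 := by nlinarith [Real.pi_lt_d2, Real.pi_pos]

lemma ofReal_psiOne {x : ℝ} (hx : 1 < x) :
    (psiOne x : ℂ) = (1 / 2 * x ^ 2 - x + 1 / 2) + regularPartConst * (x - 1) -
      ∑' a : xiZeros, (xiOrder (a : ℂ) : ℂ) * zeroTerm a x⁻¹ -
      ∑' j, zeroTerm (trivialZero j) x⁻¹ := by
  have h := explicitFormulaDefect_eq_zero
    ⟨inv_pos.2 (zero_lt_one.trans hx), inv_lt_one_of_one_lt₀ hx⟩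
  simp only [explicitFormulaDefect, mainTerm, inv_inv, truncCpow_inv _ hx.le, cpow_zero, cpow_one,
    cpow_ofNat] at h
  rw [psiOne, ofReal_tsum]
  linear_combination h

lemma summable_xiOrder_mul_zeroTerm {t : ℝ} :
    Summable fun a : xiZeros ↦ (xiOrder (a : ℂ) : ℂ) * zeroTerm a t :=
  .of_norm_bounded ((summable_xiOrder_mul_div_norm 2).mul_right _)
    fun a ↦ norm_xiOrder_mul_zeroTerm_le a t

lemma summable_zeroTerm_trivialZero {t : ℝ} : Summable fun j ↦ zeroTerm (trivialZero j) t :=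
  .of_norm_bounded ((summable_div_norm_trivialZero zero_le_two).mul_right _)
    fun j ↦ norm_zeroTerm_trivialZero_le j t

lemma ofReal_psiOne_sub {x y : ℝ} (hx : 1 < x) (hy : 1 < y) :
    ((psiOne y - psiOne x - (y ^ 2 - x ^ 2) / 2 : ℝ) : ℂ) - (regularPartConst - 1) * (y - x) =
      -(∑' a : xiZeros, (xiOrder (a : ℂ) : ℂ) * (zeroPrimitive a y - zeroPrimitive a x) +
        ∑' j, (zeroPrimitive (trivialZero j) y - zeroPrimitive (trivialZero j) x)) := by
  have hdiff (ω : ℂ) :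
      zeroPrimitive ω y - zeroPrimitive ω x = zeroTerm ω y⁻¹ - zeroTerm ω x⁻¹ := by
    rw [zeroTerm_inv ω hx.le, zeroTerm_inv ω hy.le, sub_sub_sub_cancel_right]
  simp only [hdiff, mul_sub]
  rw [summable_xiOrder_mul_zeroTerm.tsum_sub summable_xiOrder_mul_zeroTerm,
    summable_zeroTerm_trivialZero.tsum_sub summable_zeroTerm_trivialZero]
  push_cast
  linear_combination ofReal_psiOne hy - ofReal_psiOne hx

lemma norm_tsum_xiZeros_le {g : ℂ → ℂ} {B : ℝ}
    (hB : ∀ S : Finset ℂ, (∀ a ∈ S, xi a = 0) → ∑ a ∈ S, (xiOrder a : ℝ) * ‖g a‖ ≤ B) :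
    ‖∑' a : xiZeros, (xiOrder (a : ℂ) : ℂ) * g a‖ ≤ B := by
  have hle (S : Finset xiZeros) : ∑ a ∈ S, (xiOrder (a : ℂ) : ℝ) * ‖g a‖ ≤ B := by
    have h := hB (S.map (Function.Embedding.subtype _)) fun a ha ↦ by
      obtain ⟨b, _, rfl⟩ := Finset.mem_map.1 ha
      exact b.2
    rwa [Finset.sum_map] at h
  have hnonneg (a : xiZeros) : 0 ≤ (xiOrder (a : ℂ) : ℝ) * ‖g a‖ := by positivity
  refine (tsum_of_norm_bounded (summable_of_sum_le hnonneg hle).hasSum fun a ↦ ?_).trans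
    (Real.tsum_le_of_sum_le hnonneg hle)
  rw [norm_mul, norm_natCast]

lemma norm_psiOne_sub_sub_le {x y B : ℝ} (hx : 1 < x) (hy : 1 < y)
    (hB : ∀ S : Finset ℂ, (∀ a ∈ S, xi a = 0) →
      ∑ a ∈ S, (xiOrder a : ℝ) * ‖zeroPrimitive a y - zeroPrimitive a x‖ ≤ B) :
    ‖((psiOne y - psiOne x - (y ^ 2 - x ^ 2) / 2 : ℝ) : ℂ) - (regularPartConst - 1) * (y - x)‖ ≤
      B + 4 := by
  have htrivial :
      ‖∑' j, (zeroPrimitive (trivialZero j) y - zeroPrimitive (trivialZero j) x)‖ ≤ 4 :=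
    (tsum_of_norm_bounded (summable_div_norm_trivialZero zero_le_two).hasSum fun j ↦
      norm_zeroPrimitive_trivialZero_sub_le j hx.le hy.le).trans tsum_div_norm_trivialZero_le
  rw [ofReal_psiOne_sub hx hy, norm_neg]
  exact (norm_add_le _ _).trans (add_le_add
    (norm_tsum_xiZeros_le (g := fun a ↦ zeroPrimitive a y - zeroPrimitive a x) hB) htrivial)

lemma sq_im_le_norm_mul_add_one {a : ℂ} (ha : 0 ≤ a.re) : a.im ^ 2 ≤ ‖a * (a + 1)‖ := by
  refine le_trans ?_ (norm_sq_le_norm_mul_add_one ha)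
  rw [← sq_abs a.im]
  gcongr
  exact abs_im_le_norm a

lemma one_div_norm_mul_add_one_le {a : ℂ} (ha : xi a = 0) :
    1 / ‖a * (a + 1)‖ ≤ 36 * poisson 60 a.im := by
  have him := le_sq_im_of_xi_eq_zero ha
  have hpos : 0 < a.im ^ 2 := by linarith
  calc 1 / ‖a * (a + 1)‖ ≤ 1 / a.im ^ 2 := by
        gcongr
        exact sq_im_le_norm_mul_add_one (re_mem_Ioo_of_xi_eq_zero ha).1.le
    _ ≤ 36 * poisson 60 a.im := by
        rw [poisson, mul_div_assoc', div_le_div_iff₀ hpos (by positivity)]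
        linarith

lemma sum_xiOrder_mul_one_div_norm_le (S : Finset ℂ) (hS : ∀ a ∈ S, xi a = 0) :
    ∑ a ∈ S, (xiOrder a : ℝ) * (1 / ‖a * (a + 1)‖) ≤ 46 := calc
  _ ≤ ∑ a ∈ S, 36 * ((xiOrder a : ℝ) * poisson 60 a.im) := by
      refine Finset.sum_le_sum fun a ha ↦ ?_
      rw [mul_left_comm]
      gcongr
      exact one_div_norm_mul_add_one_le (hS a ha)
  _ ≤ 46 := by
      rw [← Finset.mul_sum]
      linarith [sum_xiOrder_mul_poisson_sixty_le S]

lemma psiOne_eq_sum_range {x : ℝ} {N : ℕ} (hN : x ≤ N) :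
    psiOne x = ∑ n ∈ Finset.range N, psiOneTerm n x := by
  refine tsum_eq_sum fun n hn ↦ ?_
  have : (N : ℝ) ≤ n := by exact_mod_cast not_lt.1 fun h ↦ hn (Finset.mem_range.2 h)
  rw [psiOneTerm, max_eq_right (by linarith), mul_zero]

lemma psiOne_eq_zero {x : ℝ} (hx : x ≤ 2) : psiOne x = 0 := by
  rw [psiOne_eq_sum_range (N := 2) (by exact_mod_cast hx)]
  simp [Finset.sum_range_succ, psiOneTerm]

lemma sum_xiOrder_mul_norm_zeroPrimitive_sub_le {x y : ℝ} (hx : 1 ≤ x) (hx2 : x ≤ 2) (hy : 1 ≤ y)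
    (hy2 : y ≤ 2) (S : Finset ℂ) (hS : ∀ a ∈ S, xi a = 0) :
    ∑ a ∈ S, (xiOrder a : ℝ) * ‖zeroPrimitive a y - zeroPrimitive a x‖ ≤ 368 := by
  have hpow {a : ℂ} (ha : xi a = 0) {u : ℝ} (hu : 1 ≤ u) (hu2 : u ≤ 2) : u ^ (a.re + 1) ≤ 4 := calc
    u ^ (a.re + 1) ≤ u ^ (2 : ℝ) :=
      Real.rpow_le_rpow_of_exponent_le hu (by linarith [(re_mem_Ioo_of_xi_eq_zero ha).2])
    _ ≤ 4 := by rw [Real.rpow_two]; nlinarith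
  calc ∑ a ∈ S, (xiOrder a : ℝ) * ‖zeroPrimitive a y - zeroPrimitive a x‖
      ≤ ∑ a ∈ S, (2 * 4) * ((xiOrder a : ℝ) * (1 / ‖a * (a + 1)‖)) := by
        refine Finset.sum_le_sum fun a ha ↦ ?_
        rw [mul_left_comm, mul_one_div]
        gcongr
        exact norm_zeroPrimitive_sub_le (by linarith) (by linarith) (hpow (hS a ha) hx hx2)
          (hpow (hS a ha) hy hy2)
    _ ≤ 368 := by
        rw [← Finset.mul_sum]
        linarith [sum_xiOrder_mul_one_div_norm_le S hS]

-- `ψ₁` vanishes on `[1, 2]`, so its explicit formula there determines the constant.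
lemma norm_regularPartConst_sub_one_le : ‖regularPartConst - 1‖ ≤ 750 := by
  have h := norm_psiOne_sub_sub_le (x := 3 / 2) (y := 2) (by norm_num) (by norm_num)
    (sum_xiOrder_mul_norm_zeroPrimitive_sub_le (by norm_num) (by norm_num) (by norm_num) le_rfl)
  rw [psiOne_eq_zero le_rfl, psiOne_eq_zero (by norm_num), norm_sub_rev] at h
  have htri := (norm_le_norm_add_norm_sub' _ _).trans (add_le_add_right h _)
  rw [← ofReal_sub, norm_mul, norm_real, norm_real] at htri
  norm_num at htri
  linarith

lemma abs_psiOne_sub_sub_le {x y B : ℝ} (hx : 1 < x) (hxy : x ≤ y)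
    (hB : ∀ S : Finset ℂ, (∀ a ∈ S, xi a = 0) →
      ∑ a ∈ S, (xiOrder a : ℝ) * ‖zeroPrimitive a y - zeroPrimitive a x‖ ≤ B) :
    |psiOne y - psiOne x - (y ^ 2 - x ^ 2) / 2| ≤ 750 * (y - x) + (B + 4) := by
  have hconst : ‖(regularPartConst - 1) * ((y : ℂ) - x)‖ ≤ 750 * (y - x) := by
    rw [norm_mul, ← ofReal_sub, norm_real, Real.norm_of_nonneg (by linarith)]
    exact mul_le_mul_of_nonneg_right norm_regularPartConst_sub_one_le (by linarith)
  rw [← Real.norm_eq_abs, ← norm_real]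
  exact (norm_le_norm_add_norm_sub' _ _).trans (add_le_add hconst
    (norm_psiOne_sub_sub_le hx (hx.trans_le hxy) hB))

/-! ### Comparison of `ψ` with its integral -/

lemma norm_zeroPrimitive_sub_le_mul_sub {a : ℂ} (ha : 0 < a.re) {x y : ℝ} (hx : 0 < x)
    (hxy : x ≤ y) : ‖zeroPrimitive a y - zeroPrimitive a x‖ ≤ y ^ a.re / ‖a‖ * (y - x) := by
  have ha1 : a ≠ -1 := ne_of_apply_ne re (by rw [neg_re, one_re]; linarith)
  have hderiv : ∀ u ∈ Set.Icc x y,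
      HasDerivWithinAt (zeroPrimitive a) ((u : ℂ) ^ a / a) (Set.Icc x y) u := by
    intro u hu
    have h := (hasDerivAt_ofReal_cpow_const' (hx.trans_le hu.1).ne' ha1).div_const a
    refine (h.congr_of_eventuallyEq (.of_forall fun v ↦ ?_)).hasDerivWithinAt
    simp only [zeroPrimitive, div_div, mul_comm a, one_div_mul_eq_div]
  have hbound : ∀ u ∈ Set.Icc x y, ‖(u : ℂ) ^ a / a‖ ≤ y ^ a.re / ‖a‖ := by
    intro u hu
    have hu0 : 0 < u := hx.trans_le hu.1
    rw [norm_div, norm_cpow_eq_rpow_re_of_pos hu0]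
    gcongr
    exact hu.2
  have h := Convex.norm_image_sub_le_of_norm_hasDerivWithin_le hderiv hbound (convex_Icc x y)
    (Set.left_mem_Icc.2 hxy) (Set.right_mem_Icc.2 hxy)
  rwa [Real.norm_of_nonneg (sub_nonneg.2 hxy)] at h

lemma rpow_le_mul_exp {b c T X y : ℝ} (hb0 : 0 ≤ b) (hb1 : b ≤ 1) (hX : Real.exp T ≤ X)
    (hc : 1 ≤ c) (hy0 : 0 ≤ y) (hy : y ≤ c * X) :
    y ^ b ≤ c * X * Real.exp (-(T * (1 - b))) := by
  have hX0 : 0 < X := (Real.exp_pos T).trans_le hX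
  have hlog : T ≤ Real.log X := (Real.le_log_iff_exp_le hX0).2 hX
  calc y ^ b ≤ (c * X) ^ b := Real.rpow_le_rpow hy0 hy hb0
    _ = c ^ b * X ^ b := Real.mul_rpow (by linarith) hX0.le
    _ ≤ c * (X * Real.exp (-(T * (1 - b)))) := by
        gcongr
        · exact Real.rpow_le_self_of_one_le hc hb1
        · rw [Real.rpow_def_of_pos hX0]
          nth_rw 2 [← Real.exp_log hX0]
          rw [← Real.exp_add]
          exact Real.exp_le_exp.2 (by nlinarith)
    _ = c * X * Real.exp (-(T * (1 - b))) := (mul_assoc _ _ _).symm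

lemma le_exp_233_div_eight : (4.1e12 : ℝ) ≤ Real.exp (233 / 8) := by
  have hsplit : Real.exp (233 / 8) = Real.exp 1 ^ 29 * Real.exp (1 / 8) := by
    rw [← Real.exp_nat_mul, ← Real.exp_add]
    norm_num
  have hexp : (2.718 : ℝ) ≤ Real.exp 1 := by
    refine le_trans ?_ Real.exp_one_gt_d9.le
    norm_num
  calc (4.1e12 : ℝ) ≤ 2.718 ^ 29 * (1 / 8 + 1) := by norm_num
    _ ≤ Real.exp (233 / 8) := by
        rw [hsplit]
        gcongr
        exact Real.add_one_le_exp _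

lemma norm_zeroPrimitive_sub_le_mul_zeroWeight {a : ℂ} (ha : xi a = 0) {X x y : ℝ}
    (hX : Real.exp 2000 ≤ X) (hx : 0 < x) (hxy : y - x = 5e-13 * X)
    (hy : y ≤ (1 + 5e-13) * X) :
    ‖zeroPrimitive a y - zeroPrimitive a x‖ ≤ (y - x) * X * (1 + 5e-13) * zeroWeight a := by
  have hX0 : 0 < X := (Real.exp_pos _).trans_le hX
  obtain ⟨hre0, hre1⟩ := re_mem_Ioo_of_xi_eq_zero ha
  have him : 0 < |a.im| := abs_pos.2 (im_ne_zero_of_xi_eq_zero ha)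
  have him2 : 0 < a.im ^ 2 := by rw [← sq_abs]; positivity
  have hyx : 0 ≤ y - x := by rw [hxy]; positivity
  have hy0 : 0 < y := by linarith
  have hpow := rpow_le_mul_exp hre0.le hre1.le hX (by norm_num) hy0.le hy
  rw [zeroWeight]
  set E := Real.exp (-(2000 * (1 - a.re)))
  have hE : 0 < E := Real.exp_pos _
  rcases min_choice (1 / |a.im|) (Real.exp (233 / 8) / a.im ^ 2) with hmin | hmin <;> rw [hmin]
  · calc ‖zeroPrimitive a y - zeroPrimitive a x‖
        ≤ y ^ a.re / ‖a‖ * (y - x) := norm_zeroPrimitive_sub_le_mul_sub hre0 hx (by linarith)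
      _ ≤ (1 + 5e-13) * X * E / |a.im| * (y - x) := by
          gcongr
          exact abs_im_le_norm a
      _ = (y - x) * X * (1 + 5e-13) * (E * (1 / |a.im|)) := by ring
  · have hyM : y ^ (a.re + 1) ≤ (1 + 5e-13) * X * E * ((1 + 5e-13) * X) := by
      rw [Real.rpow_add_one hy0.ne']
      gcongr
    have hxM : x ^ (a.re + 1) ≤ (1 + 5e-13) * X * E * ((1 + 5e-13) * X) :=
      (Real.rpow_le_rpow hx.le (by linarith) (by linarith)).trans hyM
    calc ‖zeroPrimitive a y - zeroPrimitive a x‖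
        ≤ 2 * ((1 + 5e-13) * X * E * ((1 + 5e-13) * X)) / ‖a * (a + 1)‖ :=
          norm_zeroPrimitive_sub_le hx hy0 hxM hyM
      _ ≤ 2 * ((1 + 5e-13) * X * E * ((1 + 5e-13) * X)) / a.im ^ 2 := by
          gcongr
          exact sq_im_le_norm_mul_add_one hre0.le
      _ = (y - x) * X * (1 + 5e-13) * (E * ((2 * (1 + 5e-13) / 5e-13) / a.im ^ 2)) := by
          rw [hxy]
          field_simp
      _ ≤ (y - x) * X * (1 + 5e-13) * (E * (Real.exp (233 / 8) / a.im ^ 2)) := by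
          gcongr
          exact le_trans (by norm_num) le_exp_233_div_eight

lemma abs_psiOne_sub_sub_le_mul {X x y : ℝ} (hX : Real.exp 2000 ≤ X) (hx : 1 < x)
    (hxy : y - x = 5e-13 * X) (hy : y ≤ (1 + 5e-13) * X) :
    |psiOne y - psiOne x - (y ^ 2 - x ^ 2) / 2| ≤ (y - x) * X * 1.3e-12 := by
  have hX' : (1e24 : ℝ) ≤ X := calc
    (1e24 : ℝ) ≤ 4.1e12 ^ 2 := by norm_num
    _ ≤ Real.exp (233 / 8) ^ 2 := by gcongr; exact le_exp_233_div_eight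
    _ = Real.exp (233 / 4) := by rw [← Real.exp_nat_mul]; norm_num
    _ ≤ Real.exp 2000 := Real.exp_le_exp.2 (by norm_num)
    _ ≤ X := hX
  have hyx : 0 ≤ (y - x) * X * (1 + 5e-13) := by rw [hxy]; positivity
  have h := abs_psiOne_sub_sub_le hx (by nlinarith) (B := (y - x) * X * (1 + 5e-13) * 1.2e-12)
    fun S hS ↦ calc
      _ ≤ ∑ a ∈ S, (y - x) * X * (1 + 5e-13) * ((xiOrder a : ℝ) * zeroWeight a) := by
          refine Finset.sum_le_sum fun a ha ↦ ?_
          rw [mul_left_comm]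
          gcongr
          exact norm_zeroPrimitive_sub_le_mul_zeroWeight (hS a ha) hX (by linarith) hxy hy
      _ ≤ _ := by
          rw [← Finset.mul_sum]
          gcongr
          exact sum_xiOrder_mul_zeroWeight_le S hS
  refine h.trans ?_
  rw [hxy]
  norm_num at *
  nlinarith

lemma psi_eq_sum_range {x : ℝ} (hx : 0 ≤ x) {N : ℕ} (hN : x < N) :
    psi x = ∑ n ∈ Finset.range N, Λ n * if (n : ℝ) ≤ x then 1 else 0 := by
  refine Finset.sum_subset_zero_on_sdiff (fun n hn ↦ ?_) (fun n hn ↦ ?_) fun n hn ↦ ?_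
  · exact Finset.mem_range.2 ((Finset.mem_Icc.1 hn).2.trans_lt ((Nat.floor_lt hx).2 hN))
  · rcases Nat.eq_zero_or_pos n with rfl | hn0
    · simp
    · have hnx : ¬(n : ℝ) ≤ x := fun h ↦
        (Finset.mem_sdiff.1 hn).2 (Finset.mem_Icc.2 ⟨hn0, (Nat.le_floor_iff hx).2 h⟩)
      rw [if_neg hnx, mul_zero]
  · rw [if_pos ((Nat.le_floor_iff hx).1 (Finset.mem_Icc.1 hn).2), mul_one]

lemma mul_psi_le_psiOne_sub {x h : ℝ} (hx : 0 ≤ x) (hh : 0 ≤ h) :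
    h * psi x ≤ psiOne (x + h) - psiOne x := by
  obtain ⟨N, hN⟩ := exists_nat_gt (x + h)
  rw [psi_eq_sum_range hx (N := N) (by linarith), psiOne_eq_sum_range hN.le,
    psiOne_eq_sum_range (x := x) (N := N) (by linarith), ← Finset.sum_sub_distrib, Finset.mul_sum]
  refine Finset.sum_le_sum fun n _ ↦ ?_
  rw [psiOneTerm, psiOneTerm, ← mul_sub, mul_left_comm]
  refine mul_le_mul_of_nonneg_left ?_ ArithmeticFunction.vonMangoldt_nonneg
  split_ifs with hn
  · rw [max_eq_left (by linarith), max_eq_left (by linarith)]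
    linarith
  · rw [max_eq_right (a := x - n) (by linarith)]
    linarith [le_max_right (x + h - n) 0]

lemma psiOne_sub_le_mul_psi {x h : ℝ} (hx : 0 ≤ x) (hh : 0 ≤ h) :
    psiOne x - psiOne (x - h) ≤ h * psi x := by
  obtain ⟨N, hN⟩ := exists_nat_gt x
  rw [psi_eq_sum_range hx hN, psiOne_eq_sum_range hN.le,
    psiOne_eq_sum_range (x := x - h) (N := N) (by linarith), ← Finset.sum_sub_distrib,
    Finset.mul_sum]
  refine Finset.sum_le_sum fun n _ ↦ ?_
  rw [psiOneTerm, psiOneTerm, ← mul_sub, mul_left_comm]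
  refine mul_le_mul_of_nonneg_left ?_ ArithmeticFunction.vonMangoldt_nonneg
  split_ifs with hn
  · rw [max_eq_left (by linarith)]
    linarith [le_max_left (x - h - n) 0]
  · rw [max_eq_right (by linarith)]
    linarith [le_max_right (x - h - n) 0]

lemma psi_sub_le {X : ℝ} (hX : Real.exp 2000 ≤ X) : psi X - X ≤ 1.570e-12 * X := by
  have hX1 : 1 < X := (Real.one_lt_exp_iff.2 (by norm_num)).trans_le hX
  have hh : 0 < 5e-13 * X := by positivity
  have hpsi := mul_psi_le_psiOne_sub (by linarith : 0 ≤ X) hh.le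
  have hdiff := (abs_le.1 (abs_psiOne_sub_sub_le_mul hX hX1 (y := X + 5e-13 * X) (by ring)
    (by linarith))).2
  refine le_of_mul_le_mul_left ?_ hh
  norm_num at *
  nlinarith

lemma sub_psi_le {X : ℝ} (hX : Real.exp 2000 ≤ X) : X - psi X ≤ 1.570e-12 * X := by
  have hX2 : 2 < X := by linarith [Real.add_one_le_exp (2000 : ℝ)]
  have hh : 0 < 5e-13 * X := by positivity
  have hpsi := psiOne_sub_le_mul_psi (by linarith : 0 ≤ X) hh.le
  have hdiff := (abs_le.1 (abs_psiOne_sub_sub_le_mul hX (x := X - 5e-13 * X) (by linarith)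
    (by ring) (by linarith))).1
  refine le_of_mul_le_mul_left ?_ hh
  norm_num at *
  nlinarith

end ChebyshevPsi

theorem psi_eps_2000 (x : ℝ) (hx : Real.exp 2000 ≤ x) :
    |psi x - x| / x ≤ 1.570e-12 := by
  rw [div_le_iff₀ ((Real.exp_pos _).trans_le hx)]
  exact abs_sub_le_iff.2 ⟨ChebyshevPsi.psi_sub_le hx, ChebyshevPsi.sub_psi_le hx⟩
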